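/- arXiv:2512.14371 — 6 statements merged into one kernel-verified Lean document; each statement's English description precedes it below -/
import Mathlib

section
/- Let κ be an infinite cardinal and let K be a linearly ordered continuum with χ(K) < w(K) ≤ κ. Then there exists a family of 2^κ incomparable linearly ordered continua X such that w(X) = κ, ŵ(X) = ŵ(K), and |X| = max{κ, |K|} for every member X; moreover, if K is balanced and w(K) = κ, then every member of the family can be taken to be balanced. -/
/-! Let `c = χ(K)`. The members of the family are long words in two letters, distinguished by the
points of one-sided character larger than `c`.

Call a point large from the left (`LPt c`) if it is not minimal and no set of at most `c` smaller
points is cofinal below it, and large from the right (`RPt c`) dually. A continuum of character `c`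
has no such points. Concatenate copies of `K` along the well-order `succ c + 1`, identifying the
top of each copy with the bottom of the next: the result `A` is an ordered continuum with exactly
one large point, the bottom of the last copy, and it is large from the left (`marked_cat`). Its
reverse has exactly one large point, which is large from the right. A word `u : W → Bool` over a
well-order `W` with a last element gives the concatenation `Word A u` of copies of `A` (for `true`)
and of its reverse (for `false`). Its large points are the marked points of the letters, which are
large from the left or right according to the letter, and the gluing points at the indices that are
themselves large in `W`; the latter are large from the left and do not depend on `u`.

An embedding between ordered continua is a strictly monotone or antitone map onto an interval, so
away from endpoints it preserves or exchanges the two kinds of large points, and so does its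
inverse on the range. The words `code s`, for `s ⊆ κ`, are over `W = κ × 2` with two ends added to
`κ`; they start with two reversed letters and have no other two consecutive reversed letters.

* The first marked point is the only point that is large from the right, followed by another such
  point without a point large from the left in between (`rr_code`). A monotone embedding therefore
  matches the first marked points, and by induction along the well-ordered set of large points it
  matches all marked points (`map_mid`), so that the words are equal (`code_mono`).
* An antitone embedding would map the `κ` many points marked in letters `A` to a strictly
  decreasing family of marked points, contradicting well-foundedness (`code_anti`).

The weight is at most `κ` since an order-dense set of size `κ` exists, and at least `κ` since the
letters have disjoint interiors. Every point of the word lies in an interval that is a copy of `K`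
or of its reverse (`Cov`), whence `ŵ(X) = ŵ(K)` and the transfer of balancedness.
-/


universe u

open Cardinal Topology

/-- The weight of a topological space: the least cardinality of a basis for its topology. -/
noncomputable def wt (X : Type u) [TopologicalSpace X] : Cardinal.{u} :=
  sInf { c : Cardinal.{u} | ∃ B : Set (Set X), TopologicalSpace.IsTopologicalBasis B ∧ #B = c }

/-- `hatWt X` is the smallest weight of a nonempty open subspace of `X`. -/
noncomputable def hatWt (X : Type u) [TopologicalSpace X] : Cardinal.{u} :=
  sInf { c : Cardinal.{u} | ∃ U : Set X, IsOpen U ∧ U.Nonempty ∧ wt U = c }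

/-- The character of a space: the supremum over points of the least cardinality of a
neighborhood basis at the point. -/
noncomputable def charac (X : Type u) [TopologicalSpace X] : Cardinal.{u} :=
  ⨆ x : X, sInf { c : Cardinal.{u} | ∃ B : Set (Set X),
    (∀ V ∈ B, V ∈ nhds x) ∧ (∀ V ∈ nhds x, ∃ W ∈ B, W ⊆ V) ∧ #B = c }

/-- A linearly ordered topological space: the topology is the order topology of some
linear order. -/
def IsLOTS (X : Type u) [t : TopologicalSpace X] : Prop :=
  ∃ l : LinearOrder X, @OrderTopology X t l.toPartialOrder.toPreorder

/-- A continuum: a compact connected Hausdorff space with more than one point. -/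
def IsContinuum (X : Type u) [TopologicalSpace X] : Prop :=
  CompactSpace X ∧ ConnectedSpace X ∧ T2Space X ∧ Nontrivial X

/-- A space is balanced if every nonempty open subspace has the same cardinality and the
same weight as the whole space. -/
def IsBalanced (X : Type u) [TopologicalSpace X] : Prop :=
  ∀ U : Set X, IsOpen U → U.Nonempty → #U = #X ∧ wt U = wt X

/-- A family of spaces is incomparable if no member embeds into another member. -/
def IncompFamily {ι : Type u} (X : ι → TopCat.{u}) : Prop :=
  ∀ i j : ι, i ≠ j → ∀ f : ↥(X i) → ↥(X j), ¬ IsEmbedding f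

open Set

namespace OrdCont

set_option linter.unusedSectionVars false

/-! ### Points of large one-sided character -/

/-- `x` is not the supremum of at most `c` smaller points; in particular `x` is neither minimal
(take `A = ∅`) nor the immediate successor of a point. -/
def LPt {X : Type u} [Preorder X] (c : Cardinal.{u}) (x : X) : Prop :=
  ∀ A : Set X, A ⊆ Iio x → #A ≤ c → ∃ b, b < x ∧ ∀ a ∈ A, a < b

/-- The order dual of `LPt`. -/
def RPt {X : Type u} [Preorder X] (c : Cardinal.{u}) (x : X) : Prop :=
  ∀ A : Set X, A ⊆ Ioi x → #A ≤ c → ∃ b, x < b ∧ ∀ a ∈ A, b < a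

/-- Every set has a greatest lower bound; hence every set also has a least upper bound. -/
class Cpl (X : Type u) [LinearOrder X] : Prop where
  glb : ∀ s : Set X, ∃ a, IsGLB s a

theorem Cpl.lub {X : Type u} [LinearOrder X] [Cpl X] (s : Set X) : ∃ a, IsLUB s a := by
  obtain ⟨a, ha⟩ := Cpl.glb (upperBounds s)
  exact ⟨a, isGLB_upperBounds.1 ha⟩

instance {X : Type u} [LinearOrder X] [Cpl X] : Cpl Xᵒᵈ :=
  ⟨fun s => Cpl.lub (X := X) (OrderDual.toDual ⁻¹' s)⟩

section transport

variable {X Y : Type u} [LinearOrder X] [LinearOrder Y] {c : Cardinal.{u}}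

theorem LPt.exists_lt {x : X} (h : LPt c x) : ∃ b, b < x := by
  obtain ⟨b, hb, -⟩ := h ∅ (by simp) (by simp)
  exact ⟨b, hb⟩

theorem RPt.exists_gt {x : X} (h : RPt c x) : ∃ b, x < b := by
  obtain ⟨b, hb, -⟩ := h ∅ (by simp) (by simp)
  exact ⟨b, hb⟩

/-- Being an `LPt` only depends on an interval ending at the point. -/
theorem lPt_map {e : Y → X} (he : StrictMono e) (hr : (range e).OrdConnected) {y : Y}
    (hy : ∃ y₀, y₀ < y) : LPt c (e y) ↔ LPt c y := by
  obtain ⟨y₀, hy₀⟩ := hy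
  constructor
  · intro h A hA hc
    obtain ⟨b, hb, hAb⟩ := h (e '' A) (by rintro _ ⟨a, ha, rfl⟩; exact he (hA ha))
      (mk_image_le.trans hc)
    have hb' : max b (e y₀) < e y := max_lt hb (he hy₀)
    obtain ⟨b', h'⟩ := hr.out ⟨y₀, rfl⟩ ⟨y, rfl⟩ ⟨le_max_right b (e y₀), hb'.le⟩
    refine ⟨b', he.lt_iff_lt.1 (h' ▸ hb'), fun a ha => he.lt_iff_lt.1 ?_⟩
    rw [h']
    exact (hAb _ ⟨a, ha, rfl⟩).trans_le (le_max_left _ _)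
  · intro h A hA hc
    obtain ⟨b, hb, hAb⟩ := h (e ⁻¹' A) (fun a ha => he.lt_iff_lt.1 (hA ha))
      ((mk_preimage_of_injective e A he.injective).trans hc)
    have hb' : max b y₀ < y := max_lt hb hy₀
    refine ⟨e (max b y₀), he hb', fun a ha => ?_⟩
    by_contra! hlt
    obtain ⟨a', rfl⟩ := hr.out ⟨_, rfl⟩ ⟨y, rfl⟩ ⟨hlt, (hA ha).le⟩
    exact (he.le_iff_le.1 hlt).not_gt ((hAb a' ha).trans_le (le_max_left _ _))

theorem rPt_map {e : Y → X} (he : StrictMono e) (hr : (range e).OrdConnected) {y : Y}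
    (hy : ∃ y₀, y < y₀) : RPt c (e y) ↔ RPt c y :=
  lPt_map (X := Xᵒᵈ) (Y := Yᵒᵈ) (e := e) he.dual hr.dual hy

theorem lPt_map_anti {e : Y → X} (he : StrictAnti e) (hr : (range e).OrdConnected) {y : Y}
    (hy : ∃ y₀, y < y₀) : LPt c (e y) ↔ RPt c y :=
  lPt_map (X := X) (Y := Yᵒᵈ) (e := e) he.dual_left hr hy

theorem rPt_map_anti {e : Y → X} (he : StrictAnti e) (hr : (range e).OrdConnected) {y : Y}
    (hy : ∃ y₀, y₀ < y) : RPt c (e y) ↔ LPt c y :=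
  lPt_map (X := Xᵒᵈ) (Y := Y) (e := e) he.dual_right hr.dual hy

end transport

/-! ### Concatenation of bounded orders along a well-order -/

/-- The concatenation of the bounded linear orders `F w` along the index order `W`: their
lexicographic sum, from which the top of every `F w` with `w ≠ ⊤` is removed, so that the top of
`F w` is glued to the bottom of the next summand. -/
def Cat {W : Type u} [LinearOrder W] [OrderTop W] (F : W → Type u) [∀ w, LinearOrder (F w)]
    [∀ w, BoundedOrder (F w)] : Type u :=
  {p : Σₗ w, F w // p.1 = ⊤ ∨ p.2 ≠ ⊤}

section cat

variable {W : Type u} [LinearOrder W] [BoundedOrder W] {F : W → Type u}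
  [∀ w, LinearOrder (F w)] [∀ w, BoundedOrder (F w)] [∀ w, Nontrivial (F w)]

noncomputable instance : LinearOrder (Cat F) :=
  inferInstanceAs (LinearOrder {p : Σₗ w, F w // p.1 = ⊤ ∨ p.2 ≠ ⊤})

namespace Cat

/-- The point `x` of the summand with index `w`. -/
def mk (w : W) (x : F w) (h : w = ⊤ ∨ x ≠ ⊤) : Cat F := ⟨⟨w, x⟩, h⟩

/-- The index of the summand containing a point. -/
def idx (p : Cat F) : W := p.1.1

@[simp] theorem idx_mk (w : W) (x : F w) (h) : (mk w x h).idx = w := rfl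

theorem exists_mk (p : Cat F) : ∃ w x h, p = mk w x h := ⟨p.1.1, p.1.2, p.2, rfl⟩

theorem mk_lt_of_lt {w w' : W} {x : F w} {x' : F w'} {h h'} (hw : w < w') :
    mk w x h < mk w' x' h' := Sigma.Lex.lt_def.2 (Or.inl hw)

theorem mk_lt_same {w : W} {x y : F w} {h h'} : mk w x h < mk w y h' ↔ x < y := by
  refine Sigma.Lex.lt_def.trans ⟨?_, fun h => Or.inr ⟨rfl, h⟩⟩
  rintro (h | ⟨h, h2⟩)
  · exact (lt_irrefl _ h).elim
  · exact h2

theorem mk_le_same {w : W} {x y : F w} {h h'} : mk w x h ≤ mk w y h' ↔ x ≤ y := by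
  rw [← not_lt, mk_lt_same, not_lt]

theorem idx_mono {p q : Cat F} (h : p ≤ q) : p.idx ≤ q.idx := by
  by_contra! hlt
  exact h.not_gt (mk_lt_of_lt (h := q.2) (h' := p.2) hlt)

theorem lt_of_idx {p q : Cat F} (h : p.idx < q.idx) : p < q :=
  mk_lt_of_lt (h := p.2) (h' := q.2) h

theorem mk_congr {w : W} {x y : F w} {h h'} : mk w x h = mk w y h' ↔ x = y :=
  ⟨fun e => le_antisymm (mk_le_same.1 e.le) (mk_le_same.1 e.ge), fun e => by subst e; rfl⟩

/-- The bottom of the summand with index `w`. -/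
def bt (F : W → Type u) [∀ w, LinearOrder (F w)] [∀ w, BoundedOrder (F w)]
    [∀ w, Nontrivial (F w)] (w : W) : Cat F := mk w ⊥ (Or.inr bot_ne_top)

theorem bt_le {p : Cat F} {w : W} (h : w ≤ p.idx) : bt F w ≤ p := by
  obtain ⟨v, x, hx, rfl⟩ := p.exists_mk
  rcases h.eq_or_lt with h | h
  · change w = v at h
    subst h
    exact mk_le_same.2 bot_le
  · exact (lt_of_idx h).le

theorem bt_strictMono : StrictMono (bt F) := fun _ _ h => mk_lt_of_lt h

instance : BoundedOrder (Cat F) where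
  top := mk ⊤ ⊤ (Or.inl rfl)
  bot := bt F ⊥
  le_top p := by
    obtain ⟨v, x, hx, rfl⟩ := p.exists_mk
    rcases (le_top : v ≤ ⊤).eq_or_lt with h | h
    · subst h
      exact mk_le_same.2 le_top
    · exact (lt_of_idx h).le
  bot_le p := bt_le bot_le

theorem top_def : (⊤ : Cat F) = mk ⊤ ⊤ (Or.inl rfl) := rfl

theorem bot_def : (⊥ : Cat F) = bt F ⊥ := rfl

instance : Nontrivial (Cat F) := by
  refine ⟨⊥, ⊤, fun h => ?_⟩
  have h1 : mk ⊤ ⊥ (Or.inl rfl) < (⊤ : Cat F) := mk_lt_same.2 bot_lt_top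
  exact (h ▸ h1).not_ge bot_le

theorem mk_lt_bt {v w : W} {x : F v} {h} : mk v x h < bt F w ↔ v < w := by
  refine ⟨fun hlt => lt_of_not_ge fun hle => hlt.not_ge (bt_le hle), fun hlt => mk_lt_of_lt hlt⟩

instance [∀ w, DenselyOrdered (F w)] : DenselyOrdered (Cat F) where
  dense p q hpq := by
    obtain ⟨v, x, hx, rfl⟩ := p.exists_mk
    obtain ⟨w, y, hy, rfl⟩ := q.exists_mk
    rcases (idx_mono hpq.le).eq_or_lt with h | h
    · change v = w at h
      subst h
      obtain ⟨z, hz1, hz2⟩ := exists_between (mk_lt_same.1 hpq)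
      exact ⟨mk v z (Or.inr (hz2.trans_le le_top).ne), mk_lt_same.2 hz1, mk_lt_same.2 hz2⟩
    · change v < w at h
      have hx' : x < ⊤ := lt_top_iff_ne_top.2 (hx.resolve_left (h.trans_le le_top).ne)
      obtain ⟨z, hz1, hz2⟩ := exists_between hx'
      exact ⟨mk v z (Or.inr hz2.ne), mk_lt_same.2 hz1, mk_lt_of_lt h⟩

/-- A least upper bound lies in the first summand containing an upper bound. -/
instance [WellFoundedLT W] [∀ w, Cpl (F w)] : Cpl (Cat F) := by
  suffices H : ∀ s : Set (Cat F), ∃ a, IsLUB s a from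
    ⟨fun s => by
      obtain ⟨a, ha⟩ := H (lowerBounds s)
      exact ⟨a, isLUB_lowerBounds.1 ha⟩⟩
  intro s
  have hne : (idx '' upperBounds s).Nonempty := ⟨_, ⊤, fun _ _ => le_top, rfl⟩
  obtain ⟨w, ⟨p, hp, hpw⟩, hmin⟩ := wellFounded_lt.has_min (idx '' upperBounds s) hne
  obtain ⟨w', x₀, hx₀, rfl⟩ := p.exists_mk
  change w' = w at hpw
  subst hpw
  obtain ⟨k, hk⟩ := Cpl.glb {x : F w' | ∃ h, mk w' x h ∈ upperBounds s}
  have hkx : k ≤ x₀ := hk.1 ⟨hx₀, hp⟩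
  have hv : w' = ⊤ ∨ k ≠ ⊤ := hx₀.imp id fun h => (hkx.trans_lt h.lt_top).ne
  refine ⟨mk w' k hv, fun a ha => ?_, fun b hb => ?_⟩
  · obtain ⟨v, y, hy, rfl⟩ := a.exists_mk
    rcases (idx_mono (hp ha)).eq_or_lt with h | h
    · change v = w' at h
      subst h
      exact mk_le_same.2 (hk.2 fun x ⟨hx, hx'⟩ => mk_le_same.1 (hx' ha))
    · exact (mk_lt_of_lt h).le
  · obtain ⟨v, y, hy, rfl⟩ := b.exists_mk
    have hle : w' ≤ v := not_lt.1 (hmin v ⟨_, hb, rfl⟩)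
    rcases hle.eq_or_lt with h | h
    · subst h
      exact mk_le_same.2 (hk.1 ⟨hy, hb⟩)
    · exact (mk_lt_of_lt h).le

/-- Every summand, including its top, sits inside the concatenation as an interval; its top is
glued to the bottom of the next summand. -/
theorem exists_incl [WellFoundedLT W] (w : W) : ∃ e : F w → Cat F, StrictMono e ∧
    (range e).OrdConnected ∧ (∀ x h, e x = mk w x h) ∧ ∀ v, w ⋖ v → e ⊤ = bt F v := by
  classical
  by_cases hw : w = ⊤
  · subst hw
    refine ⟨fun x => mk ⊤ x (Or.inl rfl), fun x y h => mk_lt_same.2 h, ⟨?_⟩, fun _ _ => rfl,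
      fun v hv => (not_top_lt hv.lt).elim⟩
    rintro _ ⟨x, rfl⟩ _ ⟨y, rfl⟩ z ⟨hz, -⟩
    obtain ⟨v, t, ht, rfl⟩ := z.exists_mk
    obtain rfl : v = ⊤ := top_le_iff.1 (idx_mono hz)
    exact ⟨t, rfl⟩
  · obtain ⟨v, hv, hmin⟩ := wellFounded_lt.has_min (Ioi w) ⟨⊤, lt_top_iff_ne_top.2 hw⟩
    have hwv : w ⋖ v := ⟨hv, fun z hz hz' => hmin z hz hz'⟩
    have hlt : ∀ {x : F w} {h} , mk w x h < bt F v := mk_lt_of_lt hv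
    refine ⟨fun x => if h : x = ⊤ then bt F v else mk w x (Or.inr h), ?_, ⟨?_⟩, ?_, ?_⟩
    · intro x y h
      have hx : x ≠ ⊤ := (h.trans_le le_top).ne
      by_cases hy : y = ⊤
      · simp only [hx, hy, dif_neg, dif_pos, not_false_eq_true]
        exact hlt
      · simp only [hx, hy, dif_neg, not_false_eq_true]
        exact mk_lt_same.2 h
    · rintro _ ⟨x, rfl⟩ _ ⟨y, rfl⟩ z ⟨hz, hz'⟩
      have h1 : bt F w ≤ z := by
        refine le_trans ?_ hz
        by_cases hx : x = ⊤
        · simp only [hx, dif_pos]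
          exact (bt_strictMono hv).le
        · simp only [hx, dif_neg, not_false_eq_true]
          exact bt_le le_rfl
      have h2 : z ≤ bt F v := by
        refine le_trans hz' ?_
        by_cases hx : y = ⊤
        · simp only [hx, dif_pos]
          exact le_rfl
        · simp only [hx, dif_neg, not_false_eq_true]
          exact hlt.le
      rcases h2.eq_or_lt with rfl | h2
      · exact ⟨⊤, by simp⟩
      · obtain ⟨u, t, ht, rfl⟩ := z.exists_mk
        have h3 : u < v := mk_lt_bt.1 h2
        have h4 : w ≤ u := idx_mono h1
        obtain rfl : w = u := by
          by_contra hne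
          exact hwv.2 (lt_of_le_of_ne h4 hne) h3
        have ht' : t ≠ ⊤ := ht.resolve_left hw
        exact ⟨t, by simp [ht']⟩
    · intro x h
      have hx : x ≠ ⊤ := h.resolve_left hw
      simp [hx]
    · intro v' hv'
      have : v = v' := hwv.unique_right hv'
      simp [this]

variable {c : Cardinal.{u}} [WellFoundedLT W]

theorem rPt_mk (w : W) (x : F w) (h) : RPt c (mk w x h) ↔ RPt c x := by
  obtain ⟨e, he, hr, hmk, -⟩ := exists_incl (F := F) w
  rw [← hmk x h]
  by_cases hx : x = ⊤
  · have hw : w = ⊤ := h.resolve_right (not_not.2 hx)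
    subst hw hx
    rw [hmk _ (Or.inl rfl), ← top_def]
    exact ⟨fun h => (not_top_lt h.exists_gt.choose_spec).elim,
      fun h => (not_top_lt h.exists_gt.choose_spec).elim⟩
  · exact rPt_map he hr ⟨⊤, lt_top_iff_ne_top.2 hx⟩

theorem lPt_mk (w : W) (x : F w) (h) (hx : x ≠ ⊥) : LPt c (mk w x h) ↔ LPt c x := by
  obtain ⟨e, he, hr, hmk, -⟩ := exists_incl (F := F) w
  rw [← hmk x h]
  exact lPt_map he hr ⟨⊥, bot_lt_iff_ne_bot.2 hx⟩

/-- If no summand has large left character at its top, then the gluing points of large left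
character are those at indices of large left character. -/
theorem lPt_bt (hF : ∀ w, ¬ LPt c (⊤ : F w)) (hc : 1 ≤ c) (w : W) :
    LPt c (bt F w) ↔ LPt c w := by
  by_cases hcov : ∃ v, v ⋖ w
  · obtain ⟨v, hv⟩ := hcov
    obtain ⟨e, he, hr, -, htop⟩ := exists_incl (F := F) v
    constructor
    · intro h
      rw [← htop w hv, lPt_map he hr ⟨⊥, bot_lt_top⟩] at h
      exact (hF v h).elim
    · intro h
      obtain ⟨b, hb, hvb⟩ := h {v} (by simpa using hv.lt) (by simpa using hc)
      exact (hv.2 (hvb v rfl) hb).elim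
  · constructor
    · intro h A hA hAc
      obtain ⟨b, hb, hAb⟩ := h (bt F '' A)
        (by rintro _ ⟨a, ha, rfl⟩; exact bt_strictMono (hA ha)) (mk_image_le.trans hAc)
      obtain ⟨v, x, hx, rfl⟩ := b.exists_mk
      have hvw : v < w := mk_lt_bt.1 hb
      obtain ⟨u, hvu, huw⟩ : ∃ u, v < u ∧ u < w := by
        by_contra! hcon
        exact hcov ⟨v, hvw, fun u h1 h2 => (hcon u h1).not_gt h2⟩
      exact ⟨u, huw, fun a ha => (idx_mono (hAb _ ⟨a, ha, rfl⟩).le).trans_lt hvu⟩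
    · intro h A hA hAc
      obtain ⟨v, hv, hAv⟩ := h (idx '' A) (by
        rintro _ ⟨a, ha, rfl⟩
        obtain ⟨u, x, hx, rfl⟩ := a.exists_mk
        exact mk_lt_bt.1 (hA ha)) (mk_image_le.trans hAc)
      exact ⟨bt F v, bt_strictMono hv, fun a ha => lt_of_idx (hAv _ ⟨a, ha, rfl⟩)⟩

end Cat
end cat

/-! ### Weight of ordered spaces -/

section weight

variable {X Y : Type u}

theorem exists_basis_card (X : Type u) [TopologicalSpace X] :
    ∃ B : Set (Set X), TopologicalSpace.IsTopologicalBasis B ∧ #B = wt X :=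
  csInf_mem (s := {c : Cardinal.{u} | ∃ B : Set (Set X),
    TopologicalSpace.IsTopologicalBasis B ∧ #B = c})
    ⟨_, _, TopologicalSpace.isTopologicalBasis_opens, rfl⟩

theorem wt_le_of_basis [TopologicalSpace X] {B : Set (Set X)}
    (hB : TopologicalSpace.IsTopologicalBasis B) : wt X ≤ #B :=
  csInf_le' ⟨B, hB, rfl⟩

theorem wt_le_of_inducing [TopologicalSpace X] [TopologicalSpace Y] {f : Y → X}
    (hf : IsInducing f) : wt Y ≤ wt X := by
  obtain ⟨B, hB, hc⟩ := exists_basis_card X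
  rw [← hc]
  exact (wt_le_of_basis (hB.isInducing hf)).trans mk_image_le

theorem wt_congr [TopologicalSpace X] [TopologicalSpace Y] (h : X ≃ₜ Y) : wt X = wt Y :=
  le_antisymm (wt_le_of_inducing h.isInducing) (wt_le_of_inducing h.symm.isInducing)

/-- The cellularity is at most the weight. -/
theorem card_le_wt [TopologicalSpace X] {ι : Type u} (f : ι → Set X) (ho : ∀ i, IsOpen (f i))
    (hne : ∀ i, (f i).Nonempty) (hd : ∀ i j, i ≠ j → Disjoint (f i) (f j)) : #ι ≤ wt X := by
  obtain ⟨B, hB, hc⟩ := exists_basis_card X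
  rw [← hc]
  choose x hx using hne
  choose V hV hxV hVf using fun i => hB.exists_subset_of_mem_open (hx i) (ho i)
  refine mk_le_of_injective (f := fun i => (⟨V i, hV i⟩ : B)) fun i j hij => ?_
  by_contra hne
  have : V i = V j := congrArg Subtype.val hij
  exact disjoint_left.1 (hd i j hne) (hVf i (hxV i)) (hVf j (this ▸ hxV i))

/-- `X` has an order-dense subset of size at most `c`. -/
def HasD (c : Cardinal.{u}) (X : Type u) [LinearOrder X] : Prop :=
  ∃ D : Set X, #D ≤ c ∧ ∀ x y, x < y → ∃ d ∈ D, x < d ∧ d < y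

theorem HasD.mono {c d : Cardinal.{u}} [LinearOrder X] (h : HasD c X) (hcd : c ≤ d) :
    HasD d X := h.imp fun _ h => ⟨h.1.trans hcd, h.2⟩

theorem HasD.dual {c : Cardinal.{u}} [LinearOrder X] (h : HasD c X) : HasD c Xᵒᵈ := by
  obtain ⟨D, hc, hD⟩ := h
  refine ⟨D, hc, fun x y hxy => ?_⟩
  obtain ⟨d, hd, h1, h2⟩ := hD y x hxy
  exact ⟨d, hd, h2, h1⟩

theorem HasD.univ [LinearOrder X] [DenselyOrdered X] : HasD #X X :=
  ⟨Set.univ, mk_univ.le, fun x y h => by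
    obtain ⟨d, h⟩ := exists_between h
    exact ⟨d, trivial, h⟩⟩

variable [LinearOrder X] [TopologicalSpace X] [OrderTopology X]

theorem hasD_wt [DenselyOrdered X] : HasD (wt X) X := by
  obtain ⟨B, hB, hc⟩ := exists_basis_card X
  classical
  rcases isEmpty_or_nonempty X with hX | ⟨⟨x₀⟩⟩
  · exact ⟨∅, by simp, fun x => (hX.false x).elim⟩
  refine ⟨(fun V : Set X => if h : V.Nonempty then h.some else x₀) '' B,
    mk_image_le.trans hc.le, fun x y hxy => ?_⟩
  obtain ⟨z, hz⟩ := exists_between hxy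
  obtain ⟨V, hV, hzV, hsub⟩ := hB.exists_subset_of_mem_open (a := z) (u := Ioo x y) hz isOpen_Ioo
  have hne : V.Nonempty := ⟨z, hzV⟩
  exact ⟨hne.some, ⟨V, hV, by simp [hne]⟩, hsub hne.some_mem⟩

theorem wt_le_of_hasD {c : Cardinal.{u}} (hc : ℵ₀ ≤ c) (h : HasD c X) : wt X ≤ c := by
  obtain ⟨D, hDc, hD⟩ := h
  let g : Option D × Option D → Set X :=
    fun p => {x | (∀ a ∈ p.1, (a : X) < x) ∧ ∀ b ∈ p.2, x < (b : X)}
  have hB : TopologicalSpace.IsTopologicalBasis (range g) := by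
    refine TopologicalSpace.isTopologicalBasis_of_isOpen_of_nhds ?_ ?_
    · rintro _ ⟨⟨o, o'⟩, rfl⟩
      have h1 : IsOpen {x : X | ∀ a ∈ o, (a : X) < x} := by
        rcases o with _ | a
        · simp
        · simp only [Option.mem_def, Option.some.injEq, forall_eq']
          exact isOpen_Ioi
      have h2 : IsOpen {x : X | ∀ a ∈ o', x < (a : X)} := by
        rcases o' with _ | a
        · simp
        · simp only [Option.mem_def, Option.some.injEq, forall_eq']
          exact isOpen_Iio
      exact h1.inter h2
    · intro a u hau hu
      have hn : u ∈ nhds a := hu.mem_nhds hau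
      obtain ⟨o, ho, ho'⟩ : ∃ o : Option D, (∀ d ∈ o, (d : X) < a) ∧
          ∀ x, (∀ d ∈ o, (d : X) < x) → x ≤ a → x ∈ u := by
        by_cases hl : ∃ l, l < a
        · obtain ⟨l, hl, hlu⟩ := exists_Ioc_subset_of_mem_nhds hn hl
          obtain ⟨d, hd, h1, h2⟩ := hD l a hl
          refine ⟨some ⟨d, hd⟩, by simpa using h2, fun x hx hxa => hlu ⟨?_, hxa⟩⟩
          exact h1.trans (hx _ rfl)
        · push Not at hl
          exact ⟨none, by simp, fun x _ hxa => le_antisymm hxa (hl x) ▸ hau⟩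
      obtain ⟨p, hp, hp'⟩ : ∃ o : Option D, (∀ d ∈ o, a < (d : X)) ∧
          ∀ x, (∀ d ∈ o, x < (d : X)) → a ≤ x → x ∈ u := by
        by_cases hl : ∃ l, a < l
        · obtain ⟨l, hl, hlu⟩ := exists_Ico_subset_of_mem_nhds hn hl
          obtain ⟨d, hd, h1, h2⟩ := hD a l hl
          refine ⟨some ⟨d, hd⟩, by simpa using h1, fun x hx hxa => hlu ⟨hxa, ?_⟩⟩
          exact (hx _ rfl).trans h2
        · push Not at hl
          exact ⟨none, by simp, fun x _ hxa => le_antisymm (hl x) hxa ▸ hau⟩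
      refine ⟨g (o, p), ⟨_, rfl⟩, ⟨ho, hp⟩, fun x hx => ?_⟩
      rcases le_total x a with h | h
      · exact ho' x hx.1 h
      · exact hp' x hx.2 h
  refine (wt_le_of_basis hB).trans (mk_range_le.trans ?_)
  have h1 : #(Option D) ≤ c := by
    rw [mk_option]
    exact add_le_of_le hc hDc (one_le_aleph0.trans hc)
  rw [mk_prod, lift_id]
  exact mul_le_of_le hc h1 h1

end weight

/-! ### Copies of the seed inside an ordered space -/

section piece

variable {K X Y : Type u} [LinearOrder K] [LinearOrder X] [LinearOrder Y]

/-- `e` maps `K` onto an interval of `X`, preserving or reversing the order. -/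
def Piece (e : K → X) : Prop := (StrictMono e ∨ StrictAnti e) ∧ (range e).OrdConnected

theorem Piece.injective {e : K → X} (he : Piece e) : e.Injective :=
  he.1.elim (·.injective) (·.injective)

theorem Piece.comp {g : X → Y} {e : K → X} (hg : Piece g) (he : Piece e) : Piece (g ∘ e) := by
  refine ⟨?_, ⟨?_⟩⟩
  · rcases hg.1 with h | h <;> rcases he.1 with h' | h'
    · exact Or.inl (h.comp h')
    · exact Or.inr (h.comp_strictAnti h')
    · exact Or.inr (h.comp_strictMono h')
    · exact Or.inl (h.comp h')
  · rintro _ ⟨a, rfl⟩ _ ⟨b, rfl⟩ z hz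
    obtain ⟨x, rfl⟩ := hg.2.out ⟨e a, rfl⟩ ⟨e b, rfl⟩ hz
    rcases hg.1 with h | h
    · obtain ⟨k, rfl⟩ := he.2.out ⟨a, rfl⟩ ⟨b, rfl⟩ ⟨h.le_iff_le.1 hz.1, h.le_iff_le.1 hz.2⟩
      exact ⟨k, rfl⟩
    · obtain ⟨k, rfl⟩ := he.2.out ⟨b, rfl⟩ ⟨a, rfl⟩ ⟨h.le_iff_ge.1 hz.2, h.le_iff_ge.1 hz.1⟩
      exact ⟨k, rfl⟩

theorem Piece.isEmbedding [TopologicalSpace K] [OrderTopology K] [TopologicalSpace X]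
    [OrderTopology X] {e : K → X} (he : Piece e) : IsEmbedding e := by
  rcases he.1 with h | h
  · exact h.isEmbedding_of_ordConnected he.2
  · exact StrictMono.isEmbedding_of_ordConnected (α := K) (β := Xᵒᵈ) (f := e) h.dual_right he.2.dual

theorem Piece.isOpen_image [TopologicalSpace K] [OrderTopology K] [TopologicalSpace X]
    [OrderTopology X] [BoundedOrder K] {e : K → X} (he : Piece e) {U : Set K} (hU : IsOpen U)
    (hU' : U ⊆ Ioo ⊥ ⊤) : IsOpen (e '' U) := by
  obtain ⟨V, hV, rfl⟩ := he.isEmbedding.isInducing.isOpen_iff.1 hU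
  obtain ⟨a, b, hI, hI'⟩ : ∃ a b, e '' Ioo ⊥ ⊤ ⊆ Ioo a b ∧ Ioo a b ⊆ range e := by
    rcases he.1 with h | h
    · refine ⟨e ⊥, e ⊤, ?_, fun z hz => he.2.out ⟨_, rfl⟩ ⟨_, rfl⟩ ⟨hz.1.le, hz.2.le⟩⟩
      rintro _ ⟨k, hk, rfl⟩
      exact ⟨h hk.1, h hk.2⟩
    · refine ⟨e ⊤, e ⊥, ?_, fun z hz => he.2.out ⟨_, rfl⟩ ⟨_, rfl⟩ ⟨hz.1.le, hz.2.le⟩⟩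
      rintro _ ⟨k, hk, rfl⟩
      exact ⟨h hk.2, h hk.1⟩
  have : e '' (e ⁻¹' V) = V ∩ Ioo a b := by
    ext z
    constructor
    · rintro ⟨k, hk, rfl⟩
      exact ⟨hk, hI ⟨k, hU' hk, rfl⟩⟩
    · rintro ⟨hz, hz'⟩
      obtain ⟨k, rfl⟩ := hI' hz'
      exact ⟨k, hz, rfl⟩
  rw [this]
  exact hV.inter isOpen_Ioo

/-- `X` is covered by intervals that are copies of `K` or of its reverse. -/
def Cov (K X : Type u) [LinearOrder K] [LinearOrder X] : Prop :=
  ∀ x : X, ∃ e : K → X, Piece e ∧ x ∈ range e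

theorem Cov.self : Cov K K := fun x =>
  ⟨id, ⟨Or.inl strictMono_id, by simpa using ordConnected_univ⟩, x, rfl⟩

theorem Cov.dual (h : Cov K X) : Cov K Xᵒᵈ := fun x => by
  obtain ⟨e, he, hx⟩ := h x
  exact ⟨OrderDual.toDual ∘ e, ⟨he.1.symm.imp (·.dual_right) (·.dual_right), he.2.dual⟩, hx⟩

end piece

section coverInvariants

variable {K X : Type u} [LinearOrder K] [LinearOrder X] [BoundedOrder K] [Nontrivial K]
  [DenselyOrdered K] [TopologicalSpace K] [OrderTopology K] [TopologicalSpace X]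
  [OrderTopology X] [Nonempty X]

theorem exists_wt_eq_hatWt (X : Type u) [TopologicalSpace X] [Nonempty X] :
    ∃ U : Set X, IsOpen U ∧ U.Nonempty ∧ wt U = hatWt X :=
  csInf_mem (s := {c : Cardinal.{u} | ∃ U : Set X, IsOpen U ∧ U.Nonempty ∧ wt U = c})
    ⟨_, Set.univ, isOpen_univ, univ_nonempty, rfl⟩

theorem hatWt_le {X : Type u} [TopologicalSpace X] {U : Set X} (hU : IsOpen U)
    (hne : U.Nonempty) : hatWt X ≤ wt U := csInf_le' ⟨U, hU, hne, rfl⟩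

/-- Every nonempty open set contains a copy of a nonempty open subset of the seed. -/
theorem Cov.exists_open (h : Cov K X) {U : Set X} (hU : IsOpen U) (hne : U.Nonempty) :
    ∃ V : Set K, IsOpen V ∧ V.Nonempty ∧ wt V ≤ wt U ∧ #V ≤ #U := by
  obtain ⟨x, hx⟩ := hne
  obtain ⟨e, he, k, rfl⟩ := h x
  refine ⟨e ⁻¹' U, hU.preimage he.isEmbedding.continuous, ⟨k, hx⟩, ?_,
    mk_preimage_of_injective e U he.injective⟩
  have h1 : IsInducing (fun v : ↥(e ⁻¹' U) => (⟨e v, v.2⟩ : U)) := by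
    rw [← IsInducing.subtypeVal.of_comp_iff]
    exact he.isEmbedding.isInducing.comp IsInducing.subtypeVal
  exact wt_le_of_inducing h1

theorem Cov.hatWt_eq (h : Cov K X) : hatWt X = hatWt K := by
  apply le_antisymm
  · obtain ⟨U, hU, hne, hw⟩ := exists_wt_eq_hatWt K
    rw [← hw]
    obtain ⟨k, hk, hk'⟩ : (U ∩ Ioo ⊥ ⊤).Nonempty := by
      have hd : Dense (Ioo (⊥ : K) ⊤) := by
        intro x
        rw [closure_Ioo bot_ne_top]
        exact ⟨bot_le, le_top⟩
      exact hd.inter_open_nonempty U hU hne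
    obtain ⟨e, he, -⟩ := h (Classical.arbitrary X)
    refine (hatWt_le (he.isOpen_image (hU.inter isOpen_Ioo) inter_subset_right)
      ⟨_, k, ⟨hk, hk'⟩, rfl⟩).trans ?_
    have h1 : wt ↥(U ∩ Ioo ⊥ ⊤) = wt ↥(e '' (U ∩ Ioo ⊥ ⊤)) :=
      wt_congr (he.isEmbedding.homeomorphImage _)
    rw [← h1]
    exact wt_le_of_inducing (IsEmbedding.inclusion inter_subset_left).isInducing
  · obtain ⟨U, hU, hne, hw⟩ := exists_wt_eq_hatWt X
    obtain ⟨V, hV, hV', h1, -⟩ := h.exists_open hU hne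
    rw [← hw]
    exact (hatWt_le hV hV').trans h1

theorem Cov.card_le (h : Cov K X) : #K ≤ #X := by
  obtain ⟨e, he, -⟩ := h (Classical.arbitrary X)
  exact mk_le_of_injective he.injective

theorem Cov.isBalanced (h : Cov K X) (hK : IsBalanced K) (hw : wt X = wt K)
    (hX : #X ≤ #K) : IsBalanced X := by
  intro U hU hne
  obtain ⟨V, hV, hV', h1, h2⟩ := h.exists_open hU hne
  obtain ⟨h3, h4⟩ := hK V hV hV'
  refine ⟨le_antisymm (mk_set_le U) ?_, le_antisymm (wt_le_of_inducing IsInducing.subtypeVal) ?_⟩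
  · exact hX.trans (h3 ▸ h2)
  · rw [hw, ← h4]
    exact h1

end coverInvariants

/-! ### Invariants of a concatenation -/

namespace Cat

variable {W : Type u} [LinearOrder W] [BoundedOrder W] {F : W → Type u}
  [∀ w, LinearOrder (F w)] [∀ w, BoundedOrder (F w)] [∀ w, Nontrivial (F w)]

theorem cov [WellFoundedLT W] {K : Type u} [LinearOrder K] (h : ∀ w, Cov K (F w)) :
    Cov K (Cat F) := fun p => by
  obtain ⟨w, x, hx, rfl⟩ := p.exists_mk
  obtain ⟨g, hg, hg', hmk, -⟩ := exists_incl (F := F) w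
  obtain ⟨e, he, k, rfl⟩ := h w x
  exact ⟨g ∘ e, Piece.comp ⟨Or.inl hg, hg'⟩ he, k, hmk _ hx⟩

theorem card_le {c : Cardinal.{u}} (hc : ℵ₀ ≤ c) (hW : #W ≤ c) (hF : ∀ w, #(F w) ≤ c) :
    #(Cat F) ≤ c := by
  refine (mk_le_of_injective (β := Σ w, F w) Subtype.val_injective).trans ?_
  rw [mk_sigma]
  refine (sum_le_mk_mul_iSup _).trans ?_
  exact mul_le_of_le hc hW (ciSup_le' hF)

theorem le_card : #W ≤ #(Cat F) := mk_le_of_injective bt_strictMono.injective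

theorem hasD {c : Cardinal.{u}} (hc : ℵ₀ ≤ c) (hW : #W ≤ c) (hF : ∀ w, HasD c (F w)) :
    HasD c (Cat F) := by
  choose D hDc hD using hF
  refine ⟨{p | p.1.2 ∈ D p.1.1}, ?_, ?_⟩
  · have : Function.Injective (fun p : {p : Cat F | p.1.2 ∈ D p.1.1} =>
        (⟨p.1.1.1, ⟨p.1.1.2, p.2⟩⟩ : Σ w, D w)) := by
      rintro ⟨⟨⟨w, x⟩, hx⟩, hx'⟩ ⟨⟨⟨v, y⟩, hy⟩, hy'⟩ h
      simp only [Sigma.mk.injEq] at h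
      obtain ⟨rfl, h⟩ := h
      have := eq_of_heq h
      simp only [Subtype.mk.injEq] at this
      subst this
      rfl
    refine (mk_le_of_injective this).trans ?_
    rw [mk_sigma]
    exact (sum_le_mk_mul_iSup _).trans (mul_le_of_le hc hW (ciSup_le' hDc))
  · intro p q hpq
    obtain ⟨v, x, hx, rfl⟩ := p.exists_mk
    obtain ⟨w, y, hy, rfl⟩ := q.exists_mk
    rcases (idx_mono hpq.le).eq_or_lt with h | h
    · change v = w at h
      subst h
      obtain ⟨z, hz, hz1, hz2⟩ := hD v _ _ (mk_lt_same.1 hpq)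
      exact ⟨mk v z (Or.inr (hz2.trans_le le_top).ne), hz, mk_lt_same.2 hz1, mk_lt_same.2 hz2⟩
    · change v < w at h
      have hx' : x < ⊤ := lt_top_iff_ne_top.2 (hx.resolve_left (h.trans_le le_top).ne)
      obtain ⟨z, hz, hz1, hz2⟩ := hD v _ _ hx'
      exact ⟨mk v z (Or.inr hz2.ne), hz, mk_lt_same.2 hz1, mk_lt_of_lt h⟩

theorem le_wt [∀ w, DenselyOrdered (F w)] [TopologicalSpace (Cat F)] [OrderTopology (Cat F)]
    [WellFoundedLT W] : #W ≤ wt (Cat F) := by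
  choose x hx hx' using fun w => exists_between (bot_lt_top (α := F w))
  have hidx : ∀ w p, p ∈ Ioo (bt F w) (mk w (x w) (Or.inr (hx' w).ne)) → p.idx = w :=
    fun w p hp => le_antisymm (idx_mono hp.2.le) (idx_mono hp.1.le)
  refine card_le_wt (fun w => Ioo (bt F w) (mk w (x w) (Or.inr (hx' w).ne)))
    (fun w => isOpen_Ioo) (fun w => nonempty_Ioo.2 (mk_lt_same.2 (hx w))) ?_
  intro v w hne
  exact disjoint_left.2 fun p hp hp' => hne ((hidx v p hp).symm.trans (hidx w p hp'))

end Cat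

/-! ### The two letters -/

section letters

/-- A well-order of type `c` with a bottom and a top added. -/
abbrev Idx (c : Cardinal.{u}) : Type u := WithTop (WithBot c.ord.ToType)

theorem mk_idx {c : Cardinal.{u}} (hc : ℵ₀ ≤ c) : #(Idx c) = c := by
  have h1 : #(WithTop (WithBot c.ord.ToType)) = #c.ord.ToType + 1 + 1 := by
    rw [← mk_option, ← mk_option]; rfl
  rw [h1, mk_ord_toType, add_one_eq hc, add_one_eq hc]

theorem lPt_idx {c : Cardinal.{u}} (hc : ℵ₀ ≤ c) (w : Idx (Order.succ c)) :
    LPt c w ↔ w = ⊤ := by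
  constructor
  · intro h
    by_contra hw
    have hcard : #(Iio w) ≤ c := by
      obtain ⟨w, rfl⟩ := WithTop.ne_top_iff_exists.1 hw
      induction w using WithBot.recBotCoe with
      | bot =>
        have : Iio ((⊥ : WithBot (Order.succ c).ord.ToType) : Idx (Order.succ c)) = ∅ := by
          ext z
          simp only [mem_Iio, mem_empty_iff_false, iff_false]
          exact (bot_le (α := Idx (Order.succ c))).not_gt
        rw [this]
        simp
      | coe a =>
        have hsub : Iio (((a : WithBot (Order.succ c).ord.ToType)) : Idx (Order.succ c)) ⊆
            insert ⊥ ((fun b : (Order.succ c).ord.ToType =>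
              ((b : WithBot (Order.succ c).ord.ToType) : Idx (Order.succ c))) '' Iio a) := by
          intro z hz
          obtain ⟨z, rfl⟩ := WithTop.ne_top_iff_exists.1 (mem_Iio.1 hz).ne_top
          induction z using WithBot.recBotCoe with
          | bot => exact Or.inl rfl
          | coe b =>
            refine Or.inr ⟨b, ?_, rfl⟩
            simpa using hz
        refine (mk_le_mk_of_subset hsub).trans (mk_insert_le.trans ?_)
        refine add_le_of_le hc (mk_image_le.trans ?_) (one_le_aleph0.trans hc)
        exact Order.lt_succ_iff.1 ((mk_Iio_lt a (by simp)).trans_eq (mk_ord_toType _))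
    obtain ⟨b, hb, hb'⟩ := h (Iio w) subset_rfl hcard
    exact lt_irrefl b (hb' b hb)
  · rintro rfl A hA hAc
    let j : (Order.succ c).ord.ToType → Idx (Order.succ c) := fun b =>
      ((b : WithBot (Order.succ c).ord.ToType) : Idx (Order.succ c))
    have hj : Function.Injective j := fun a b h => by simpa [j] using h
    have hcof : ¬ IsCofinal (j ⁻¹' A) := by
      intro hcof
      have h1 := Order.cof_le hcof
      rw [Ordinal.cof_toType, (isRegular_succ hc).cof_ord] at h1
      exact (Order.lt_succ c).not_ge (h1.trans ((mk_preimage_of_injective j A hj).trans hAc))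
    simp only [IsCofinal, not_forall, not_exists, not_and, not_le] at hcof
    obtain ⟨b, hb⟩ := hcof
    refine ⟨j b, WithTop.coe_lt_top _, fun z hz => ?_⟩
    obtain ⟨z, rfl⟩ := WithTop.ne_top_iff_exists.1 (mem_Iio.1 (hA hz)).ne
    induction z using WithBot.recBotCoe with
    | bot => exact WithTop.coe_lt_coe.2 (WithBot.bot_lt_coe b)
    | coe a => simpa [j] using hb a hz

variable {A : Type u} [LinearOrder A] [BoundedOrder A] [Nontrivial A]

/-- The letter `true` is `A`, the letter `false` is its reverse. -/
def Letter (A : Type u) : Bool → Type u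
  | true => A
  | false => Aᵒᵈ

instance : ∀ b, LinearOrder (Letter A b)
  | true => inferInstanceAs (LinearOrder A)
  | false => inferInstanceAs (LinearOrder Aᵒᵈ)

instance : ∀ b, BoundedOrder (Letter A b)
  | true => inferInstanceAs (BoundedOrder A)
  | false => inferInstanceAs (BoundedOrder Aᵒᵈ)

instance : ∀ b, Nontrivial (Letter A b)
  | true => inferInstanceAs (Nontrivial A)
  | false => inferInstanceAs (Nontrivial Aᵒᵈ)

instance [DenselyOrdered A] : ∀ b, DenselyOrdered (Letter A b)
  | true => inferInstanceAs (DenselyOrdered A)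
  | false => inferInstanceAs (DenselyOrdered Aᵒᵈ)

instance [Cpl A] : ∀ b, Cpl (Letter A b)
  | true => inferInstanceAs (Cpl A)
  | false => inferInstanceAs (Cpl Aᵒᵈ)

theorem Letter.card : ∀ b, #(Letter A b) = #A
  | true => rfl
  | false => rfl

theorem Letter.cov {K : Type u} [LinearOrder K] (h : Cov K A) : ∀ b, Cov K (Letter A b)
  | true => h
  | false => h.dual

theorem Letter.hasD {c : Cardinal.{u}} (h : HasD c A) : ∀ b, HasD c (Letter A b)
  | true => h
  | false => h.dual

/-- The point of a letter corresponding to the point `m` of `A`. -/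
def Letter.mid (m : A) : ∀ b, Letter A b
  | true => m
  | false => OrderDual.toDual m

/-- `A` has a single point of large one-sided character: `m`, from the left. -/
structure Marked (c : Cardinal.{u}) (m : A) : Prop where
  ne_bot : m ≠ ⊥
  ne_top : m ≠ ⊤
  left : ∀ x : A, LPt c x ↔ x = m
  right : ∀ x : A, ¬ RPt c x

namespace Marked

variable {c : Cardinal.{u}} {m : A} (h : Marked c m)
include h

theorem mid_ne_bot : ∀ b, Letter.mid m b ≠ ⊥
  | true => h.ne_bot
  | false => h.ne_top

theorem mid_ne_top : ∀ b, Letter.mid m b ≠ ⊤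
  | true => h.ne_top
  | false => h.ne_bot

theorem lPt_letter : ∀ b (x : Letter A b), LPt c x ↔ b = true ∧ x = Letter.mid m b
  | true, x => (h.left x).trans (by simp [Letter.mid]; rfl)
  | false, x => (iff_of_false (h.right (OrderDual.ofDual x)) (by simp))

theorem rPt_letter : ∀ b (x : Letter A b), RPt c x ↔ b = false ∧ x = Letter.mid m b
  | true, x => (iff_of_false (h.right x) (by simp))
  | false, x => (h.left (OrderDual.ofDual x)).trans (by simp [Letter.mid]; rfl)

end Marked

/-- Copies of `K` concatenated along `succ c + 1` have a single point of large one-sided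
character, namely the bottom of the last copy. -/
theorem marked_cat {K : Type u} [LinearOrder K] [BoundedOrder K] [Nontrivial K]
    {c : Cardinal.{u}} (hc : ℵ₀ ≤ c) (hL : ∀ k : K, ¬ LPt c k) (hR : ∀ k : K, ¬ RPt c k) :
    Marked c (Cat.bt (W := Idx (Order.succ c)) (fun _ => K) ⊤) where
  ne_bot h := by
    rw [Cat.bot_def] at h
    exact bot_ne_top (Cat.bt_strictMono.injective h).symm
  ne_top h := by
    rw [Cat.top_def] at h
    exact bot_ne_top (Cat.mk_congr.1 h)
  left x := by
    obtain ⟨w, y, hy, rfl⟩ := x.exists_mk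
    by_cases hyb : y = ⊥
    · subst hyb
      refine (Cat.lPt_bt (fun _ => hL _) (one_le_aleph0.trans hc) w).trans ?_
      rw [lPt_idx hc]
      exact Cat.bt_strictMono.injective.eq_iff.symm
    · rw [Cat.lPt_mk _ _ _ hyb]
      refine iff_of_false (hL y) fun h => hyb ?_
      obtain rfl : w = ⊤ := congrArg Cat.idx h
      exact Cat.mk_congr.1 h
  right x := by
    obtain ⟨w, y, hy, rfl⟩ := x.exists_mk
    rw [Cat.rPt_mk]
    exact hR y

end letters

/-! ### Words in the two letters -/

section words

variable {A : Type u} [LinearOrder A] [BoundedOrder A] [Nontrivial A]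
  {W : Type u} [LinearOrder W] [BoundedOrder W] [WellFoundedLT W]

/-- The concatenation of the letters of the word `u`. -/
abbrev Word (A : Type u) [LinearOrder A] [BoundedOrder A] (u : W → Bool) : Type u :=
  Cat (fun w => Letter A (u w))

variable {c : Cardinal.{u}} {m : A} (h : Marked c m)

/-- The marked point of the `w`-th letter. -/
def mid (h : Marked c m) (u : W → Bool) (w : W) : Word A u :=
  Cat.mk w (Letter.mid m (u w)) (Or.inr (h.mid_ne_top _))

/-- The bottom of the `w`-th letter. -/
abbrev bot (A : Type u) [LinearOrder A] [BoundedOrder A] [Nontrivial A] (u : W → Bool) (w : W) :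
    Word A u :=
  Cat.bt (fun w => Letter A (u w)) w

variable (u : W → Bool)

theorem bot_lt_mid (w : W) : bot A u w < mid h u w :=
  Cat.mk_lt_same.2 (bot_lt_iff_ne_bot.2 (h.mid_ne_bot _))

theorem mid_lt_bot {v w : W} (hvw : v < w) : mid h u v < bot A u w := Cat.mk_lt_of_lt hvw

theorem mid_strictMono : StrictMono (mid h u) := fun _ _ hvw => Cat.mk_lt_of_lt hvw

theorem mid_lt_top (w : W) : mid h u w < ⊤ := by
  refine lt_top_iff_ne_top.2 fun e => ?_
  obtain rfl : w = ⊤ := congrArg Cat.idx e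
  rw [Cat.top_def] at e
  exact h.mid_ne_top _ (Cat.mk_congr.1 e)

theorem rPt_word (x : Word A u) : RPt c x ↔ ∃ w, u w = false ∧ x = mid h u w := by
  obtain ⟨w, y, hy, rfl⟩ := x.exists_mk
  rw [Cat.rPt_mk, h.rPt_letter]
  constructor
  · rintro ⟨h1, h2⟩
    exact ⟨w, h1, Cat.mk_congr.2 h2⟩
  · rintro ⟨v, h1, h2⟩
    obtain rfl : w = v := congrArg Cat.idx h2
    exact ⟨h1, Cat.mk_congr.1 h2⟩

theorem lPt_word (hc : 1 ≤ c) (x : Word A u) : LPt c x ↔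
    (∃ w, u w = true ∧ x = mid h u w) ∨ ∃ w, LPt c w ∧ x = bot A u w := by
  obtain ⟨w, y, hy, rfl⟩ := x.exists_mk
  by_cases hyb : y = ⊥
  · subst hyb
    refine (Cat.lPt_bt (F := fun w => Letter A (u w)) (fun w hw => ?_) hc w).trans ?_
    · exact h.mid_ne_top _ ((h.lPt_letter _ _).1 hw).2.symm
    · constructor
      · exact fun h => Or.inr ⟨w, h, rfl⟩
      · rintro (⟨v, h1, h2⟩ | ⟨v, h1, h2⟩)
        · obtain rfl : w = v := congrArg Cat.idx h2
          exact (h.mid_ne_bot _ (Cat.mk_congr.1 h2).symm).elim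
        · obtain rfl : w = v := congrArg Cat.idx h2
          exact h1
  · rw [Cat.lPt_mk _ _ _ hyb, h.lPt_letter]
    constructor
    · rintro ⟨h1, h2⟩
      exact Or.inl ⟨w, h1, Cat.mk_congr.2 h2⟩
    · rintro (⟨v, h1, h2⟩ | ⟨v, h1, h2⟩)
      · obtain rfl : w = v := congrArg Cat.idx h2
        exact ⟨h1, Cat.mk_congr.1 h2⟩
      · obtain rfl : w = v := congrArg Cat.idx h2
        exact (hyb (Cat.mk_congr.1 h2)).elim

end words

/-! ### Rigidity of words -/

section rigid

variable {A : Type u} [LinearOrder A] [BoundedOrder A] [Nontrivial A]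
  {W : Type u} [LinearOrder W] [BoundedOrder W] [WellFoundedLT W]
  {c : Cardinal.{u}} {m : A} (h : Marked c m)

theorem mid_inj {u : W → Bool} {v w : W} : mid h u v = mid h u w ↔ v = w :=
  (mid_strictMono h u).injective.eq_iff

theorem lPt_mid (hc : 1 ≤ c) (u : W → Bool) (w : W) : LPt c (mid h u w) ↔ u w = true := by
  rw [lPt_word h u hc]
  constructor
  · rintro (⟨v, h1, h2⟩ | ⟨v, h1, h2⟩)
    · rwa [(mid_inj h).1 h2]
    · obtain rfl : w = v := congrArg Cat.idx h2
      exact ((bot_lt_mid h u w).ne h2.symm).elim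
  · exact fun hw => Or.inl ⟨w, hw, rfl⟩

theorem rPt_mid (u : W → Bool) (w : W) : RPt c (mid h u w) ↔ u w = false := by
  rw [rPt_word h u]
  constructor
  · rintro ⟨v, h1, h2⟩
    rwa [(mid_inj h).1 h2]
  · exact fun hw => ⟨w, hw, rfl⟩

/-- The bottoms and the marked points of the letters, in increasing order. -/
def pos (u : W → Bool) (n : W ×ₗ Bool) : Word A u :=
  if (ofLex n).2 = true then mid h u (ofLex n).1 else bot A u (ofLex n).1

theorem pos_true (u : W → Bool) (w : W) : pos h u (toLex (w, true)) = mid h u w := rfl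

theorem pos_false (u : W → Bool) (w : W) : pos h u (toLex (w, false)) = bot A u w := rfl

theorem pos_idx (u : W → Bool) (n : W ×ₗ Bool) : (pos h u n).idx = (ofLex n).1 := by
  unfold pos
  split_ifs <;> rfl

theorem pos_strictMono (u : W → Bool) : StrictMono (pos h u) := by
  intro a b hab
  rcases Prod.Lex.lt_iff.1 hab with h1 | ⟨h1, h2⟩
  · exact Cat.lt_of_idx (by rwa [pos_idx, pos_idx])
  · obtain ⟨a1, a2⟩ := a
    obtain ⟨b1, b2⟩ := b
    change a1 = b1 at h1
    change a2 < b2 at h2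
    subst h1
    obtain ⟨rfl, rfl⟩ := Bool.lt_iff.1 h2
    exact bot_lt_mid h u a1

theorem pos_lt_top (u : W → Bool) (n : W ×ₗ Bool) : pos h u n < ⊤ := by
  unfold pos
  split_ifs
  · exact mid_lt_top h u _
  · exact (bot_lt_mid h u _).trans (mid_lt_top h u _)

/-- The positions, independent of the word, of the points of large one-sided character. -/
def special (c : Cardinal.{u}) (n : W ×ₗ Bool) : Prop :=
  (ofLex n).2 = true ∨ LPt c (ofLex n).1

theorem special_iff (hc : 1 ≤ c) (u : W → Bool) (x : Word A u) :
    LPt c x ∨ RPt c x ↔ ∃ n : W ×ₗ Bool, special c n ∧ x = pos h u n := by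
  rw [lPt_word h u hc, rPt_word h u]
  constructor
  · rintro ((⟨w, -, rfl⟩ | ⟨w, h1, rfl⟩) | ⟨w, -, rfl⟩)
    · exact ⟨toLex (w, true), Or.inl rfl, rfl⟩
    · exact ⟨toLex (w, false), Or.inr h1, rfl⟩
    · exact ⟨toLex (w, true), Or.inl rfl, rfl⟩
  · rintro ⟨⟨w, b⟩, h1, h2⟩
    cases b
    · rcases h1 with h1 | h1
      · exact absurd h1 Bool.false_ne_true
      · exact Or.inl (Or.inr ⟨w, h1, h2⟩)
    · cases hu : u w
      · exact Or.inr ⟨w, hu, h2⟩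
      · exact Or.inl (Or.inl ⟨w, hu, h2⟩)

/-- A strictly monotone map onto an interval which matches the first marked points matches all
marked points. -/
theorem map_mid (hc : 1 ≤ c) {u v : W → Bool} {f : Word A u → Word A v} (hf : StrictMono f)
    (hr : (range f).OrdConnected) (h0 : f (mid h u ⊥) = mid h v ⊥) (w : W) :
    f (mid h u w) = mid h v w := by
  have key : ∀ x, (∃ y, y < x) → (∃ y, x < y) → ((LPt c (f x) ∨ RPt c (f x)) ↔
      LPt c x ∨ RPt c x) := fun x h1 h2 => or_congr (lPt_map hf hr h1) (rPt_map hf hr h2)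
  have hP := pos_strictMono h u
  have hQ := pos_strictMono h v
  have main : ∀ n : W ×ₗ Bool, toLex (⊥, true) ≤ n → special c n →
      f (pos h u n) = pos h v n := by
    intro n
    induction n using WellFoundedLT.induction with
    | ind n ih =>
    intro hn hs
    rcases hn.eq_or_lt with rfl | hn
    · exact h0
    have hPn := hP hn
    obtain ⟨k, hk, hfk⟩ := (special_iff h hc v _).1
      ((key _ ⟨_, hPn⟩ ⟨_, pos_lt_top h u n⟩).2 ((special_iff h hc u _).2 ⟨n, hs, rfl⟩))
    have h0k : toLex (⊥, true) < k := by
      rw [← hQ.lt_iff_lt, ← hfk, pos_true, ← h0]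
      exact hf hPn
    rcases lt_trichotomy k n with hkn | rfl | hkn
    · have := ih k hkn h0k.le hk
      rw [← hfk] at this
      exact absurd (hP.injective (hf.injective this)) hkn.ne
    · exact hfk
    · obtain ⟨x, hx⟩ := hr.out (mem_range_self (mid h u ⊥)) (mem_range_self (pos h u n))
        (show pos h v n ∈ Icc _ _ by
          rw [h0, hfk]
          exact ⟨(hQ hn).le, (hQ hkn).le⟩)
      have hx1 : mid h u ⊥ < x := by
        rw [← hf.lt_iff_lt, h0, hx]
        exact hQ hn
      have hx2 : x < pos h u n := by
        rw [← hf.lt_iff_lt, hfk, hx]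
        exact hQ hkn
      obtain ⟨j, hj, rfl⟩ := (special_iff h hc u _).1
        ((key x ⟨_, hx1⟩ ⟨_, hx2⟩).1 ((special_iff h hc v _).2 ⟨n, hs, hx⟩))
      have hjn : j < n := hP.lt_iff_lt.1 hx2
      have := ih j hjn (hP.lt_iff_lt.1 (show pos h u (toLex (⊥, true)) < _ from hx1)).le hj
      rw [hx] at this
      exact absurd (hQ.injective this) hjn.ne'
  exact main (toLex (w, true)) (Prod.Lex.toLex_mono (Prod.mk_le_mk.2 ⟨bot_le, le_rfl⟩)) (Or.inl rfl)

theorem word_rigid (hc : 1 ≤ c) {u v : W → Bool} {f : Word A u → Word A v} (hf : StrictMono f)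
    (hr : (range f).OrdConnected) (h0 : f (mid h u ⊥) = mid h v ⊥) : u = v := by
  funext w
  have h1 : RPt c (f (mid h u w)) ↔ RPt c (mid h u w) :=
    rPt_map hf hr ⟨⊤, mid_lt_top h u w⟩
  rw [map_mid h hc hf hr h0, rPt_mid, rPt_mid] at h1
  cases hu : u w <;> cases hv : v w <;> simp_all

end rigid

/-! ### The words coding the subsets of a cardinal -/

section coding

variable {κ : Cardinal.{u}}

/-- The word of length `κ` coding `s`: it starts with two reversed letters, and afterwards no two
consecutive letters are reversed. -/
noncomputable def code (s : Set κ.ord.ToType) (w : Idx κ ×ₗ Bool) : Bool :=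
  open Classical in decide ((ofLex w).1 ≠ ⊥ ∧ ((ofLex w).2 = false ∨
    ∃ a ∈ s, (ofLex w).1 = ((a : WithBot κ.ord.ToType) : Idx κ)))

theorem code_bot (s : Set κ.ord.ToType) (b : Bool) : code s (toLex (⊥, b)) = false := by
  simp [code]

theorem code_false (s : Set κ.ord.ToType) {v : Idx κ} (hv : v ≠ ⊥) :
    code s (toLex (v, false)) = true := by
  simp [code, hv]

theorem code_true (s : Set κ.ord.ToType) (a : κ.ord.ToType) :
    code s (toLex (((a : WithBot κ.ord.ToType) : Idx κ), true)) = true ↔ a ∈ s := by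
  have h1 : ((a : WithBot κ.ord.ToType) : Idx κ) ≠ ⊥ :=
    (WithTop.coe_lt_coe.2 (WithBot.bot_lt_coe a)).ne'
  have h2 : ∀ b : κ.ord.ToType, ((a : WithBot κ.ord.ToType) : Idx κ) =
      ((b : WithBot κ.ord.ToType) : Idx κ) ↔ a = b := fun b =>
    WithTop.coe_inj.trans WithBot.coe_inj
  unfold code
  refine (@decide_eq_true_iff _ (_)).trans ?_
  simp only [ofLex_toLex, h2, ne_eq, h1, not_false_eq_true, true_and, Bool.true_eq_false, false_or,
    exists_eq_right']

theorem code_injective : Function.Injective (code (κ := κ)) := fun s t hst => by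
  ext a
  rw [← code_true s, ← code_true t, hst]

theorem bot_lex : (⊥ : Idx κ ×ₗ Bool) = toLex (⊥, false) := rfl

variable {A : Type u} [LinearOrder A] [BoundedOrder A] [Nontrivial A]
  {c : Cardinal.{u}} {m : A} (h : Marked c m)

/-- `x` has large right character, and so has some later point `y` such that no point of `(x, y]`
has large left character. -/
def RR {X : Type u} [Preorder X] (c : Cardinal.{u}) (x : X) : Prop :=
  RPt c x ∧ ∃ y, x < y ∧ RPt c y ∧ ∀ z, x < z → z ≤ y → ¬ LPt c z

theorem rr_code (hc : 1 ≤ c) (s : Set κ.ord.ToType) (x : Word A (code s)) :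
    RR c x ↔ x = mid h (code s) ⊥ := by
  constructor
  · rintro ⟨hx, y, hxy, hy, hz⟩
    obtain ⟨⟨v, b⟩, hu, rfl⟩ := (rPt_word h _ _).1 hx
    obtain ⟨⟨v', b'⟩, hu', rfl⟩ := (rPt_word h _ _).1 hy
    have hlt := (mid_strictMono h (code s)).lt_iff_lt.1 hxy
    rcases Prod.Lex.lt_iff.1 hlt with h1 | ⟨h1, h2⟩
    -- if `v < v'`, the letter at `(v', false)` is not reversed and lies in between
    · change v < v' at h1
      have h3 := code_false s (bot_le.trans_lt h1).ne'
      refine (hz (mid h _ (toLex (v', false))) ?_ ?_ ((lPt_mid h hc _ _).2 h3)).elim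
      · exact mid_strictMono h _ (Prod.Lex.lt_iff.2 (Or.inl h1))
      · exact (mid_strictMono h _).monotone
          (Prod.Lex.toLex_mono (Prod.mk_le_mk.2 ⟨le_rfl, Bool.false_le _⟩))
    · obtain ⟨rfl, rfl⟩ := Bool.lt_iff.1 h2
      have : v = ⊥ := by
        by_contra hv
        exact Bool.false_ne_true (hu.symm.trans (code_false s hv))
      subst this
      rfl
  · rintro rfl
    have hlt : (⊥ : Idx κ ×ₗ Bool) < toLex (⊥, true) :=
      Prod.Lex.lt_iff.2 (Or.inr ⟨rfl, Bool.false_lt_true⟩)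
    refine ⟨(rPt_mid h _ _).2 (code_bot s _), mid h _ (toLex (⊥, true)), mid_strictMono h _ hlt,
      (rPt_mid h _ _).2 (code_bot s _), fun z h1 h2 hz => ?_⟩
    -- a point of large left character is marked in a letter that is not reversed, or sits at an
    -- index of large left character
    rcases (lPt_word h _ hc _).1 hz with ⟨w, hw, rfl⟩ | ⟨w, hw, rfl⟩
    · have h3 := (mid_strictMono h (code s)).le_iff_le.1 h2
      obtain ⟨v, b⟩ := w
      have : v = ⊥ := by
        rcases Prod.Lex.le_iff.1 h3 with h4 | ⟨h4, -⟩
        · exact (not_lt_bot h4).elim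
        · exact h4
      subst this
      exact Bool.false_ne_true ((code_bot s b).symm.trans hw)
    · obtain ⟨w', hw'⟩ := hw.exists_lt
      have h3 : w ≤ toLex (⊥, true) := Cat.idx_mono h2
      have hbelow : ∀ z : Idx κ ×ₗ Bool, z < w → z = ⊥ := by
        rintro ⟨v, b⟩ hz
        rcases Prod.Lex.lt_iff.1 (hz.trans_le h3) with h4 | ⟨h4, h5⟩
        · exact (not_lt_bot h4).elim
        · obtain ⟨rfl, -⟩ := Bool.lt_iff.1 h5
          change v = ⊥ at h4
          subst h4
          rfl
      obtain ⟨b, hb, hb'⟩ := hw {⊥} (by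
        rintro _ rfl
        exact bot_le.trans_lt hw') (by simpa using hc)
      exact (hb' ⊥ rfl).ne' (hbelow b hb)

include h

/-- A strictly monotone map onto an interval between two coding words forces the codes to be
equal. -/
theorem code_mono (hc : 1 ≤ c) {s t : Set κ.ord.ToType} {f : Word A (code s) → Word A (code t)}
    (hf : StrictMono f) (hr : (range f).OrdConnected) : s = t := by
  refine code_injective (word_rigid h hc hf hr ?_)
  rw [← rr_code h hc]
  obtain ⟨hx, y, hxy, hy, hz⟩ := (rr_code h hc s _).2 rfl
  have key : ∀ z, mid h (code s) ⊥ < z → (LPt c (f z) ↔ LPt c z) := fun z hz =>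
    lPt_map hf hr ⟨_, hz⟩
  refine ⟨(rPt_map hf hr hx.exists_gt).2 hx, f y, hf hxy, (rPt_map hf hr hy.exists_gt).2 hy,
    fun z h1 h2 => ?_⟩
  obtain ⟨z, rfl⟩ := hr.out (mem_range_self _) (mem_range_self y) ⟨h1.le, h2⟩
  rw [hf.lt_iff_lt] at h1
  rw [hf.le_iff_le] at h2
  rw [key z h1]
  exact hz z h1 h2

/-- There is no strictly antitone map onto an interval between two coding words, as it would turn
the marked points of letters into a decreasing sequence of marked points. -/
theorem code_anti (hκ : ℵ₀ ≤ κ) (hc : 1 ≤ c) {s t : Set κ.ord.ToType}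
    {f : Word A (code s) → Word A (code t)}
    (hf : StrictAnti f) (hr : (range f).OrdConnected) : False := by
  have := Cardinal.noMaxOrder hκ
  have : Nonempty κ.ord.ToType := by
    rw [← mk_ne_zero_iff, mk_ord_toType]
    exact (aleph0_pos.trans_le hκ).ne'
  have hmem : ∀ a : κ.ord.ToType, ∃ w, f (mid h (code s)
      (toLex (((a : WithBot κ.ord.ToType) : Idx κ), false))) = mid h (code t) w := by
    intro a
    have h1 : ((a : WithBot κ.ord.ToType) : Idx κ) ≠ ⊥ :=
      (WithTop.coe_lt_coe.2 (WithBot.bot_lt_coe a)).ne'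
    have h2 := (lPt_mid h hc (code s) _).2 (code_false s h1)
    obtain ⟨w, -, hw⟩ := (rPt_word h _ _).1 ((rPt_map_anti hf hr h2.exists_lt).2 h2)
    exact ⟨w, hw⟩
  choose g hg using hmem
  have hgs : StrictAnti g := by
    intro a b hab
    rw [← (mid_strictMono h (code t)).lt_iff_lt, ← hg, ← hg]
    refine hf (mid_strictMono h _ (Prod.Lex.lt_iff.2 (Or.inl ?_)))
    exact WithTop.coe_lt_coe.2 (WithBot.coe_lt_coe.2 hab)
  obtain ⟨_, ⟨a, rfl⟩, ha⟩ := WellFounded.has_min (wellFounded_lt (α := Idx κ ×ₗ Bool))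
    (range g) (range_nonempty g)
  obtain ⟨b, hb⟩ := exists_gt a
  exact ha _ (mem_range_self b) (hgs hb)

end coding

/-! ### Ordered continua -/

section continua

variable {X : Type u} [LinearOrder X] [BoundedOrder X]

/-- The complete linear order structure on a bounded linear order with all infima. -/
@[reducible] noncomputable def Cpl.toComplete [Cpl X] : CompleteLinearOrder X :=
  { ‹LinearOrder X›, ‹BoundedOrder X›, LinearOrder.toBiheytingAlgebra X with
    sSup := fun s => (Cpl.lub s).choose
    sInf := fun s => (Cpl.glb s).choose
    isLUB_sSup := fun s => (Cpl.lub s).choose_spec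
    isGLB_sInf := fun s => (Cpl.glb s).choose_spec }

theorem isContinuum_of_order [Cpl X] [DenselyOrdered X] [Nontrivial X] [TopologicalSpace X]
    [OrderTopology X] : IsContinuum X := by
  let _ := Cpl.toComplete (X := X)
  exact ⟨inferInstance, { toNonempty := ⟨⊥⟩, toPreconnectedSpace := inferInstance },
    inferInstance, inferInstance⟩

/-- Embeddings of ordered continua are monotone or antitone maps onto intervals. -/
theorem embedding_order {Y : Type u} [LinearOrder Y] [Cpl X] [DenselyOrdered X] [Nontrivial X]
    [TopologicalSpace X] [OrderTopology X] [TopologicalSpace Y] [OrderTopology Y] {f : X → Y}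
    (hf : IsEmbedding f) : (StrictMono f ∨ StrictAnti f) ∧ (range f).OrdConnected := by
  let _ := Cpl.toComplete (X := X)
  exact ⟨Continuous.strictMono_of_inj hf.continuous hf.injective,
    (isPreconnected_range hf.continuous).ordConnected⟩

end continua

section seed

variable {K : Type u} [LinearOrder K] [TopologicalSpace K] [OrderTopology K]

/-- The bounds of a compact linear order. -/
@[reducible] noncomputable def boundedOrder_of_compact (K : Type u) [LinearOrder K]
    [TopologicalSpace K] [OrderTopology K] [CompactSpace K] [Nonempty K] : BoundedOrder K where
  top := (isCompact_univ.exists_isGreatest (univ_nonempty (α := K))).choose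
  bot := (isCompact_univ.exists_isLeast (univ_nonempty (α := K))).choose
  le_top _ := (isCompact_univ.exists_isGreatest (univ_nonempty (α := K))).choose_spec.2 trivial
  bot_le _ := (isCompact_univ.exists_isLeast (univ_nonempty (α := K))).choose_spec.2 trivial

theorem cpl_of_compact [CompactSpace K] [Nonempty K] : Cpl K := by
  refine ⟨fun s => ?_⟩
  rcases s.eq_empty_or_nonempty with rfl | hs
  · obtain ⟨a, -, ha⟩ := isCompact_univ.exists_isGreatest (univ_nonempty (α := K))
    exact ⟨a, by simp, fun b _ => ha trivial⟩
  · obtain ⟨a, -, ha⟩ := isClosed_closure.isCompact.exists_isGLB hs.closure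
    exact ⟨a, by rwa [IsGLB, lowerBounds_closure] at ha⟩

theorem denselyOrdered_of_connected [PreconnectedSpace K] : DenselyOrdered K := by
  refine ⟨fun a b hab => ?_⟩
  by_contra! H
  have h1 : Iic a = Iio b := by
    ext x
    exact ⟨fun hx => lt_of_le_of_lt hx hab, fun hx => not_lt.1 fun hax => (H x hax).not_gt hx⟩
  have h2 : IsClopen (Iic a) := ⟨isClosed_Iic, h1 ▸ isOpen_Iio⟩
  have h3 := h2.eq_univ ⟨a, le_rfl⟩
  have h4 : b ∈ Iic a := h3 ▸ mem_univ b
  exact hab.not_ge h4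

theorem exists_base (X : Type u) [TopologicalSpace X] (x : X) : ∃ B : Set (Set X),
    (∀ V ∈ B, V ∈ 𝓝 x) ∧ (∀ V ∈ 𝓝 x, ∃ W ∈ B, W ⊆ V) ∧ #B ≤ charac X := by
  obtain ⟨B, h1, h2, h3⟩ := csInf_mem (s := {c : Cardinal.{u} | ∃ B : Set (Set X),
    (∀ V ∈ B, V ∈ 𝓝 x) ∧ (∀ V ∈ 𝓝 x, ∃ W ∈ B, W ⊆ V) ∧ #B = c})
    ⟨_, {V | V ∈ 𝓝 x}, fun _ h => h, fun V h => ⟨V, h, subset_rfl⟩, rfl⟩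
  refine ⟨B, h1, h2, h3.trans_le ?_⟩
  exact le_ciSup (f := fun x : X => sInf {c : Cardinal.{u} | ∃ B : Set (Set X),
    (∀ V ∈ B, V ∈ 𝓝 x) ∧ (∀ V ∈ 𝓝 x, ∃ W ∈ B, W ⊆ V) ∧ #B = c}) bddAbove_of_small x

theorem not_lPt_of_base {c : Cardinal.{u}} {k : K} {B : Set (Set K)} (h1 : ∀ V ∈ B, V ∈ 𝓝 k)
    (h2 : ∀ V ∈ 𝓝 k, ∃ W ∈ B, W ⊆ V) (h3 : #B ≤ c) : ¬ LPt c k := by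
  intro h
  choose a ha ha' using fun V : B => exists_Ioc_subset_of_mem_nhds (h1 V V.2) h.exists_lt
  obtain ⟨b, hb, hab⟩ := h (range a) (by rintro _ ⟨V, rfl⟩; exact ha V) (mk_range_le.trans h3)
  obtain ⟨W, hW, hWb⟩ := h2 (Ioi b) (Ioi_mem_nhds hb)
  exact lt_irrefl b (hWb (ha' ⟨W, hW⟩ ⟨hab _ (mem_range_self _), hb.le⟩))

theorem not_lPt_charac (k : K) : ¬ LPt (charac K) k := by
  obtain ⟨B, h1, h2, h3⟩ := exists_base K k
  exact not_lPt_of_base h1 h2 h3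

theorem not_rPt_charac (k : K) : ¬ RPt (charac K) k := by
  obtain ⟨B, h1, h2, h3⟩ := exists_base K k
  exact not_lPt_of_base (K := Kᵒᵈ) h1 h2 h3

theorem aleph0_le_charac [ConnectedSpace K] [Nontrivial K] : ℵ₀ ≤ charac K := by
  by_contra! hlt
  obtain ⟨k⟩ : Nonempty K := inferInstance
  obtain ⟨B, h1, h2, h3⟩ := exists_base K k
  have hfin : B.Finite := lt_aleph0_iff_set_finite.1 (h3.trans_lt hlt)
  have h4 : ⋂₀ B ∈ 𝓝 k := (Filter.sInter_mem hfin).2 h1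
  have h5 : ⋂₀ B ⊆ {k} := by
    intro y hy
    by_contra hne
    obtain ⟨W, hW, hW'⟩ := h2 {y}ᶜ (isOpen_compl_singleton.mem_nhds fun h => hne h.symm)
    exact hW' (hy W hW) rfl
  have h6 : IsClopen ({k} : Set K) :=
    ⟨isClosed_singleton, isOpen_singleton_iff_nhds_eq_pure k |>.2
      (le_antisymm (Filter.le_pure_iff.2 (Filter.mem_of_superset h4 h5)) (pure_le_nhds k))⟩
  obtain ⟨y, hy⟩ := exists_ne k
  have : y ∈ ({k} : Set K) := h6.eq_univ ⟨k, rfl⟩ ▸ mem_univ y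
  exact hy this

/-- The family for a seed whose order is given. -/
theorem exists_family (κ : Cardinal.{u}) (hκ : ℵ₀ ≤ κ) (K : Type u) [LinearOrder K]
    [TopologicalSpace K] [OrderTopology K] [CompactSpace K] [ConnectedSpace K] [Nontrivial K]
    (hχ : charac K < wt K) (hw : wt K ≤ κ) :
    ∃ (ι : Type u) (X : ι → TopCat.{u}),
      #ι = 2 ^ κ ∧
      IncompFamily X ∧
      (∀ i, IsContinuum ↥(X i) ∧ IsLOTS ↥(X i) ∧
        wt ↥(X i) = κ ∧ hatWt ↥(X i) = hatWt K ∧ #↥(X i) = max κ #K) ∧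
      ((IsBalanced K ∧ wt K = κ) → ∀ i, IsBalanced ↥(X i)) := by
  let _ : BoundedOrder K := boundedOrder_of_compact K
  have : Cpl K := cpl_of_compact
  have : DenselyOrdered K := denselyOrdered_of_connected
  set c := charac K with hc_def
  have hc : ℵ₀ ≤ c := aleph0_le_charac
  have hc1 : 1 ≤ c := one_le_aleph0.trans hc
  have hsucc : Order.succ c ≤ κ := (Order.succ_le_of_lt hχ).trans hw
  let A : Type u := Cat (W := Idx (Order.succ c)) (fun _ => K)
  have hm : Marked (A := A) c (Cat.bt (W := Idx (Order.succ c)) (fun _ => K) ⊤) :=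
    marked_cat hc not_lPt_charac not_rPt_charac
  have hKD : HasD κ K := hasD_wt.mono hw
  have hIc : #(Idx (Order.succ c)) ≤ κ := by
    rw [mk_idx (hc.trans (Order.le_succ c))]
    exact hsucc
  have hAD : HasD κ A := Cat.hasD hκ hIc fun _ => hKD
  have hAcov : Cov K A := Cat.cov fun _ => Cov.self
  have hmax : ℵ₀ ≤ max κ #K := hκ.trans (le_max_left _ _)
  have hAcard : #A ≤ max κ #K :=
    Cat.card_le hmax (hIc.trans (le_max_left _ _)) fun _ => le_max_right _ _
  have hW : #(Idx κ ×ₗ Bool) = κ := by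
    change #(Idx κ × Bool) = κ
    rw [mk_prod, mk_idx hκ]
    simp only [lift_uzero, mk_bool, lift_ofNat]
    exact Cardinal.mul_eq_left hκ ((natCast_lt_aleph0 (n := 2)).le.trans hκ) two_ne_zero
  let Y : Set κ.ord.ToType → Type u := fun s => Word A (code s)
  let top : ∀ s, TopologicalSpace (Y s) := fun s => Preorder.topology _
  have htop : ∀ s, OrderTopology (Y s) := fun s => ⟨rfl⟩
  have hcov : ∀ s, Cov K (Y s) := fun s => Cat.cov fun w => Letter.cov hAcov _
  have hwt : ∀ s, wt (Y s) = κ := fun s => le_antisymm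
    (wt_le_of_hasD hκ (Cat.hasD hκ hW.le fun w => Letter.hasD hAD _))
    (hW.symm.le.trans Cat.le_wt)
  have hcard : ∀ s, #(Y s) = max κ #K := fun s => le_antisymm
    (Cat.card_le hmax (hW.le.trans (le_max_left _ _)) fun w => (Letter.card _).trans_le hAcard)
    (max_le (hW.symm.le.trans Cat.le_card) (hcov s).card_le)
  refine ⟨Set κ.ord.ToType, fun s => TopCat.of (Y s), ?_, ?_, fun s => ⟨?_, ?_, hwt s,
    (hcov s).hatWt_eq, hcard s⟩, fun ⟨hb, hwK⟩ s => ?_⟩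
  · rw [mk_set, mk_ord_toType]
  · intro s t hst f hf
    obtain ⟨h1, h2⟩ := embedding_order (X := Y s) (Y := Y t) hf
    rcases h1 with h1 | h1
    · exact hst (code_mono hm hc1 h1 h2)
    · exact code_anti hm hκ hc1 h1 h2
  · exact isContinuum_of_order (X := Y s)
  · exact ⟨inferInstanceAs (LinearOrder (Y s)), htop s⟩
  · refine (hcov s).isBalanced hb ((hwt s).trans hwK.symm) ?_
    have hinf : Infinite K :=
      infinite_univ_iff.1 ((Ioo_infinite (bot_lt_top (α := K))).mono (subset_univ _))
    have h1 : κ ≤ #K := hwK ▸ wt_le_of_hasD (aleph0_le_mk K) HasD.univ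
    rw [hcard s, max_eq_right h1]

end seed

end OrdCont

/-- If `K` is a linearly ordered continuum with `χ(K) < w(K) ≤ κ` then there exist `2 ^ κ`
incomparable linearly ordered continua `X` with `w(X) = κ`, `ŵ(X) = ŵ(K)` and
`|X| = max {κ, |K|}`, which are moreover balanced if `K` is balanced with `w(K) = κ`. -/
theorem incomparable_ordered_continua_from_seed
    (κ : Cardinal.{u}) (hκ : ℵ₀ ≤ κ) (K : TopCat.{u})
    (hKc : IsContinuum ↥K) (hKo : IsLOTS ↥K)
    (hχ : charac ↥K < wt ↥K) (hw : wt ↥K ≤ κ) :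
    ∃ (ι : Type u) (X : ι → TopCat.{u}),
      #ι = 2 ^ κ ∧
      IncompFamily X ∧
      (∀ i, IsContinuum ↥(X i) ∧ IsLOTS ↥(X i) ∧
        wt ↥(X i) = κ ∧ hatWt ↥(X i) = hatWt ↥K ∧ #↥(X i) = max κ #↥K) ∧
      ((IsBalanced ↥K ∧ wt ↥K = κ) → ∀ i, IsBalanced ↥(X i)) := by
  obtain ⟨l, hl⟩ := hKo
  obtain ⟨h1, h2, -, h4⟩ := hKc
  exact OrdCont.exists_family κ hκ K hχ hw
end

section
/- If X is a first countable linearly ordered continuum, then every path component of X is a compact subspace of X, and every path component is either a singleton or homeomorphic to the Euclidean unit interval [0,1]. -/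
/-!
Fix a linear order inducing the topology of `X`; it is dense because `X` is connected. Let `P` be
the path component of `x` and `K` its closure. As a compact connected set, `K` is an interval
`[a, b]`.

The main point is that `K` is separable. By first countability there are sequences in `P`
converging to `a` and to `b`. Any point of `P` other than `a`, `b` lies between `x` and some term
of these sequences, hence, by connectedness of the unit interval, on a path from `x` to that term.
So `P` is covered by `{a, b}` and countably many path images, each of them separable.

When `a < b`, Cantor's back-and-forth theorem identifies a countable dense subset of `[a, b]`
(without endpoints) with one of `I`, and the identification extends by suprema to an order
isomorphism `[a, b] ≃ I`. Hence `K` is a path connected set containing `x`, so `K = P`. When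
`a = b`, `P` is a singleton.
-/

universe u

open Cardinal Topology unitInterval

open Set TopologicalSpace

/-- A dense subset of a dense linear order that avoids the endpoints is, as an order, a dense
linear order without endpoints, so that Cantor's theorem applies to it. -/
theorem dense_subset_order {γ : Type*} [LinearOrder γ] [TopologicalSpace γ] [OrderTopology γ]
    [DenselyOrdered γ] {v : Set γ} (hv : Dense v) (hb : ∀ x, IsBot x → x ∉ v)
    (ht : ∀ x, IsTop x → x ∉ v) : DenselyOrdered v ∧ NoMinOrder v ∧ NoMaxOrder v := by
  refine ⟨⟨fun a b hab => ?_⟩, ⟨fun a => ?_⟩, ⟨fun a => ?_⟩⟩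
  · obtain ⟨c, hc, hac, hcb⟩ := hv.exists_between (show (a : γ) < b from hab)
    exact ⟨⟨c, hc⟩, hac, hcb⟩
  · have : ¬ IsBot (a : γ) := fun h => hb _ h a.2
    simp only [IsBot, not_forall, not_le] at this
    obtain ⟨y, hy⟩ := this
    obtain ⟨c, hc, -, hca⟩ := hv.exists_between hy
    exact ⟨⟨c, hc⟩, hca⟩
  · have : ¬ IsTop (a : γ) := fun h => ht _ h a.2
    simp only [IsTop, not_forall, not_le] at this
    obtain ⟨y, hy⟩ := this
    obtain ⟨c, hc, hac, -⟩ := hv.exists_between hy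
    exact ⟨⟨c, hc⟩, hac⟩

/-- A separable compact dense linear order is homeomorphic to any separable complete dense
linear order. The map sends `t` to the supremum of the images, under Cantor's isomorphism of
countable dense subsets, of the points `≤ t`. -/
theorem homeomorph_of_separable_ordered {α β : Type*}
    [LinearOrder α] [TopologicalSpace α] [OrderTopology α] [DenselyOrdered α] [CompactSpace α]
    [SeparableSpace α] [Nontrivial α]
    [CompleteLinearOrder β] [TopologicalSpace β] [OrderTopology β] [DenselyOrdered β]
    [SeparableSpace β] [Nontrivial β] : Nonempty (α ≃ₜ β) := by
  obtain ⟨s, hsc, hsd, hsb, hst⟩ := exists_countable_dense_no_bot_top α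
  obtain ⟨u, huc, hud, hub, hut⟩ := exists_countable_dense_no_bot_top β
  obtain ⟨_, _, _⟩ := dense_subset_order hsd hsb hst
  obtain ⟨_, _, _⟩ := dense_subset_order hud hub hut
  have := hsc.to_subtype
  have := huc.to_subtype
  have := hsd.nonempty.to_subtype
  have := hud.nonempty.to_subtype
  obtain ⟨e⟩ := Order.iso_of_countable_dense s u
  let f : α → β := fun t => ⨆ d : {d : s // (d : α) ≤ t}, (e d.1 : β)
  have hle : ∀ (d : s) (t : α), (d : α) ≤ t → (e d : β) ≤ f t := fun d t h =>
    le_iSup (fun d : {d : s // (d : α) ≤ t} => (e d.1 : β)) ⟨d, h⟩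
  have hge : ∀ (d : s) (t : α), t ≤ d → f t ≤ e d := fun d t h =>
    iSup_le fun d' => e.monotone (show (d'.1 : α) ≤ d from d'.2.trans h)
  have hmono : StrictMono f := by
    intro a b hab
    obtain ⟨c, hc, hac, hcb⟩ := hsd.exists_between hab
    obtain ⟨d, hd, hcd, hdb⟩ := hsd.exists_between hcb
    calc f a ≤ e ⟨c, hc⟩ := hge ⟨c, hc⟩ a hac.le
      _ < e ⟨d, hd⟩ := e.strictMono (show (⟨c, hc⟩ : s) < ⟨d, hd⟩ from hcd)
      _ ≤ f b := hle ⟨d, hd⟩ b hdb.le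
  have hdr : DenseRange f := by
    refine hud.mono fun y hy => ?_
    refine ⟨e.symm ⟨y, hy⟩, le_antisymm ?_ ?_⟩
    · simpa using hge (e.symm ⟨y, hy⟩) _ le_rfl
    · simpa using hle (e.symm ⟨y, hy⟩) _ le_rfl
  have hcont : Continuous f := hmono.monotone.continuous_of_denseRange hdr
  have hsurj : Function.Surjective f := by
    rw [← range_eq_univ, ← (isCompact_range hcont).isClosed.closure_eq]
    exact hdr.closure_eq
  exact ⟨(hmono.orderIsoOfSurjective f hsurj).toHomeomorph⟩

/-- In a dense linear order, an interval contained in the closure of a countable set is a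
separable space (in a general topological space, `IsSeparable` does not pass to the subtype). -/
theorem separableSpace_Icc {X : Type*} [LinearOrder X] [TopologicalSpace X] [OrderTopology X]
    [DenselyOrdered X] {a b : X} (hab : a < b) (h : IsSeparable (Icc a b)) :
    SeparableSpace (Icc a b) := by
  obtain ⟨c, hc, hcl⟩ := h
  have : Nontrivial (Icc a b) :=
    ⟨⟨⟨a, le_rfl, hab.le⟩, ⟨b, hab.le, le_rfl⟩, fun h => hab.ne (congrArg Subtype.val h)⟩⟩
  refine ⟨Subtype.val ⁻¹' c, hc.preimage Subtype.val_injective, dense_of_exists_between ?_⟩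
  rintro ⟨p, hp⟩ ⟨q, hq⟩ hpq
  obtain ⟨r, hpr, hrq⟩ := exists_between (show p < q from hpq)
  obtain ⟨y, ⟨hpy, hyq⟩, hyc⟩ :=
    mem_closure_iff.1 (hcl ⟨hp.1.trans hpr.le, hrq.le.trans hq.2⟩) _ isOpen_Ioo ⟨hpr, hrq⟩
  exact ⟨⟨y, hp.1.trans hpy.le, hyq.le.trans hq.2⟩, hyc, hpy, hyq⟩

/-- The path component is covered by the endpoints of its closure together with paths from `x` to
the terms of two sequences converging to these endpoints. -/
theorem isSeparable_pathComponent {X : Type*} [LinearOrder X] [TopologicalSpace X]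
    [OrderTopology X] [FirstCountableTopology X] {x a b : X}
    (ha : IsLeast (closure (pathComponent x)) a) (hb : IsGreatest (closure (pathComponent x)) b) :
    IsSeparable (pathComponent x) := by
  obtain ⟨v, hv, hva⟩ := mem_closure_iff_seq_limit.1 ha.1
  obtain ⟨w, hw, hwb⟩ := mem_closure_iff_seq_limit.1 hb.1
  have between : ∀ {y : X} (γ : Path x y), uIcc x y ⊆ range γ := fun {y} γ =>
    (isPreconnected_range γ.continuous).ordConnected.uIcc_subset
      ⟨0, γ.source⟩ ⟨1, γ.target⟩
  have key : pathComponent x ⊆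
      ((⋃ n, range (hv n).somePath) ∪ ⋃ n, range (hw n).somePath) ∪ {a, b} := by
    intro y hy
    have hay : a ≤ y := ha.2 (subset_closure hy)
    have hyb : y ≤ b := hb.2 (subset_closure hy)
    rcases hay.eq_or_lt with rfl | hay
    · simp
    rcases hyb.eq_or_lt with rfl | hyb
    · simp
    left
    rcases le_total x y with hxy | hyx
    · obtain ⟨n, hn⟩ := (hwb.eventually (lt_mem_nhds hyb)).exists
      exact .inr (mem_iUnion.2 ⟨n, between _ (Icc_subset_uIcc ⟨hxy, hn.le⟩)⟩)
    · obtain ⟨n, hn⟩ := (hva.eventually (gt_mem_nhds hay)).exists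
      exact .inl (mem_iUnion.2 ⟨n, between _ (Icc_subset_uIcc' ⟨hn.le, hyx⟩)⟩)
  refine IsSeparable.mono ?_ key
  refine .union (.union (.iUnion fun n => ?_) (.iUnion fun n => ?_)) ?_
  · exact isSeparable_range (Path.continuous _)
  · exact isSeparable_range (Path.continuous _)
  · exact (Set.toFinite {a, b}).countable.isSeparable

/-- In a first countable linearly ordered continuum every path component is compact, and it
is either a singleton or homeomorphic to the Euclidean unit interval. -/
theorem pathComponent_of_first_countable_ordered_continuum
    (X : Type u) [TopologicalSpace X] [FirstCountableTopology X]
    (hc : IsContinuum X) (ho : IsLOTS X) (x : X) :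
    IsCompact (pathComponent x) ∧
      (pathComponent x = {x} ∨ Nonempty (↥(pathComponent x) ≃ₜ I)) := by
  obtain ⟨_, _, _, _⟩ := hc
  obtain ⟨l, _⟩ := ho
  have : DenselyOrdered X := denselyOrdered_of_preconnectedSpace
  have hxP : x ∈ pathComponent x := mem_pathComponent_self x
  have hxK : x ∈ closure (pathComponent x) := subset_closure hxP
  have hK : IsCompact (closure (pathComponent x)) := isClosed_closure.isCompact
  obtain ⟨a, ha⟩ := hK.exists_isLeast ⟨x, hxK⟩
  obtain ⟨b, hb⟩ := hK.exists_isGreatest ⟨x, hxK⟩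
  have hIcc : closure (pathComponent x) = Icc a b :=
    Subset.antisymm (fun y hy => ⟨ha.2 hy, hb.2 hy⟩)
      (isPathConnected_pathComponent.isConnected.isPreconnected.closure.ordConnected.out ha.1 hb.1)
  rcases (ha.2 hb.1).eq_or_lt with rfl | hab
  · have hP : pathComponent x = {x} := by
      rw [Icc_self] at hIcc
      have hxa : x = a := by simpa [hIcc] using hxK
      refine Subset.antisymm (fun y hy => ?_) (singleton_subset_iff.2 hxP)
      have hya : y ∈ closure (pathComponent x) := subset_closure hy
      rw [hIcc] at hya
      rw [hxa]
      exact hya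
    exact ⟨hP ▸ isCompact_singleton, .inl hP⟩
  · have hsep : IsSeparable (Icc a b) := hIcc ▸ (isSeparable_pathComponent ha hb).closure
    have := separableSpace_Icc hab hsep
    have : Nontrivial (Icc a b) :=
      ⟨⟨⟨a, le_rfl, hab.le⟩, ⟨b, hab.le, le_rfl⟩, fun h => hab.ne (congrArg Subtype.val h)⟩⟩
    have : CompactSpace (Icc a b) := isCompact_iff_compactSpace.1 (hIcc ▸ hK)
    have : PathConnectedSpace I := isPathConnected_iff_pathConnectedSpace.1
      ((convex_Icc (0 : ℝ) 1).isPathConnected (nonempty_Icc.2 zero_le_one))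
    obtain ⟨φ⟩ : Nonempty (Icc a b ≃ₜ I) := homeomorph_of_separable_ordered
    have hpc : IsPathConnected (Icc a b) := by
      rw [isPathConnected_iff_pathConnectedSpace]
      exact φ.symm.surjective.pathConnectedSpace φ.symm.continuous
    have hP : pathComponent x = Icc a b :=
      Subset.antisymm (hIcc ▸ subset_closure) (hpc.subset_pathComponent (hIcc ▸ hxK))
    rw [hP]
    exact ⟨hIcc ▸ hK, .inr ⟨φ⟩⟩
end

section
/- There exists a family 𝓗 of countable subsets of the open interval (0,1), each with infimum 0 and supremum 1, such that |𝓗| = 𝔠 and, whenever H₁, H₂ ∈ 𝓗 are distinct and F is a finite set, there is no strictly monotone (increasing or decreasing) bijection from H₁ onto H₂ \ F. -/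
/-!
Call two points of a set `H` in a linear order equivalent when only finitely many points of `H`
lie between them; the classes are the *condensation blocks* of `H`. For `m ≥ 1`, the property
"infinitely many points of `H` lie in a block with exactly `m` elements" is preserved

* by strictly increasing and by strictly decreasing maps (`infinite_blockPoints_image`), and
* by deleting finitely many points, since the block of a point in `H \ F` is its block in `H`
  minus `F`, and only finitely many points lie in a finite block that meets `F`
  (`infinite_blockPoints_diff`).

For `S ⊆ ℕ`, replace every rational `q` by a finite chain of length `chainLength S q`, where
`chainLength S` takes each value `n + 2` with `n ∈ S` infinitely often, and otherwise takes only
the value `1`. By density of `ℚ` the blocks of the resulting order are exactly these chains, so the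
property above recovers `S` (`infinite_blockPoints_chains`). All these orders lie in the
lexicographic product `ℚ ×ₗ ℚ`, which by Cantor's theorem is isomorphic to the rationals of `(0, 1)`.
-/

/-! ### Condensation blocks and their invariance -/

section Blocks

variable {α β : Type*} [LinearOrder α] [LinearOrder β]

/-- The condensation block of `x` in `H`: the points of `H` separated from `x` by only finitely many
points of `H`. -/
def block (H : Set α) (x : α) : Set α := {y ∈ H | (Set.uIcc x y ∩ H).Finite}

/-- The points of `H` whose block has exactly `m` elements. As `Set.ncard` is `0` on infinite sets,
this reading is correct only for `m ≠ 0`. -/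
def blockPoints (H : Set α) (m : ℕ) : Set α := {x ∈ H | (block H x).ncard = m}

theorem mem_block_self {H : Set α} {x : α} (hx : x ∈ H) : x ∈ block H x :=
  ⟨hx, by simpa using (Set.finite_singleton x).inter_of_left H⟩

theorem image_uIcc_inter {e : α → β} (he : StrictMono e ∨ StrictAnti e) (H : Set α) (x y : α) :
    Set.uIcc (e x) (e y) ∩ e '' H = e '' (Set.uIcc x y ∩ H) := by
  ext b
  simp only [Set.mem_inter_iff, Set.mem_image, Set.mem_uIcc]
  constructor
  · rintro ⟨hb, a, ha, rfl⟩
    refine ⟨a, ⟨?_, ha⟩, rfl⟩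
    rcases he with he | he
    · simpa only [he.le_iff_le] using hb
    · simp only [he.le_iff_ge] at hb
      tauto
  · rintro ⟨a, ⟨hb, ha⟩, rfl⟩
    refine ⟨?_, a, ha, rfl⟩
    rcases he with he | he
    · simpa only [he.le_iff_le] using hb
    · simp only [he.le_iff_ge]
      tauto

theorem infinite_blockPoints_image {e : α → β} (he : StrictMono e ∨ StrictAnti e) (H : Set α)
    (m : ℕ) : (blockPoints (e '' H) m).Infinite ↔ (blockPoints H m).Infinite := by
  have hinj : Function.Injective e := he.elim StrictMono.injective StrictAnti.injective
  have hblock (x : α) : block (e '' H) (e x) = e '' block H x := by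
    ext b
    constructor
    · rintro ⟨⟨y, hy, rfl⟩, hfin⟩
      rw [image_uIcc_inter he, Set.finite_image_iff hinj.injOn] at hfin
      exact ⟨y, ⟨hy, hfin⟩, rfl⟩
    · rintro ⟨y, ⟨hy, hfin⟩, rfl⟩
      refine ⟨⟨y, hy, rfl⟩, ?_⟩
      rw [image_uIcc_inter he]
      exact hfin.image e
  have himage : blockPoints (e '' H) m = e '' blockPoints H m := by
    ext b
    constructor
    · rintro ⟨⟨y, hy, rfl⟩, hm⟩
      rw [hblock, Set.ncard_image_of_injective _ hinj] at hm
      exact ⟨y, ⟨hy, hm⟩, rfl⟩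
    · rintro ⟨y, ⟨hy, hm⟩, rfl⟩
      refine ⟨⟨y, hy, rfl⟩, ?_⟩
      rw [hblock, Set.ncard_image_of_injective _ hinj, hm]
  rw [himage, Set.infinite_image_iff hinj.injOn]

/-- All points with a finite block containing `a` lie in one common block. -/
theorem finite_setOf_mem_block (H : Set α) (a : α) :
    {x ∈ H | a ∈ block H x ∧ (block H x).Finite}.Finite := by
  rcases Set.eq_empty_or_nonempty {x ∈ H | a ∈ block H x ∧ (block H x).Finite} with h | ⟨z, hz⟩
  · rw [h]
    exact Set.finite_empty
  · refine hz.2.2.subset ?_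
    rintro x ⟨hx, hax, -⟩
    refine ⟨hx, (hz.2.1.2.union hax.2).subset ?_⟩
    rintro w ⟨hw, hwH⟩
    rcases Set.uIcc_subset_uIcc_union_uIcc (b := a) hw with h | h
    · exact Or.inl ⟨h, hwH⟩
    · exact Or.inr ⟨by rwa [Set.uIcc_comm], hwH⟩

theorem block_diff (H : Set α) {F : Set α} (hF : F.Finite) (x : α) :
    block (H \ F) x = block H x \ F := by
  have hfin (y : α) : (Set.uIcc x y ∩ (H \ F)).Finite ↔ (Set.uIcc x y ∩ H).Finite := by
    rw [← Set.inter_sdiff_assoc]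
    exact ⟨fun h => h.of_sdiff hF, fun h => h.subset Set.sdiff_subset⟩
  ext y
  simp only [block, Set.mem_ofPred_eq, Set.mem_sdiff, hfin]
  tauto

theorem infinite_blockPoints_diff (H : Set α) {F : Set α} (hF : F.Finite) {m : ℕ} (hm : m ≠ 0) :
    (blockPoints (H \ F) m).Infinite ↔ (blockPoints H m).Infinite := by
  -- The two sets agree outside the finite set `E` of points whose finite block meets `F`.
  let E : Set α := ⋃ a ∈ F, {x ∈ H | a ∈ block H x ∧ (block H x).Finite}
  have hE : E.Finite := hF.biUnion fun a _ => finite_setOf_mem_block H a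
  have hmemE {x : α} (hx : x ∈ H) (hfin : (block H x).Finite) (hmeet : ¬ Disjoint (block H x) F) :
      x ∈ E := by
    obtain ⟨a, hab, haF⟩ := Set.not_disjoint_iff.1 hmeet
    exact Set.mem_biUnion haF ⟨hx, hab, hfin⟩
  have h₁ : blockPoints H m ⊆ blockPoints (H \ F) m ∪ E := by
    rintro x ⟨hx, hxm⟩
    by_cases hd : Disjoint (block H x) F
    · refine Or.inl ⟨⟨hx, hd.notMem_of_mem_left (mem_block_self hx)⟩, ?_⟩
      rw [block_diff H hF, hd.sdiff_eq_left, hxm]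
    · exact Or.inr (hmemE hx (Set.finite_of_ncard_ne_zero (hxm ▸ hm)) hd)
  have h₂ : blockPoints (H \ F) m ⊆ blockPoints H m ∪ E := by
    rintro x ⟨hx, hxm⟩
    rw [block_diff H hF] at hxm
    by_cases hd : Disjoint (block H x) F
    · rw [hd.sdiff_eq_left] at hxm
      exact Or.inl ⟨hx.1, hxm⟩
    · exact Or.inr (hmemE hx.1 ((Set.finite_of_ncard_ne_zero (hxm ▸ hm)).of_sdiff hF) hd)
  exact ⟨fun h hfin => h ((hfin.union hE).subset h₂), fun h hfin => h ((hfin.union hE).subset h₁)⟩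

end Blocks

/-! ### Orders with prescribed block sizes -/

/-- An enumeration of `ℚ` by pairs: the first component chooses a chain length, the second makes
each choice occur infinitely often. -/
noncomputable def ratEquivPair : ℚ ≃ ℕ × ℕ :=
  Classical.choice (inferInstance : Nonempty (ℚ ≃ ℕ × ℕ))

open Classical in
/-- The length of the chain that replaces `q`: it is `n + 2` if the index `n` of `q` lies in `S`,
and `1` otherwise. -/
noncomputable def chainLength (S : Set ℕ) (q : ℚ) : ℕ :=
  if (ratEquivPair q).1 ∈ S then (ratEquivPair q).1 + 2 else 1

theorem chainLength_pos (S : Set ℕ) (q : ℚ) : 0 < chainLength S q := by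
  unfold chainLength
  split_ifs <;> omega

/-- The order obtained from `ℚ` by replacing each `q` by `chainLength S q` points, realized as
`(q, 0), (q, 1), …` in the lexicographic product. -/
def chains (S : Set ℕ) : Set (ℚ ×ₗ ℚ) :=
  {x | ∃ (q : ℚ) (k : ℕ), k < chainLength S q ∧ toLex (q, (k : ℚ)) = x}

/-- Infinitely many chains lie strictly between two different chains. -/
theorem infinite_Icc_inter_chains (S : Set ℕ) {q r : ℚ} (h : q < r) (s t : ℚ) :
    (Set.Icc (toLex (q, s)) (toLex (r, t)) ∩ chains S).Infinite := by
  have hinj : Function.Injective (fun p : ℚ => (toLex (p, (0 : ℚ)) : ℚ ×ₗ ℚ)) := by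
    intro a b hab
    simpa using hab
  refine ((Set.Ioo_infinite h).image hinj.injOn).mono ?_
  rintro _ ⟨p, hp, rfl⟩
  refine ⟨⟨?_, ?_⟩, p, 0, chainLength_pos S p, by simp⟩
  · exact Prod.Lex.toLex_le_toLex.2 (Or.inl hp.1)
  · exact Prod.Lex.toLex_le_toLex.2 (Or.inl hp.2)

theorem block_chains (S : Set ℕ) (q s : ℚ) :
    block (chains S) (toLex (q, s)) =
      (fun k : ℕ => (toLex (q, (k : ℚ)) : ℚ ×ₗ ℚ)) '' Set.Iio (chainLength S q) := by
  ext y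
  constructor
  · rintro ⟨⟨r, k, hk, rfl⟩, hfin⟩
    rcases lt_trichotomy q r with h | rfl | h
    · refine absurd (hfin.subset ?_) (infinite_Icc_inter_chains S h s k)
      exact Set.inter_subset_inter_left _ Set.Icc_subset_uIcc
    · exact ⟨k, hk, rfl⟩
    · refine absurd (hfin.subset ?_) (infinite_Icc_inter_chains S h k s)
      exact Set.inter_subset_inter_left _ Set.Icc_subset_uIcc'
  · rintro ⟨k, hk, rfl⟩
    refine ⟨⟨q, k, hk, rfl⟩, ?_⟩
    refine ((Set.finite_Iio (chainLength S q)).image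
      (fun k : ℕ => (toLex (q, (k : ℚ)) : ℚ ×ₗ ℚ))).subset ?_
    rintro _ ⟨hw, r, l, hl, rfl⟩
    have hrq : r = q := by
      rw [Set.mem_uIcc] at hw
      simp only [Prod.Lex.toLex_le_toLex] at hw
      grind
    subst hrq
    exact ⟨l, hl, rfl⟩

theorem infinite_blockPoints_chains (S : Set ℕ) (n : ℕ) :
    (blockPoints (chains S) (n + 2)).Infinite ↔ n ∈ S := by
  have hcard (q s : ℚ) : (block (chains S) (toLex (q, s))).ncard = chainLength S q := by
    rw [block_chains, Set.ncard_image_of_injective, ← Finset.coe_Iio, Set.ncard_coe_finset,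
      Nat.card_Iio]
    intro a b hab
    simpa using hab
  constructor
  · intro h
    obtain ⟨_, ⟨q, k, hk, rfl⟩, hq⟩ := h.nonempty
    rw [hcard, chainLength] at hq
    split_ifs at hq with hS
    · have : (ratEquivPair q).1 = n := by omega
      exact this ▸ hS
    · omega
  · intro hn
    refine Set.infinite_of_injective_forall_mem
      (f := fun m : ℕ => (toLex (ratEquivPair.symm (n, m), ((0 : ℕ) : ℚ)) : ℚ ×ₗ ℚ)) ?_ ?_
    · intro a b hab
      simpa using hab
    · intro m
      refine ⟨⟨_, 0, chainLength_pos S _, rfl⟩, ?_⟩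
      rw [hcard]
      simp [chainLength, hn]

/-! ### Realization in the unit interval -/

/-- Cantor's isomorphism theorem for `ℚ ×ₗ ℚ` and the rationals of `(0, 1)`. -/
noncomputable def lexIsoUnit : (ℚ ×ₗ ℚ) ≃o Set.Ioo (0 : ℚ) 1 :=
  haveI : Nonempty (Set.Ioo (0 : ℚ) 1) := ⟨⟨1 / 2, by norm_num⟩⟩
  haveI : Countable (ℚ ×ₗ ℚ) := inferInstanceAs (Countable (ℚ × ℚ))
  Classical.choice (Order.iso_of_countable_dense _ _)

/-- The embedding of `ℚ ×ₗ ℚ` onto the rationals of the real interval `(0, 1)`. -/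
noncomputable def lexToReal (x : ℚ ×ₗ ℚ) : ℝ := ((lexIsoUnit x : ℚ) : ℝ)

theorem lexToReal_strictMono : StrictMono lexToReal := fun _ _ h =>
  Rat.cast_lt.2 (lexIsoUnit.strictMono h)

theorem lexToReal_mem (x : ℚ ×ₗ ℚ) : lexToReal x ∈ Set.Ioo (0 : ℝ) 1 :=
  ⟨Rat.cast_pos.2 (lexIsoUnit x).2.1, by simpa [lexToReal] using (Rat.cast_lt (K := ℝ)).2 (lexIsoUnit x).2.2⟩

theorem exists_lexToReal_eq {r : ℚ} (h₀ : (0 : ℝ) < r) (h₁ : (r : ℝ) < 1) :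
    ∃ q s : ℚ, lexToReal (toLex (q, s)) = r := by
  obtain ⟨x, hx⟩ := lexIsoUnit.surjective ⟨r, by exact_mod_cast h₀, by exact_mod_cast h₁⟩
  refine ⟨(ofLex x).1, (ofLex x).2, ?_⟩
  change ((lexIsoUnit x : ℚ) : ℝ) = r
  rw [hx]

/-- The copy of `chains S` in the real interval `(0, 1)`. -/
noncomputable def realChains (S : Set ℕ) : Set ℝ := lexToReal '' chains S

theorem infinite_blockPoints_realChains (S : Set ℕ) (n : ℕ) :
    (blockPoints (realChains S) (n + 2)).Infinite ↔ n ∈ S :=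
  (infinite_blockPoints_image (Or.inl lexToReal_strictMono) _ _).trans
    (infinite_blockPoints_chains S n)

theorem realChains_injective : Function.Injective realChains := by
  intro S T h
  ext n
  rw [← infinite_blockPoints_realChains S, h, infinite_blockPoints_realChains]

theorem lexToReal_mem_realChains (S : Set ℕ) (q : ℚ) :
    lexToReal (toLex (q, 0)) ∈ realChains S :=
  ⟨_, ⟨q, 0, chainLength_pos S q, rfl⟩, by simp⟩

theorem isGLB_realChains (S : Set ℕ) : IsGLB (realChains S) 0 := by
  refine ⟨?_, fun b hb => ?_⟩
  · rintro _ ⟨x, -, rfl⟩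
    exact (lexToReal_mem x).1.le
  · by_contra! hpos
    obtain ⟨r, hr₀, hr⟩ := exists_rat_btwn (lt_min hpos one_pos)
    obtain ⟨q, s, hqs⟩ := exists_lexToReal_eq hr₀ (hr.trans_le (min_le_right _ _))
    have h₁ := hb (lexToReal_mem_realChains S (q - 1))
    have h₂ : lexToReal (toLex (q - 1, 0)) < lexToReal (toLex (q, s)) :=
      lexToReal_strictMono (Prod.Lex.toLex_lt_toLex.2 (Or.inl (sub_one_lt q)))
    linarith [hr.trans_le (min_le_left _ _)]

theorem isLUB_realChains (S : Set ℕ) : IsLUB (realChains S) 1 := by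
  refine ⟨?_, fun b hb => ?_⟩
  · rintro _ ⟨x, -, rfl⟩
    exact (lexToReal_mem x).2.le
  · by_contra! hlt
    obtain ⟨r, hr, hr₁⟩ := exists_rat_btwn (max_lt hlt one_pos)
    obtain ⟨q, s, hqs⟩ := exists_lexToReal_eq ((le_max_right _ _).trans_lt hr) hr₁
    have h₁ := hb (lexToReal_mem_realChains S (q + 1))
    have h₂ : lexToReal (toLex (q, s)) < lexToReal (toLex (q + 1, 0)) :=
      lexToReal_strictMono (Prod.Lex.toLex_lt_toLex.2 (Or.inl (lt_add_one q)))
    linarith [(le_max_left _ _).trans_lt hr]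

/-! ### Construction of the family -/

open Cardinal

/-- There is a family `𝓗` of `𝔠` countable subsets of `(0,1)`, each with infimum `0` and
supremum `1`, such that for distinct `H₁, H₂ ∈ 𝓗` and any finite set `F` there is no strictly
monotone bijection from `H₁` onto `H₂ \ F`. -/
theorem family_of_orderwise_rigid_countable_sets :
    ∃ 𝓗 : Set (Set ℝ),
      #𝓗 = 𝔠 ∧
      (∀ H ∈ 𝓗, H ⊆ Set.Ioo (0 : ℝ) 1 ∧ H.Countable ∧ sInf H = 0 ∧ sSup H = 1) ∧
      (∀ H₁ ∈ 𝓗, ∀ H₂ ∈ 𝓗, H₁ ≠ H₂ → ∀ F : Set ℝ, F.Finite →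
        ∀ g : ↥H₁ → ↥(H₂ \ F), ¬ (Function.Bijective g ∧ (StrictMono g ∨ StrictAnti g))) := by
  refine ⟨Set.range realChains, ?_, ?_, ?_⟩
  · have h := Cardinal.mk_range_eq_of_injective realChains_injective
    simpa using h
  · rintro _ ⟨S, rfl⟩
    have hne : (realChains S).Nonempty := ⟨_, lexToReal_mem_realChains S 0⟩
    refine ⟨?_, ?_, (isGLB_realChains S).csInf_eq hne, (isLUB_realChains S).csSup_eq hne⟩
    · rintro _ ⟨x, -, rfl⟩
      exact lexToReal_mem x
    · have : Countable (ℚ ×ₗ ℚ) := inferInstanceAs (Countable (ℚ × ℚ))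
      exact (Set.to_countable (chains S)).image _
  · rintro _ ⟨S, rfl⟩ _ ⟨T, rfl⟩ hne F hF g ⟨hbij, hg⟩
    refine hne (congrArg realChains (Set.ext fun n => ?_))
    have hval : StrictMono (fun x : ↥(realChains T \ F) => (x : ℝ)) := fun _ _ h => h
    have he : StrictMono (fun x => (g x : ℝ)) ∨ StrictAnti (fun x => (g x : ℝ)) :=
      hg.imp hval.comp hval.comp_strictAnti
    -- Both `realChains S` and `realChains T \ F` are images of the whole subtype `↥(realChains S)`.
    have h₁ := infinite_blockPoints_image (e := fun x : ↥(realChains S) => (x : ℝ))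
      (Or.inl fun _ _ h => h) Set.univ (n + 2)
    have h₂ := infinite_blockPoints_image he Set.univ (n + 2)
    have hrange : Set.range (fun x => (g x : ℝ)) = realChains T \ F := by
      rw [← Function.comp_def, Set.range_comp, hbij.surjective.range_eq, Set.image_univ,
        Subtype.range_coe]
    rw [Set.image_univ, Subtype.range_coe] at h₁
    rw [Set.image_univ, hrange, infinite_blockPoints_diff _ hF (by omega)] at h₂
    rw [← infinite_blockPoints_realChains S, ← infinite_blockPoints_realChains T, h₁, h₂]
end

section
/- Let λ, μ, κ be infinite cardinals with λ^{<μ} ≤ κ ≤ λ^μ. Then there exists a balanced linearly ordered continuum K with w(K) = κ, |K| = λ^μ, and χ(K) ≤ max{λ̃, μ}, where λ̃ = ℵ₀ if λ ≤ 𝔠 and λ̃ = λ if λ > 𝔠. -/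
/-!
The continuum is built in two lexicographic steps, each carried out by the same construction
`LexTree ι L A b`: sequences `ι → L` over a well-order `ι`, compared lexicographically, that become
constantly `b = min L` once an entry lies outside `A`. If every subset of `L` has a supremum, the
same holds for such sequences (`LexTree.exists_isLUB`). Separating sets and the points approaching a
given point are obtained by copying an initial segment of a sequence and then stopping with a
suitable entry (`LexTree.goodOrder`).

First there is a base order `Y` that is complete, has a separating set of size at most `κ`, has
character at most `ν = max {λ̃, μ}`, and all of whose intervals have size `λ ^ μ` (`exists_base`).
If `λ ≤ 𝔠` and `μ = ℵ₀`, this is the unit interval. Otherwise it is the lexicographic power `L ^ μ`,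
where `L` is the unit interval if `λ ≤ 𝔠` and the closed long line over `λ` if `𝔠 < λ`; the
separating set then has size at most `λ ^< μ ≤ κ`, and the size is right because
`λ ^ μ = 2 ^ μ = 𝔠 ^ μ` for `λ ≤ 𝔠`.

The weight of `Y` may be smaller than `κ`. To raise it, choose `A ⊆ Y` of size `κ` with `κ` points
in every interval (`exists_dense_subset`), blow each point of `A` up to a copy of `Y`, and repeat
`ω` times: this is `K = LexTree ω Y A b`. Its separating set has size at most `κ`, which bounds the
weight of every subspace above, and every interval of `K` contains `κ` disjoint nonempty open
intervals, which bounds the weight of every nonempty open subspace below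
(`LexTree.disjoint_intervals`). Intervals of `K` contain copies of intervals of `Y`, and
`|K| ≤ (λ ^ μ) ^ ℵ₀ = λ ^ μ`, so all nonempty open sets have size `λ ^ μ`.
-/

universe u

open Cardinal Topology

/-! ### Order-theoretic conditions -/

/-- Every subset of the linear order `X` has a least upper bound, `X` has more than one point, some
set of at most `τ` points meets every interval `(x, y)` with `x < y`, and for every point `y`
some set of at most `ν` points meets every nonempty open interval that has `y` as an endpoint. The
last two conditions are what bounds the weight and the character of the order topology. -/
structure GoodOrder (X : Type u) [LinearOrder X] (τ ν : Cardinal.{u}) : Prop where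
  lub : ∀ s : Set X, ∃ a, IsLUB s a
  nontriv : Nontrivial X
  sep : ∃ D : Set X, #D ≤ τ ∧ ∀ x y, x < y → ∃ d ∈ D, x < d ∧ d < y
  loc : ∀ y : X, ∃ C : Set X, #C ≤ ν ∧
    ∀ x, (x < y → ∃ c ∈ C, x < c ∧ c < y) ∧ (y < x → ∃ c ∈ C, y < c ∧ c < x)

theorem GoodOrder.denselyOrdered {X : Type u} [LinearOrder X] {τ ν : Cardinal.{u}}
    (h : GoodOrder X τ ν) : DenselyOrdered X := by
  obtain ⟨D, -, hD⟩ := h.sep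
  exact ⟨fun x y hxy => let ⟨d, _, hd⟩ := hD x y hxy; ⟨d, hd⟩⟩

theorem GoodOrder.exists_bot {X : Type u} [LinearOrder X] {τ ν : Cardinal.{u}}
    (h : GoodOrder X τ ν) : ∃ b : X, ∀ x, b ≤ x := by
  obtain ⟨b, hb⟩ := h.lub ∅
  exact ⟨b, fun x => hb.2 (by simp)⟩

/-! ### Topology of complete orders with small separating sets -/

/-- The bound is stated for all `Z` carrying the topology induced from `X`, so that it covers open
subspaces as well as `X` itself. -/
theorem GoodOrder.wt_le {X : Type u} [LinearOrder X] [TopologicalSpace X] [OrderTopology X]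
    {τ ν : Cardinal.{u}} (h : GoodOrder X τ ν) (hτ : ℵ₀ ≤ τ) {Z : Type u} [TopologicalSpace Z]
    {e : Z → X} (he : IsInducing e) : wt Z ≤ τ := by
  have := h.denselyOrdered
  have := h.nontriv
  obtain ⟨D, hDc, hD⟩ := h.sep
  have hdense : Dense D := dense_of_exists_between fun {a b} hab =>
    let ⟨d, hd, h1, h2⟩ := hD a b hab; ⟨d, hd, h1, h2⟩
  set S : Set (Set X) := Set.Ioi '' D ∪ Set.Iio '' D with hS
  have hB := (TopologicalSpace.isTopologicalBasis_of_subbasis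
    hdense.topology_eq_generateFrom).isInducing he
  refine le_trans (csInf_le' (show _ ∈ _ from ⟨_, hB, rfl⟩)) ?_
  have hSc : #S ≤ τ := (Cardinal.mk_union_le _ _).trans <| Cardinal.add_le_of_le hτ
    (Cardinal.mk_image_le.trans hDc) (Cardinal.mk_image_le.trans hDc)
  have hlist : #(List S) ≤ τ := (Cardinal.mk_list_le_max S).trans (max_le hτ hSc)
  refine (Cardinal.mk_le_mk_of_subset (t := Set.range fun L : List S =>
    e ⁻¹' ⋂₀ {s | ∃ h : s ∈ S, (⟨s, h⟩ : S) ∈ L}) ?_).trans (Cardinal.mk_range_le.trans hlist)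
  rintro _ ⟨_, ⟨f, ⟨hf, hfS⟩, rfl⟩, rfl⟩
  refine ⟨(hf.preimage (f := ((↑) : S → Set X)) Subtype.val_injective.injOn).toFinset.toList, ?_⟩
  have : {s | ∃ h : s ∈ S, (⟨s, h⟩ : S) ∈
      (hf.preimage (f := ((↑) : S → Set X)) Subtype.val_injective.injOn).toFinset.toList} = f := by
    ext s
    simp only [Finset.mem_toList, Set.Finite.mem_toFinset, Set.mem_preimage, Set.mem_ofPred_eq]
    exact ⟨fun h => h.2, fun h => ⟨hfS h, h⟩⟩
  simp only [this]

theorem le_wt_of_disjoint {Z I : Type u} [TopologicalSpace Z] (V : I → Set Z)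
    (ho : ∀ i, IsOpen (V i)) (hne : ∀ i, (V i).Nonempty)
    (hd : ∀ i j, i ≠ j → Disjoint (V i) (V j)) : #I ≤ wt Z := by
  refine le_csInf ⟨_, _, TopologicalSpace.isTopologicalBasis_opens, rfl⟩ ?_
  rintro c ⟨B, hB, rfl⟩
  have key : ∀ i, ∃ W ∈ B, W.Nonempty ∧ W ⊆ V i := fun i => by
    obtain ⟨z, hz⟩ := hne i
    obtain ⟨W, hW, hzW, hWV⟩ := hB.exists_subset_of_mem_open hz (ho i)
    exact ⟨W, hW, ⟨z, hzW⟩, hWV⟩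
  choose W hWB hWne hWV using key
  refine Cardinal.mk_le_of_injective (f := fun i => (⟨W i, hWB i⟩ : B)) fun i j hij => ?_
  by_contra hne
  have hij : W i = W j := congrArg Subtype.val hij
  obtain ⟨z, hz⟩ := hWne i
  exact Set.disjoint_left.1 (hd i j hne) (hWV i hz) (hWV j (hij ▸ hz))

theorem GoodOrder.charac_le {X : Type u} [LinearOrder X] [TopologicalSpace X] [OrderTopology X]
    {τ ν : Cardinal.{u}} (h : GoodOrder X τ ν) (hν : ℵ₀ ≤ ν) : charac X ≤ ν := by
  refine ciSup_le' fun y => ?_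
  obtain ⟨C, hC, hCy⟩ := h.loc y
  -- `none` stands for the absence of a bound on that side.
  let N : Option C × Option C → Set X := fun o =>
    {z | (∀ c ∈ o.1, c.1 < y → c.1 < z) ∧ (∀ c ∈ o.2, y < c.1 → z < c.1)}
  refine le_trans (csInf_le' (a := #(Set.range N)) ⟨Set.range N, ?_, ?_, rfl⟩) ?_
  · rintro _ ⟨⟨o₁, o₂⟩, rfl⟩
    refine Filter.Eventually.and (f := 𝓝 y) ?_ ?_
    · rcases o₁ with _ | c
      · simp
      · by_cases hc : c.1 < y
        · simpa [hc] using lt_mem_nhds hc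
        · simp [hc]
    · rcases o₂ with _ | c
      · simp
      · by_cases hc : y < c.1
        · simpa [hc] using gt_mem_nhds hc
        · simp [hc]
  · intro V hV
    have hleft : ∃ o : Option C, ∀ z ≤ y, (∀ c ∈ o, c.1 < y → c.1 < z) → z ∈ V := by
      by_cases hy : ∃ x, x < y
      · obtain ⟨x, hx, hxV⟩ := exists_Ioc_subset_of_mem_nhds hV hy
        obtain ⟨c, hc, hxc, hcy⟩ := (hCy x).1 hx
        exact ⟨some ⟨c, hc⟩, fun z hz hcz => hxV ⟨hxc.trans (hcz _ rfl hcy), hz⟩⟩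
      · refine ⟨none, fun z hz _ => ?_⟩
        rw [hz.antisymm (not_lt.1 fun hlt => hy ⟨z, hlt⟩)]
        exact mem_of_mem_nhds hV
    have hright : ∃ o : Option C, ∀ z, y ≤ z → (∀ c ∈ o, y < c.1 → z < c.1) → z ∈ V := by
      by_cases hy : ∃ x, y < x
      · obtain ⟨x, hx, hxV⟩ := exists_Ico_subset_of_mem_nhds hV hy
        obtain ⟨c, hc, hyc, hcx⟩ := (hCy x).2 hx
        exact ⟨some ⟨c, hc⟩, fun z hz hcz => hxV ⟨hz, (hcz _ rfl hyc).trans hcx⟩⟩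
      · refine ⟨none, fun z hz _ => ?_⟩
        rw [← hz.antisymm (not_lt.1 fun hlt => hy ⟨z, hlt⟩)]
        exact mem_of_mem_nhds hV
    obtain ⟨o₁, h₁⟩ := hleft
    obtain ⟨o₂, h₂⟩ := hright
    refine ⟨N (o₁, o₂), ⟨_, rfl⟩, fun z hz => ?_⟩
    rcases le_total z y with hzy | hzy
    · exact h₁ z hzy hz.1
    · exact h₂ z hzy hz.2
  · refine Cardinal.mk_range_le.trans ?_
    have h1 : #(Option C) ≤ ν := by
      rw [Cardinal.mk_option]
      exact Cardinal.add_le_of_le hν hC (Cardinal.one_le_aleph0.trans hν)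
    rw [← Cardinal.mul_def]
    exact Cardinal.mul_le_of_le hν h1 h1

theorem GoodOrder.isContinuum {X : Type u} [l : LinearOrder X] [TopologicalSpace X]
    [OrderTopology X] {τ ν : Cardinal.{u}} (h : GoodOrder X τ ν) : IsContinuum X := by
  classical
  have hd := h.denselyOrdered
  have hn := h.nontriv
  choose sup hsup using h.lub
  -- The lattice operations are those of the given linear order.
  let : CompleteLattice X :=
    { (inferInstance : Lattice X), completeLatticeOfSup (H2 := ⟨sup⟩) X hsup with }
  let : CompleteLinearOrder X :=
    { __ := l, __ := this, __ := LinearOrder.toBiheytingAlgebra X }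
  refine ⟨inferInstance, ?_, inferInstance, hn⟩
  exact { isPreconnected_univ := isPreconnected_univ, toNonempty := inferInstance }

/-! ### Lexicographic sequences with termination -/

/-- Sequences `ι → L`, compared lexicographically, in which every entry after an entry outside `A`
equals `b`: once a sequence leaves `A` it carries no further information. For `A = univ` this is the
full lexicographic power. -/
def LexTree (ι L : Type u) [LinearOrder ι] (A : Set L) (b : L) : Type u :=
  {f : ι → L // ∀ i j, i < j → f i ∉ A → f j = b}

namespace LexTree

variable {ι L : Type u} [LinearOrder ι] {A : Set L} {b : L}

noncomputable instance [WellFoundedLT ι] [LinearOrder L] : LinearOrder (LexTree ι L A b) :=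
  LinearOrder.lift' (fun f => toLex f.1) fun _ _ h => Subtype.ext (toLex.injective h)

theorem lt_iff [WellFoundedLT ι] [LinearOrder L] {f g : LexTree ι L A b} :
    f < g ↔ ∃ i, (∀ j < i, f.1 j = g.1 j) ∧ f.1 i < g.1 i := Iff.rfl

theorem mk_le : #(LexTree ι L A b) ≤ #L ^ #ι := by
  rw [Cardinal.power_def]
  exact Cardinal.mk_subtype_le _

theorem mem_of_ne {f : LexTree ι L A b} {i : ι} (h : f.1 i ≠ b) : ∀ j < i, f.1 j ∈ A :=
  fun j hj => by_contra fun hA => h (f.2 j i hj hA)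

/-- Keep `f` below `i`, and put `c` at `i` and `t` above `i`. -/
def graft (f : ι → L) (i : ι) (c : L) (t : ι → L) : ι → L :=
  fun j => if j < i then f j else if j = i then c else t j

theorem graft_lt {f : ι → L} {i : ι} {c : L} {t : ι → L} {j : ι} (h : j < i) :
    graft f i c t j = f j := by simp [graft, h]

theorem graft_eq {f : ι → L} {i : ι} {c : L} {t : ι → L} : graft f i c t i = c := by
  simp [graft]

theorem graft_gt {f : ι → L} {i : ι} {c : L} {t : ι → L} {j : ι} (h : i < j) :
    graft f i c t j = t j := by simp [graft, h.ne', h.not_gt]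

/-- The sequence that follows `f` below `i`, has entry `c` at `i`, and equals `b` afterwards. -/
def cutAt (f : ι → L) (i : ι) (c : L) (hf : ∀ j < i, f j ∈ A) : LexTree ι L A b :=
  ⟨graft f i c fun _ => b, fun j k hjk hj => by
    rcases lt_trichotomy k i with hk | rfl | hk
    · rw [graft_lt (hjk.trans hk)] at hj
      exact absurd (hf j (hjk.trans hk)) hj
    · rw [graft_lt hjk] at hj
      exact absurd (hf j hjk) hj
    · exact graft_gt hk⟩

theorem cutAt_val {f : ι → L} {i : ι} {c : L} {hf : ∀ j < i, f j ∈ A} :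
    (cutAt f i c hf : LexTree ι L A b).1 = graft f i c fun _ => b := rfl

/-- The entry of the supremum of `S` at `i`, given its entries below `i`. -/
noncomputable def supStep [LinearOrder L] (sup : Set L → L) (S : Set (LexTree ι L A b)) (i : ι)
    (g : ∀ j, j < i → L) : L :=
  open Classical in
  if ∃ j, ∃ h : j < i, g j h ∉ A then b
  else sup {x | ∃ f ∈ S, (∀ j (h : j < i), f.1 j = g j h) ∧ f.1 i = x}

/-- The supremum is found entry by entry: at `i` take the supremum in `L` of the `i`-th entries of
those members of `S` that agree with it below `i`, unless it has already terminated. -/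
theorem exists_isLUB [WellFoundedLT ι] [LinearOrder L] (hb : ∀ x, b ≤ x)
    (hL : ∀ s : Set L, ∃ a, IsLUB s a) (S : Set (LexTree ι L A b)) : ∃ g, IsLUB S g := by
  choose sup hsup using hL
  obtain ⟨g, hg⟩ : ∃ g : ι → L, ∀ i, g i = supStep sup S i fun j _ => g j :=
    ⟨_, fun i => (wellFounded_lt (α := ι)).fix_eq (supStep sup S) i⟩
  have hgA : ∀ i j, i < j → g i ∉ A → g j = b := fun i j hij hi => by
    rw [hg, supStep, if_pos ⟨i, hij, hi⟩]
  have hgS : ∀ i, (∀ j < i, g j ∈ A) →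
      IsLUB {x | ∃ f ∈ S, (∀ j < i, f.1 j = g j) ∧ f.1 i = x} (g i) := fun i hi => by
    have : g i = sup {x | ∃ f ∈ S, (∀ j < i, f.1 j = g j) ∧ f.1 i = x} := by
      conv_lhs => rw [hg, supStep, if_neg (fun ⟨j, hj, h⟩ => h (hi j hj))]
    rw [this]
    exact hsup _
  refine ⟨⟨g, hgA⟩, fun f hf => ?_, fun h hh => ?_⟩
  · by_contra hlt
    obtain ⟨i, hi, hlt⟩ := lt_iff.1 (not_le.1 hlt)
    have hmem := mem_of_ne ((hb _).trans_lt hlt).ne'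
    refine hlt.not_ge ((hgS i fun j hj => ?_).1 ⟨f, hf, fun j hj => (hi j hj).symm, rfl⟩)
    have heq : g j = f.1 j := hi j hj
    exact heq ▸ hmem j hj
  · by_contra hlt
    obtain ⟨i, hi, hlt⟩ := lt_iff.1 (not_le.1 hlt)
    have hmem := mem_of_ne (f := ⟨g, hgA⟩) ((hb _).trans_lt hlt).ne'
    obtain ⟨x, ⟨f, hf, hfg, rfl⟩, hx, -⟩ := (hgS i hmem).exists_between hlt
    exact (hh hf).not_gt (lt_iff.2 ⟨i, fun j hj => (hi j hj).trans (hfg j hj).symm, hx⟩)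

section
variable [WellFoundedLT ι] [LinearOrder L]

/-- If `f < g` first differ at `i`, then neither has terminated before `i`: otherwise both entries at
`i` would be `b`. -/
theorem split (hb : ∀ x, b ≤ x) {f g : LexTree ι L A b} (h : f < g) :
    ∃ i, f.1 i < g.1 i ∧ (∀ j < i, f.1 j = g.1 j) ∧ (∀ j < i, f.1 j ∈ A) := by
  obtain ⟨i, hi, hlt⟩ := lt_iff.1 h
  exact ⟨i, hlt, hi, fun j hj => hi j hj ▸ mem_of_ne ((hb _).trans_lt hlt).ne' j hj⟩

/-- A sequence that agrees with `f` and `g` up to their first difference `i`, and whose entry at `i`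
lies strictly between theirs, lies strictly between them. -/
theorem between {f g h : LexTree ι L A b} {i : ι} (hi : ∀ j < i, f.1 j = g.1 j)
    (hh : ∀ j < i, h.1 j = f.1 j) (h1 : f.1 i < h.1 i) (h2 : h.1 i < g.1 i) : f < h ∧ h < g :=
  ⟨lt_iff.2 ⟨i, fun j hj => (hh j hj).symm, h1⟩,
    lt_iff.2 ⟨i, fun j hj => (hh j hj).trans (hi j hj), h2⟩⟩

theorem goodOrder {τ ν τ' ν' : Cardinal.{u}} (hb : ∀ x, b ≤ x) (hL : GoodOrder L τ ν)
    [Nonempty ι] (hτ : ℵ₀ ≤ τ') (hττ : τ ≤ τ') (hι : #ι ≤ τ')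
    (hA : ∀ i : ι, #A ^ #(Set.Iio i) ≤ τ') (hν : ℵ₀ ≤ ν') (hνν : ν ≤ ν') (hιν : #ι ≤ ν') :
    GoodOrder (LexTree ι L A b) τ' ν' where
  lub := exists_isLUB hb hL.lub
  nontriv := by
    obtain ⟨c, hc⟩ := @exists_ne _ hL.nontriv b
    -- Stopping at the least index needs no entry to lie in `A`.
    let i : ι := wellFounded_lt.min (Set.univ : Set ι) Set.univ_nonempty
    have hi : ∀ j, ¬ j < i := fun j => wellFounded_lt.not_lt_min _ (Set.mem_univ j)
    refine ⟨cutAt (fun _ => b) i b fun j hj => absurd hj (hi j),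
      cutAt (fun _ => b) i c fun j hj => absurd hj (hi j), fun h => hc ?_⟩
    have := congrFun (congrArg Subtype.val h) i
    simpa [cutAt_val, graft_eq] using this.symm
  sep := by
    classical
    obtain ⟨D, hDc, hD⟩ := hL.sep
    let F : (Σ i : ι, (Set.Iio i → A) × D) → LexTree ι L A b := fun p =>
      cutAt (fun j => if h : j < p.1 then p.2.1 ⟨j, h⟩ else b) p.1 p.2.2
        fun j hj => by simp [hj]
    refine ⟨Set.range F, Cardinal.mk_range_le.trans ?_, fun f g hfg => ?_⟩
    · rw [Cardinal.mk_sigma]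
      refine (Cardinal.sum_le_mk_mul_iSup _).trans (Cardinal.mul_le_of_le hτ hι ?_)
      refine ciSup_le' fun i => ?_
      rw [← Cardinal.mul_def, ← Cardinal.power_def]
      exact Cardinal.mul_le_of_le hτ (hA i) (hDc.trans hττ)
    · obtain ⟨i, hlt, hi, hfA⟩ := split hb hfg
      obtain ⟨d, hd, h1, h2⟩ := hD _ _ hlt
      refine ⟨_, ⟨⟨i, fun j => ⟨f.1 j, hfA j j.2⟩, ⟨d, hd⟩⟩, rfl⟩, between hi ?_ ?_ ?_⟩
      · intro j hj
        simp [F, cutAt_val, graft_lt hj, hj]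
      · simpa [F, cutAt_val, graft_eq] using h1
      · simpa [F, cutAt_val, graft_eq] using h2
  loc := fun g => by
    classical
    choose C hC hCy using hL.loc
    let F : (Σ i : ι, C (g.1 i)) → LexTree ι L A b := fun p =>
      if h : ∀ j < p.1, g.1 j ∈ A then cutAt g.1 p.1 p.2 h else g
    have hF : ∀ i c (h : ∀ j < i, g.1 j ∈ A), F ⟨i, c⟩ = cutAt g.1 i c h := fun i c h => dif_pos h
    refine ⟨Set.range F, Cardinal.mk_range_le.trans ?_, fun f => ⟨fun hfg => ?_, fun hgf => ?_⟩⟩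
    · rw [Cardinal.mk_sigma]
      refine (Cardinal.sum_le_mk_mul_iSup _).trans (Cardinal.mul_le_of_le hν hιν ?_)
      exact ciSup_le' fun i => (hC _).trans hνν
    · obtain ⟨i, hlt, hi, hfA⟩ := split hb hfg
      obtain ⟨c, hc, h1, h2⟩ := (hCy _ _).1 hlt
      refine ⟨_, ⟨⟨i, c, hc⟩, rfl⟩, ?_⟩
      rw [hF i _ fun j hj => hi j hj ▸ hfA j hj]
      refine between hi (fun j hj => ?_) ?_ ?_
      · rw [cutAt_val, graft_lt hj, hi j hj]
      · simpa [cutAt_val, graft_eq] using h1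
      · simpa [cutAt_val, graft_eq] using h2
    · obtain ⟨i, hlt, hi, hgA⟩ := split hb hgf
      obtain ⟨c, hc, h1, h2⟩ := (hCy _ _).2 hlt
      refine ⟨_, ⟨⟨i, c, hc⟩, rfl⟩, ?_⟩
      rw [hF i _ hgA]
      refine between hi (fun j hj => ?_) ?_ ?_
      · rw [cutAt_val, graft_lt hj]
      · simpa [cutAt_val, graft_eq] using h1
      · simpa [cutAt_val, graft_eq] using h2

/-- An interval contains a copy of an interval of `L`. -/
theorem le_mk_Ioo (hb : ∀ x, b ≤ x) {θ : Cardinal.{u}}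
    (hθ : ∀ x y : L, x < y → θ ≤ #(Set.Ioo x y)) {f g : LexTree ι L A b} (hfg : f < g) :
    θ ≤ #(Set.Ioo f g) := by
  obtain ⟨i, hlt, hi, hfA⟩ := split hb hfg
  refine (hθ _ _ hlt).trans (Cardinal.mk_le_of_injective
    (f := fun c => ⟨cutAt f.1 i c hfA, between hi ?_ ?_ ?_⟩) ?_)
  · intro j hj
    rw [cutAt_val, graft_lt hj]
  · simpa [cutAt_val, graft_eq] using c.2.1
  · simpa [cutAt_val, graft_eq] using c.2.2
  · intro c d hcd
    have := congrFun (congrArg (fun x : Set.Ioo f g => x.1.1) hcd) i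
    exact Subtype.ext (by simpa [cutAt_val, graft_eq] using this)

/-- In the full lexicographic power, the entries above the splitting place are free. -/
theorem le_mk_Ioo_univ [DenselyOrdered L] {θ : Cardinal.{u}} (hb : ∀ x, b ≤ x)
    (hθ : ∀ i : ι, θ ≤ #L ^ #(Set.Ioi i))
    {f g : LexTree ι L Set.univ b} (hfg : f < g) : θ ≤ #(Set.Ioo f g) := by
  classical
  obtain ⟨i, hlt, hi, -⟩ := split hb hfg
  obtain ⟨c, h1, h2⟩ := exists_between hlt
  refine (hθ i).trans ?_
  rw [Cardinal.power_def]
  let t : (Set.Ioi i → L) → ι → L := fun s j => if h : i < j then s ⟨j, h⟩ else b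
  refine Cardinal.mk_le_of_injective
    (f := fun s => ⟨⟨graft f.1 i c (t s), fun _ _ _ h => absurd (Set.mem_univ _) h⟩,
      between hi (fun j hj => graft_lt hj) ?_ ?_⟩) ?_
  · simpa [graft_eq] using h1
  · simpa [graft_eq] using h2
  · intro s s' h
    funext ⟨j, hj⟩
    have hj : i < j := hj
    have := congrFun (congrArg (fun x : Set.Ioo f g => x.1.1) h) j
    simpa [graft_gt hj, t, hj] using this

/-- Each `a ∈ A` between the splitting entries of `f < g` gives an open interval of sequences whose
entry there is `a`; these intervals are disjoint. -/
theorem disjoint_intervals [NoMaxOrder ι] {τ ν : Cardinal.{u}} (hb : ∀ x, b ≤ x) (hbA : b ∈ A)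
    (hL : GoodOrder L τ ν) {κ : Cardinal.{u}}
    (hκ : ∀ x y : L, x < y → κ ≤ #(A ∩ Set.Ioo x y : Set L))
    {f g : LexTree ι L A b} (hfg : f < g) :
    ∃ (I : Type u) (p q : I → LexTree ι L A b), κ ≤ #I ∧ (∀ a, f ≤ p a ∧ p a < q a ∧ q a ≤ g) ∧
      ∀ a a', a ≠ a' → Disjoint (Set.Ioo (p a) (q a)) (Set.Ioo (p a') (q a')) := by
  have := hL.nontriv
  obtain ⟨c, hc⟩ := exists_ne b
  have hbc : b < c := (hb c).lt_of_ne' hc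
  obtain ⟨i, hlt, hi, hfA⟩ := split hb hfg
  obtain ⟨k, hik⟩ := exists_gt i
  let p : (A ∩ Set.Ioo (f.1 i) (g.1 i) : Set L) → LexTree ι L A b := fun a => cutAt f.1 i a hfA
  have hpi : ∀ a, (p a).1 i = a := fun a => by simp only [p, cutAt_val, graft_eq]
  have hpf : ∀ a, ∀ j < i, (p a).1 j = f.1 j := fun a j hj => by simp only [p, cutAt_val, graft_lt hj]
  have hpb : ∀ a, ∀ j, i < j → (p a).1 j = b := fun a j hj => by simp only [p, cutAt_val, graft_gt hj]
  have hpA : ∀ a j, (p a).1 j ∈ A := fun a j => by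
    rcases lt_trichotomy j i with hj | rfl | hj
    · rw [hpf a j hj]; exact hfA j hj
    · rw [hpi]; exact a.2.1
    · rw [hpb a j hj]; exact hbA
  let q : (A ∩ Set.Ioo (f.1 i) (g.1 i) : Set L) → LexTree ι L A b := fun a =>
    cutAt (p a).1 k c fun j _ => hpA a j
  have hqk : ∀ a, (q a).1 k = c := fun a => by simp only [q, cutAt_val, graft_eq]
  have hqp : ∀ a, ∀ j < k, (q a).1 j = (p a).1 j := fun a j hj => by
    simp only [q, cutAt_val, graft_lt hj]
  have hlt' : ∀ a a', a < a' → q a < p a' := fun a a' h => by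
    refine lt_iff.2 ⟨i, fun j hj => ?_, ?_⟩
    · rw [hqp a j (hj.trans hik), hpf a j hj, hpf a' j hj]
    · rw [hqp a i hik, hpi, hpi]; exact h
  refine ⟨_, p, q, hκ _ _ hlt, fun a => ⟨?_, ?_, ?_⟩, ?_⟩
  · exact (lt_iff.2 ⟨i, fun j hj => (hpf a j hj).symm, by rw [hpi]; exact a.2.2.1⟩).le
  · exact lt_iff.2 ⟨k, fun j hj => (hqp a j hj).symm, by rw [hqk, hpb a k hik]; exact hbc⟩
  · refine (lt_iff.2 ⟨i, fun j hj => ?_, ?_⟩).le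
    · rw [hqp a j (hj.trans hik), hpf a j hj, hi j hj]
    · rw [hqp a i hik, hpi]; exact a.2.2.2
  · have aux : ∀ a a', a < a' → Disjoint (Set.Ioo (p a) (q a)) (Set.Ioo (p a') (q a')) :=
      fun a a' h => Set.disjoint_left.2 fun x hx hx' =>
        (hx.2.trans (hlt' a a' h)).not_gt hx'.1
    intro a a' hne
    rcases lt_or_gt_of_ne hne with h | h
    · exact aux a a' h
    · exact (aux a' a h).symm

end

end LexTree

/-! ### Closed long lines -/

/-- The closed long line over the well-order `W`: the lexicographic product `W × [0, 1)` together
with a top point. For a one-point `W` this is a copy of the unit interval. -/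
abbrev LongLine (W : Type u) : Type u := WithTop (W ×ₗ Set.Ico (0 : ℝ) 1)

namespace LongLine

variable {W : Type u}

/-- The point of the closed long line at height `r` above `w`. -/
def pt (w : W) (r : Set.Ico (0 : ℝ) 1) : LongLine W := ((toLex (w, r) : W ×ₗ Set.Ico (0 : ℝ) 1))

theorem eq_top_or_pt (x : LongLine W) : x = ⊤ ∨ ∃ w r, x = pt w r := by
  induction x using WithTop.recTopCoe with
  | top => exact Or.inl rfl
  | coe x => exact Or.inr ⟨(ofLex x).1, (ofLex x).2, rfl⟩

theorem pt_injective : Function.Injective fun p : W × Set.Ico (0 : ℝ) 1 => pt p.1 p.2 :=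
  fun _ _ h => toLex.injective (WithTop.coe_injective h)

theorem mk_le : #(LongLine W) ≤ max #W 𝔠 := by
  have h : #(LongLine W) = #W * 𝔠 + 1 := by
    refine Cardinal.mk_option.trans (congrArg (· + 1) ?_)
    refine (Cardinal.mk_congr (toLex.symm : (W ×ₗ Set.Ico (0 : ℝ) 1) ≃ _)).trans ?_
    rw [Cardinal.mk_prod, Cardinal.mk_Ico_real zero_lt_one]
    simp
  rw [h]
  have h𝔠 : ℵ₀ ≤ max #W 𝔠 := Cardinal.aleph0_le_continuum.trans (le_max_right _ _)
  exact Cardinal.add_le_of_le h𝔠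
    (Cardinal.mul_le_of_le h𝔠 (le_max_left _ _) (le_max_right _ _))
    (Cardinal.one_le_aleph0.trans h𝔠)

theorem le_mk : #W ≤ #(LongLine W) :=
  Cardinal.mk_le_of_injective (f := fun w => pt w ⟨0, by simp⟩) fun _ _ h =>
    congrArg Prod.fst (pt_injective (a₁ := (_, _)) (a₂ := (_, _)) h)

variable [LinearOrder W]

theorem pt_lt_top (w : W) (r) : pt w r < ⊤ := WithTop.coe_lt_top _

theorem pt_le_pt {w w' : W} {r r'} : pt w r ≤ pt w' r' ↔ w < w' ∨ w = w' ∧ r ≤ r' :=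
  WithTop.coe_le_coe.trans Prod.Lex.toLex_le_toLex

theorem pt_lt_pt {w w' : W} {r r'} : pt w r < pt w' r' ↔ w < w' ∨ w = w' ∧ r < r' :=
  WithTop.coe_lt_coe.trans Prod.Lex.toLex_lt_toLex

theorem exists_fiber {a b : LongLine W} (h : a < b) : ∃ (w : W) (x y : ℝ), 0 ≤ x ∧ x < y ∧ y ≤ 1 ∧
    ∀ z (hz : z ∈ Set.Ico (0 : ℝ) 1), x < z → z < y → pt w ⟨z, hz⟩ ∈ Set.Ioo a b := by
  obtain rfl | ⟨w, x, rfl⟩ := eq_top_or_pt a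
  · exact absurd h not_top_lt
  have hx : ∀ z (hz : z ∈ Set.Ico (0 : ℝ) 1), x.1 < z → pt w x < pt w ⟨z, hz⟩ :=
    fun z hz hxz => pt_lt_pt.2 (Or.inr ⟨rfl, hxz⟩)
  obtain rfl | ⟨w', y, rfl⟩ := eq_top_or_pt b
  · exact ⟨w, x, 1, x.2.1, x.2.2, le_rfl, fun z hz hxz _ => ⟨hx z hz hxz, pt_lt_top _ _⟩⟩
  obtain hw | ⟨rfl, hxy⟩ := pt_lt_pt.1 h
  · exact ⟨w, x, 1, x.2.1, x.2.2, le_rfl,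
      fun z hz hxz _ => ⟨hx z hz hxz, pt_lt_pt.2 (Or.inl hw)⟩⟩
  · exact ⟨w, x, y, x.2.1, hxy, y.2.2.le,
      fun z hz hxz hzy => ⟨hx z hz hxz, pt_lt_pt.2 (Or.inr ⟨rfl, hzy⟩)⟩⟩

theorem continuum_le_mk_Ioo {a b : LongLine W} (h : a < b) : 𝔠 ≤ #(Set.Ioo a b) := by
  obtain ⟨w, x, y, hx, hxy, hy, hz⟩ := exists_fiber h
  have hmem : ∀ z ∈ Set.Ioo x y, z ∈ Set.Ico (0 : ℝ) 1 := fun z hz =>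
    ⟨hx.trans hz.1.le, hz.2.trans_le hy⟩
  have := Cardinal.lift_mk_le'.2 ⟨(⟨fun z => ⟨pt w ⟨z.1, hmem z z.2⟩, hz _ _ z.2.1 z.2.2⟩,
    fun z z' h => by
      have := pt_injective (a₁ := (w, ⟨z.1, hmem z z.2⟩)) (a₂ := (w, ⟨z'.1, hmem z' z'.2⟩))
        (congrArg Subtype.val h)
      exact Subtype.ext (congrArg (fun p => p.2.1) this)⟩ : Set.Ioo x y ↪ Set.Ioo a b)⟩
  simpa [Cardinal.mk_Ioo_real hxy] using this

/-- Infima are the easy direction: the least first coordinate is attained. -/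
theorem exists_isGLB [WellFoundedLT W] (s : Set (LongLine W)) : ∃ a, IsGLB s a := by
  by_cases hs : ∃ w r, pt w r ∈ s
  swap
  · refine ⟨⊤, fun x hx => ?_, fun _ _ => le_top⟩
    obtain rfl | ⟨w, r, rfl⟩ := eq_top_or_pt x
    · exact le_rfl
    · exact absurd ⟨w, r, hx⟩ hs
  obtain ⟨w, ⟨r₀, hr₀⟩, hw⟩ := wellFounded_lt.has_min {w | ∃ r, pt w r ∈ s} hs
  let R : Set ℝ := {x | ∃ h : x ∈ Set.Ico (0 : ℝ) 1, pt w ⟨x, h⟩ ∈ s}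
  have hR₀ : r₀.1 ∈ R := ⟨r₀.2, hr₀⟩
  have hRb : ∀ x ∈ R, 0 ≤ x := fun x hx => hx.1.1
  have hbdd : BddBelow R := ⟨0, hRb⟩
  have hmem : sInf R ∈ Set.Ico (0 : ℝ) 1 :=
    ⟨le_csInf ⟨_, hR₀⟩ hRb, (csInf_le hbdd hR₀).trans_lt r₀.2.2⟩
  refine ⟨pt w ⟨sInf R, hmem⟩, fun x hx => ?_, fun x hx => ?_⟩
  · obtain rfl | ⟨w', r, rfl⟩ := eq_top_or_pt x
    · exact le_top
    · obtain h | rfl := (not_lt.1 (hw w' ⟨r, hx⟩)).lt_or_eq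
      · exact pt_le_pt.2 (Or.inl h)
      · exact pt_le_pt.2 (Or.inr ⟨rfl, csInf_le hbdd ⟨r.2, hx⟩⟩)
  · obtain rfl | ⟨w', r, rfl⟩ := eq_top_or_pt x
    · exact absurd (hx hr₀) (pt_lt_top _ _).not_ge
    · obtain h | ⟨rfl, -⟩ := pt_le_pt.1 (hx hr₀)
      · exact pt_le_pt.2 (Or.inl h)
      · refine pt_le_pt.2 (Or.inr ⟨rfl, le_csInf (a := r.1) ⟨_, hR₀⟩ fun y hy => ?_⟩)
        obtain h | ⟨-, h⟩ := pt_le_pt.1 (hx hy.2)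
        · exact absurd h (lt_irrefl _)
        · exact h

theorem goodOrder [WellFoundedLT W] [Nonempty W] {τ : Cardinal.{u}} (hτ : ℵ₀ ≤ τ) (hW : #W ≤ τ) :
    GoodOrder (LongLine W) τ τ := by
  classical
  have hsep : ∃ D : Set (LongLine W), #D ≤ τ ∧ ∀ x y, x < y → ∃ d ∈ D, x < d ∧ d < y := by
    let F : W × ℚ → LongLine W := fun p =>
      if h : (p.2 : ℝ) ∈ Set.Ico (0 : ℝ) 1 then pt p.1 ⟨p.2, h⟩ else ⊤
    refine ⟨Set.range F, Cardinal.mk_range_le.trans ?_, fun a b hab => ?_⟩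
    · rw [Cardinal.mk_prod]
      simpa using Cardinal.mul_le_of_le hτ hW hτ
    · obtain ⟨w, x, y, hx, hxy, hy, hz⟩ := exists_fiber hab
      obtain ⟨q, hq₁, hq₂⟩ := exists_rat_btwn hxy
      have hq : (q : ℝ) ∈ Set.Ico (0 : ℝ) 1 := ⟨hx.trans hq₁.le, hq₂.trans_le hy⟩
      refine ⟨F (w, q), ⟨_, rfl⟩, ?_⟩
      have : F (w, q) = pt w ⟨q, hq⟩ := dif_pos hq
      rw [this]
      exact hz _ hq hq₁ hq₂
  refine ⟨fun s => ?_, ⟨pt (Classical.arbitrary W) ⟨0, by simp⟩, ⊤, (pt_lt_top _ _).ne⟩, hsep,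
    fun y => ?_⟩
  · obtain ⟨a, ha⟩ := exists_isGLB (upperBounds s)
    exact ⟨a, isGLB_upperBounds.1 ha⟩
  · obtain ⟨D, hD, h⟩ := hsep
    exact ⟨D, hD, fun x => ⟨h x y, h y x⟩⟩

end LongLine

/-! ### The two lexicographic steps -/

theorem le_self_powerlt {l μ : Cardinal.{u}} (hμ : ℵ₀ ≤ μ) : l ≤ l ^< μ := by
  simpa using Cardinal.le_powerlt l (Cardinal.one_lt_aleph0.trans_le hμ)

theorem le_powerlt_self {l μ : Cardinal.{u}} (hl : ℵ₀ ≤ l) : μ ≤ l ^< μ := by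
  by_contra h
  have h2 : (2 : Cardinal.{u}) ≤ l := (Cardinal.natCast_lt_aleph0 (n := 2)).le.trans hl
  -- Otherwise `c = l ^< μ` is itself one of the exponents below `μ`, and `c < 2 ^ c ≤ l ^ c ≤ c`.
  exact ((Cardinal.cantor _).trans_le (Cardinal.power_le_power_right h2)).not_ge
    (Cardinal.le_powerlt l (not_le.1 h))

theorem continuum_power {σ : Cardinal.{u}} : (𝔠 : Cardinal.{u}) ^ σ = 2 ^ (ℵ₀ * σ) := by
  rw [← Cardinal.two_power_aleph0, Cardinal.power_mul]

/-- The lexicographic power `L ^ μ`, whose separating set has size about `L ^< μ`. -/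
theorem exists_power {L : Type u} [LinearOrder L] {τ ν l μ κ ν' : Cardinal.{u}}
    (hL : GoodOrder L τ ν) (hμ : ℵ₀ ≤ μ) (hκ : ℵ₀ ≤ κ) (hτκ : τ ≤ κ) (hμκ : μ ≤ κ)
    (hp : ∀ σ < μ, #L ^ σ ≤ κ) (hνν : ν ≤ ν') (hμν : μ ≤ ν') (hLμ : #L ^ μ = l ^ μ) :
    ∃ (Y : Type u) (_ : LinearOrder Y), GoodOrder Y κ ν' ∧ #Y ≤ l ^ μ ∧
      ∀ x y : Y, x < y → l ^ μ ≤ #(Set.Ioo x y) := by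
  obtain ⟨b, hb⟩ := hL.exists_bot
  have := hL.denselyOrdered
  have hι : #μ.ord.ToType = μ := Cardinal.mk_ord_toType μ
  have : Nonempty μ.ord.ToType := Cardinal.nonempty_ord_toType (Cardinal.aleph0_pos.trans_le hμ).ne'
  have : Infinite μ.ord.ToType := Cardinal.infinite_iff.2 (hι.symm ▸ hμ)
  have hIio : ∀ i : μ.ord.ToType, #(Set.Iio i) < μ := fun i => by
    simpa using Cardinal.mk_Iio_lt i
  refine ⟨LexTree μ.ord.ToType L Set.univ b, inferInstance,
    LexTree.goodOrder hb hL hκ hτκ (hι.trans_le hμκ) (fun i => ?_) (hμ.trans hμν) hνν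
      (hι.trans_le hμν), ?_, fun x y hxy => LexTree.le_mk_Ioo_univ hb (fun i => ?_) hxy⟩
  · rw [Cardinal.mk_univ]
    exact hp _ (hIio i)
  · refine LexTree.mk_le.trans ?_
    rw [hι, hLμ]
  · -- An initial segment of `μ` is small, so its complement has full size.
    have hIic : #(Set.Iic i) < #μ.ord.ToType := by
      rw [hι, ← Set.Iio_insert]
      exact (Cardinal.mk_insert_le).trans_lt
        (Cardinal.add_lt_of_lt hμ (hIio i) (Cardinal.one_lt_aleph0.trans_le hμ))
    have := Cardinal.mk_compl_of_infinite _ hIic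
    rw [Set.compl_Iic, hι] at this
    rw [this, hLμ]

/-- A base order whose separating sets have size at most `κ` and whose intervals all have size
`l ^ μ`. For `μ = ℵ₀` and `l ≤ 𝔠` the unit interval works; otherwise it is the lexicographic power
`L ^ μ` of the unit interval (`l ≤ 𝔠`) or of the closed long line over `l` (`𝔠 < l`). -/
theorem exists_base {l μ κ ν : Cardinal.{u}} (hl : ℵ₀ ≤ l) (hμ : ℵ₀ ≤ μ) (h1 : l ^< μ ≤ κ)
    (hμν : μ ≤ ν) (hlν : 𝔠 < l → l ≤ ν) :
    ∃ (Y : Type u) (_ : LinearOrder Y), GoodOrder Y κ ν ∧ #Y ≤ l ^ μ ∧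
      ∀ x y : Y, x < y → l ^ μ ≤ #(Set.Ioo x y) := by
  have hlκ : l ≤ κ := (le_self_powerlt hμ).trans h1
  have hμκ : μ ≤ κ := (le_powerlt_self hl).trans h1
  have hκ := hl.trans hlκ
  have h2 : (2 : Cardinal.{u}) ≤ l := (Cardinal.natCast_lt_aleph0 (n := 2)).le.trans hl
  obtain hlc | hlc := le_or_gt l 𝔠
  · have hI : GoodOrder (LongLine PUnit.{u + 1}) ℵ₀ ℵ₀ :=
      LongLine.goodOrder le_rfl (by simp)
    have hIc : #(LongLine PUnit.{u + 1}) ≤ 𝔠 := LongLine.mk_le.trans <| by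
      simpa using Cardinal.one_le_aleph0.trans Cardinal.aleph0_le_continuum
    have hlμ : l ^ μ = 2 ^ μ := by
      refine le_antisymm ((Cardinal.power_le_power_right hlc).trans_eq ?_)
        (Cardinal.power_le_power_right h2)
      rw [continuum_power, Cardinal.aleph0_mul_eq hμ]
    obtain rfl | hμ' := hμ.eq_or_lt
    · rw [Cardinal.two_power_aleph0] at hlμ
      obtain ⟨D, hD, hD'⟩ := hI.sep
      refine ⟨LongLine PUnit.{u + 1}, inferInstance,
        ⟨hI.lub, hI.nontriv, ⟨D, hD.trans hκ, hD'⟩, fun y => ?_⟩, hlμ ▸ hIc,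
        fun x y hxy => hlμ ▸ LongLine.continuum_le_mk_Ioo hxy⟩
      obtain ⟨C, hC, hC'⟩ := hI.loc y
      exact ⟨C, hC.trans hμν, hC'⟩
    · refine exists_power hI hμ hκ hκ hμκ (fun σ hσ => ?_) (hμ.trans hμν) hμν (le_antisymm ?_ ?_)
      · refine (Cardinal.power_le_power_right hIc).trans ?_
        rw [continuum_power]
        exact (Cardinal.power_le_power_right h2).trans
          ((Cardinal.le_powerlt l (Cardinal.mul_lt_of_lt hμ hμ' hσ)).trans h1)
      · refine (Cardinal.power_le_power_right hIc).trans ?_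
        rw [continuum_power, Cardinal.aleph0_mul_eq hμ, hlμ]
      · rw [hlμ]
        have := hI.nontriv
        exact Cardinal.power_le_power_right (Cardinal.two_le_iff.2 (exists_pair_ne _))
  · have : Nonempty l.ord.ToType :=
      Cardinal.nonempty_ord_toType (Cardinal.aleph0_pos.trans_le hl).ne'
    have hW : #l.ord.ToType = l := Cardinal.mk_ord_toType l
    have hL := LongLine.goodOrder (W := l.ord.ToType) hl hW.le
    have hLc : #(LongLine l.ord.ToType) = l :=
      le_antisymm (LongLine.mk_le.trans (by rw [hW, max_eq_left hlc.le]))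
        (hW.symm.trans_le LongLine.le_mk)
    exact exists_power hL hμ hκ hlκ hμκ
      (fun σ hσ => hLc.symm ▸ (Cardinal.le_powerlt l hσ).trans h1) (hlν hlc) hμν (by rw [hLc])

/-- A set of size `κ` meeting every interval of `Y` in at least `κ` points. -/
theorem exists_dense_subset {Y : Type u} [LinearOrder Y] {κ ν θ : Cardinal.{u}}
    (hY : GoodOrder Y κ ν) (hκ : ℵ₀ ≤ κ) (hκθ : κ ≤ θ)
    (hθ : ∀ x y : Y, x < y → θ ≤ #(Set.Ioo x y)) (b : Y) :
    ∃ A : Set Y, b ∈ A ∧ #A ≤ κ ∧ ∀ x y, x < y → κ ≤ #(A ∩ Set.Ioo x y : Set Y) := by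
  obtain ⟨D, hDc, hD⟩ := hY.sep
  have key : ∀ p : D × D, ∃ S : Set Y, #S ≤ κ ∧
      (p.1.1 < p.2.1 → S ⊆ Set.Ioo p.1.1 p.2.1 ∧ κ = #S) := fun p => by
    by_cases h : p.1.1 < p.2.1
    · obtain ⟨S, hS, hSc⟩ := Cardinal.le_mk_iff_exists_subset.1 (hκθ.trans (hθ _ _ h))
      exact ⟨S, hSc.le, fun _ => ⟨hS, hSc.symm⟩⟩
    · exact ⟨∅, by simp, fun h' => absurd h' h⟩
  choose S hSc hS using key
  refine ⟨insert b (⋃ p, S p), Set.mem_insert _ _, ?_, fun x y hxy => ?_⟩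
  · refine Cardinal.mk_insert_le.trans
      (Cardinal.add_le_of_le hκ ?_ (Cardinal.one_le_aleph0.trans hκ))
    refine (Cardinal.mk_iUnion_le _).trans (Cardinal.mul_le_of_le hκ ?_ (ciSup_le' hSc))
    rw [← Cardinal.mul_def]
    exact Cardinal.mul_le_of_le hκ hDc hDc
  · obtain ⟨d, hd, hxd, hdy⟩ := hD x y hxy
    obtain ⟨d', hd', hdd', hey⟩ := hD d y hdy
    obtain ⟨hsub, hcard⟩ := hS (⟨d, hd⟩, ⟨d', hd'⟩) hdd'
    refine hcard.le.trans (Cardinal.mk_le_mk_of_subset fun z hz => ⟨?_, ?_⟩)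
    · exact Or.inr (Set.mem_iUnion.2 ⟨_, hz⟩)
    · exact ⟨hxd.trans (hsub hz).1, lt_trans (hsub hz).2 hey⟩

/-- The order underlying `K`: countable sequences in the base order that terminate on leaving a set
`A` of `κ` points as in `exists_dense_subset`. -/
theorem exists_order {l μ κ ν : Cardinal.{u}} (hl : ℵ₀ ≤ l) (hμ : ℵ₀ ≤ μ) (h1 : l ^< μ ≤ κ)
    (h2 : κ ≤ l ^ μ) (hμν : μ ≤ ν) (hlν : 𝔠 < l → l ≤ ν) :
    ∃ (K : Type u) (_ : LinearOrder K), GoodOrder K κ ν ∧ #K ≤ l ^ μ ∧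
      ∀ f g : K, f < g → l ^ μ ≤ #(Set.Ioo f g) ∧
        ∃ (I : Type u) (p q : I → K), κ ≤ #I ∧ (∀ a, f ≤ p a ∧ p a < q a ∧ q a ≤ g) ∧
          ∀ a a', a ≠ a' → Disjoint (Set.Ioo (p a) (q a)) (Set.Ioo (p a') (q a')) := by
  have hκ : ℵ₀ ≤ κ := (hl.trans (le_self_powerlt hμ)).trans h1
  obtain ⟨Y, _, hY, hYc, hYθ⟩ := exists_base hl hμ h1 hμν hlν
  obtain ⟨b, hb⟩ := hY.exists_bot
  obtain ⟨A, hbA, hAc, hA⟩ := exists_dense_subset hY hκ h2 hYθ b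
  have hι : #(ℵ₀ : Cardinal.{u}).ord.ToType = ℵ₀ := Cardinal.mk_ord_toType _
  have : Nonempty (ℵ₀ : Cardinal.{u}).ord.ToType :=
    Cardinal.nonempty_ord_toType Cardinal.aleph0_ne_zero
  have := Cardinal.noMaxOrder (c := (ℵ₀ : Cardinal.{u})) le_rfl
  refine ⟨LexTree (ℵ₀ : Cardinal.{u}).ord.ToType Y A b, inferInstance,
    LexTree.goodOrder hb hY hκ le_rfl (hι.trans_le hκ) (fun i => ?_) (hμ.trans hμν) le_rfl
      (hι.trans_le (hμ.trans hμν)), ?_, fun f g hfg => ⟨LexTree.le_mk_Ioo hb hYθ hfg,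
        LexTree.disjoint_intervals hb hbA hY hA hfg⟩⟩
  · refine (Cardinal.power_le_power_right hAc).trans (Cardinal.pow_le hκ ?_)
    simpa using Cardinal.mk_Iio_lt i
  · refine LexTree.mk_le.trans ?_
    rw [hι]
    refine (Cardinal.power_le_power_right hYc).trans_eq ?_
    rw [← Cardinal.power_mul, Cardinal.mul_aleph0_eq hμ]

/-- If `λ ^ < μ ≤ κ ≤ λ ^ μ` then there is a balanced linearly ordered continuum `K` with
`w(K) = κ`, `|K| = λ ^ μ` and `χ(K) ≤ max {λ̃, μ}`, where `λ̃ = ℵ₀` if `λ ≤ 𝔠` and `λ̃ = λ`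
otherwise. -/
theorem balanced_ordered_continuum_exists
    (l μ κ : Cardinal.{u}) (hl : ℵ₀ ≤ l) (hμ : ℵ₀ ≤ μ)
    (h1 : l ^< μ ≤ κ) (h2 : κ ≤ l ^ μ) :
    ∃ K : TopCat.{u},
      IsContinuum ↥K ∧ IsLOTS ↥K ∧ IsBalanced ↥K ∧
      wt ↥K = κ ∧ #↥K = l ^ μ ∧
      (l ≤ 𝔠 → charac ↥K ≤ max ℵ₀ μ) ∧
      (𝔠 < l → charac ↥K ≤ max l μ) := by
  have hκ : ℵ₀ ≤ κ := (hl.trans (le_self_powerlt hμ)).trans h1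
  obtain ⟨ν, hν, hμν, hlν, hν₁, hν₂⟩ : ∃ ν : Cardinal.{u}, ℵ₀ ≤ ν ∧ μ ≤ ν ∧ (𝔠 < l → l ≤ ν) ∧
      (l ≤ 𝔠 → ν ≤ max ℵ₀ μ) ∧ (𝔠 < l → ν ≤ max l μ) := by
    obtain h | h := le_or_gt l 𝔠
    · exact ⟨max ℵ₀ μ, le_max_left _ _, le_max_right _ _, fun h' => absurd h h'.not_ge,
        fun _ => le_rfl, fun h' => absurd h h'.not_ge⟩
    · exact ⟨max l μ, hl.trans (le_max_left _ _), le_max_right _ _, fun _ => le_max_left _ _,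
        fun h' => absurd h h'.not_gt, fun _ => le_rfl⟩
  obtain ⟨K, _, hK, hKc, hKint⟩ := exists_order hl hμ h1 h2 hμν hlν
  let : TopologicalSpace K := Preorder.topology K
  have hord : OrderTopology K := ⟨rfl⟩
  have := hK.nontriv
  have := hK.denselyOrdered
  have hopen : ∀ U : Set K, IsOpen U → U.Nonempty → ∃ f g : K, f < g ∧ Set.Ioo f g ⊆ U := by
    rintro U hU ⟨x, hx⟩
    obtain ⟨y, hy⟩ := exists_ne x
    obtain hy | hy := lt_or_gt_of_ne hy
    · obtain ⟨l, hl, hlU⟩ := exists_Ioc_subset_of_mem_nhds (hU.mem_nhds hx) ⟨y, hy⟩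
      exact ⟨l, x, hl, Set.Ioo_subset_Ioc_self.trans hlU⟩
    · obtain ⟨r, hr, hrU⟩ := exists_Ico_subset_of_mem_nhds (hU.mem_nhds hx) ⟨y, hy⟩
      exact ⟨x, r, hr, Set.Ioo_subset_Ico_self.trans hrU⟩
  have hcard : ∀ U : Set K, IsOpen U → U.Nonempty → #U = l ^ μ := fun U hU hne => by
    obtain ⟨f, g, hfg, hsub⟩ := hopen U hU hne
    exact le_antisymm ((Cardinal.mk_set_le U).trans hKc)
      ((hKint f g hfg).1.trans (Cardinal.mk_le_mk_of_subset hsub))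
  have hwt : ∀ (Z : Type u) [TopologicalSpace Z] (e : Z → K), IsInducing e →
      IsOpen (Set.range e) → (Set.range e).Nonempty → wt Z = κ := fun Z _ e he ho hne => by
    refine le_antisymm (hK.wt_le hκ he) ?_
    obtain ⟨f, g, hfg, hsub⟩ := hopen _ ho hne
    obtain ⟨I, p, q, hI, hpq, hdisj⟩ := (hKint f g hfg).2
    refine hI.trans (le_wt_of_disjoint (fun a => e ⁻¹' Set.Ioo (p a) (q a))
      (fun a => isOpen_Ioo.preimage he.continuous) (fun a => ?_)
      fun a a' h => (hdisj a a' h).preimage e)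
    obtain ⟨x, hx⟩ := exists_between (hpq a).2.1
    obtain ⟨z, rfl⟩ := hsub ⟨(hpq a).1.trans_lt hx.1, hx.2.trans_le (hpq a).2.2⟩
    exact ⟨z, hx⟩
  have hKκ : wt K = κ := hwt K id .id (by simp) (by simp)
  have hKcard : #K = l ^ μ := by
    rw [← Cardinal.mk_univ, hcard Set.univ isOpen_univ Set.univ_nonempty]
  refine ⟨TopCat.of K, hK.isContinuum, ⟨_, hord⟩, fun U hU hne => ⟨?_, ?_⟩, hKκ, hKcard,
    fun h => (hK.charac_le hν).trans (hν₁ h), fun h => (hK.charac_le hν).trans (hν₂ h)⟩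
  · exact (hcard U hU hne).trans hKcard.symm
  · exact (hwt U Subtype.val .subtypeVal (by simpa using hU) (by simpa using hne)).trans hKκ.symm
end

section
/- Let κ be a singular cardinal and λ ≤ κ an infinite cardinal. If K is a linearly ordered continuum such that ŵ(K) = κ and no point of K has a neighborhood basis of cardinality smaller than λ, then |K| ≥ κ^λ. -/
/-!
A linearly ordered continuum is densely ordered, and every open subspace of `K` has weight at
least `κ`. The bound `κ ^ l ≤ #K` comes from a tree of closed intervals of height `l` in which
every node has `κ` pairwise disjoint children.

*Every open interval contains `κ` pairwise disjoint intervals.* The key fact is that if all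
disjoint families of intervals in a dense order have size less than an infinite `μ`, then some
dense set has size at most `μ` (`exists_small_dense`). To see this, well-order the points by an
injection `f` into the ordinals and call `y` an ancestor of `x` when `f` attains its minimum over
the interval between `x` and `y` at `y`. The points of which `x` is an ancestor, together with `x`,
form a convex set, and the points `x` whose convex set contains an interval are dense: the
`f`-minimal point of any interval is one. The ancestors of a point on either side of it yield a
disjoint family of intervals, so every point has tree rank below `μ.ord`, and the convex sets
belonging to points of one fixed rank are disjoint, so each level has fewer than `μ` points of the
dense set. Since a dense set bounds the weight, every interval contains disjoint families of every
size below `κ` (`cells_of_lt`). As `κ` is singular, a family of size `cof κ` whose members are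
subdivided into families of sizes cofinal in `κ` gives one of size `κ` (`exists_children`).

*The tree.* Nodes are nondegenerate closed intervals, children lie in the interior of their parent,
and a node at a limit stage is chosen inside the intersection of the earlier ones. That
intersection is nonempty by compactness, and it is not a single point, because otherwise the fewer
than `l` earlier intervals would be a neighborhood basis of that point (`nontrivial_inter`).
Branches are functions from `l` to `κ`; each has a point in its intersection by compactness, and
different branches have disjoint intersections (`power_le_mk`).
-/

universe u

open Cardinal Topology

/-! ### Disjoint families of intervals and small dense sets -/

/-- `X` has a family, indexed by `ι`, of nondegenerate intervals with pairwise disjoint interiors.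
The `i`-th interval has endpoints `s i < t i`, and disjointness is expressed by saying that, of any
two of the intervals, one ends no later than the other begins. -/
def Cells (X ι : Type u) [LinearOrder X] : Prop :=
  ∃ s t : ι → X, (∀ i, s i < t i) ∧ ∀ i j, i ≠ j → t i ≤ s j ∨ t j ≤ s i

theorem Cells.comap {X ι ι' : Type u} [LinearOrder X] (h : Cells X ι) (g : ι' → ι)
    (hg : Function.Injective g) : Cells X ι' := by
  obtain ⟨s, t, hst, hd⟩ := h
  exact ⟨s ∘ g, t ∘ g, fun i => hst _, fun i j hij => hd _ _ (hg.ne hij)⟩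

theorem Cells.of_dual {X ι : Type u} [LinearOrder X] (h : Cells Xᵒᵈ ι) : Cells X ι := by
  obtain ⟨s, t, hst, hd⟩ := h
  exact ⟨fun i => OrderDual.ofDual (t i), fun i => OrderDual.ofDual (s i), fun i => hst i,
    fun i j hij => (hd i j hij).symm⟩

/-- `y` is a proper ancestor of `x` for the ranking `f`: it differs from `x`, and `f` attains its
minimum over the closed interval between `y` and `x` at `y`. -/
def Anc {X : Type u} [LinearOrder X] (f : X → Ordinal.{u}) (y x : X) : Prop :=
  y ≠ x ∧ ∀ z ∈ Set.uIcc y x, f y ≤ f z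

/-- Among the ancestors of `x` to its left, `f` increases with position, so each of them has an
immediate successor among them (or else `x`), and the intervals from an ancestor to its successor
are disjoint. -/
theorem cells_left {X : Type u} [LinearOrder X] (f : X → Ordinal.{u}) (hf : Function.Injective f)
    (x : X) : Cells X {y : X // y < x ∧ Anc f y x} := by
  have key : ∀ y : {y : X // y < x ∧ Anc f y x}, ∃ n : X, y.1 < n ∧
      ∀ y' : {y : X // y < x ∧ Anc f y x}, y.1 < y'.1 → n ≤ y'.1 := by
    intro y
    by_cases h : ∃ y' : {y : X // y < x ∧ Anc f y x}, y.1 < y'.1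
    · obtain ⟨m, hm, hmin⟩ := (InvImage.wf (fun z : {y : X // y < x ∧ Anc f y x} => f z.1)
        Ordinal.lt_wf).has_min {y' : {y : X // y < x ∧ Anc f y x} | y.1 < y'.1} h
      refine ⟨m.1, hm, fun y' hy' => ?_⟩
      by_contra hlt
      rw [not_le] at hlt
      have h1 : f y'.1 ≤ f m.1 := y'.2.2.2 _ (by
        rw [Set.uIcc_of_le y'.2.1.le]; exact ⟨hlt.le, m.2.1.le⟩)
      exact hmin y' hy' (lt_of_le_of_ne h1 (fun e => hlt.ne (hf e)))
    · push Not at h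
      exact ⟨x, y.2.1, fun y' hy' => absurd hy' (not_lt.2 (h y'))⟩
  choose n hn hn' using key
  refine ⟨fun y => y.1, n, hn, fun i j hij => ?_⟩
  rcases lt_or_gt_of_ne (fun e => hij (Subtype.ext e) : i.1 ≠ j.1) with h | h
  · exact Or.inl (hn' _ _ h)
  · exact Or.inr (hn' _ _ h)

theorem cells_right {X : Type u} [LinearOrder X] (f : X → Ordinal.{u})
    (hf : Function.Injective f) (x : X) : Cells X {y : X // x < y ∧ Anc f y x} := by
  refine ((cells_left (X := Xᵒᵈ) (fun z => f (OrderDual.ofDual z)) hf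
    (OrderDual.toDual x)).comap (fun y => ⟨OrderDual.toDual y.1, y.2.1, ?_, ?_⟩) ?_).of_dual
  · exact y.2.2.1
  · intro z hz
    refine y.2.2.2 (OrderDual.ofDual z) ?_
    rw [Set.mem_uIcc] at hz ⊢
    rcases hz with hz | hz
    · exact Or.inr ⟨hz.2, hz.1⟩
    · exact Or.inl ⟨hz.2, hz.1⟩
  · intro a b h
    exact Subtype.ext (Subtype.mk.inj h)

theorem Anc.trans {X : Type u} [LinearOrder X] {f : X → Ordinal.{u}}
    (hf : Function.Injective f) {z y x : X} (h : Anc f z y) (h' : Anc f y x) : Anc f z x := by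
  refine ⟨?_, fun w hw => ?_⟩
  · rintro rfl
    exact h.1 (hf (le_antisymm (h.2 _ Set.right_mem_uIcc) (h'.2 _ Set.right_mem_uIcc)))
  · rcases Set.uIcc_subset_uIcc_union_uIcc (b := y) hw with hw | hw
    · exact h.2 _ hw
    · exact (h.2 _ Set.right_mem_uIcc).trans (h'.2 _ hw)

theorem Anc.lt {X : Type u} [LinearOrder X] {f : X → Ordinal.{u}} (hf : Function.Injective f)
    {y x : X} (h : Anc f y x) : f y < f x :=
  lt_of_le_of_ne (h.2 _ Set.right_mem_uIcc) (fun e => h.1 (hf e))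

/-- Every ordinal below the rank of `x` is the rank of an ancestor of `x`, so a point with fewer
than `μ` ancestors has rank below `μ.ord`. -/
theorem exists_anc_rank {X : Type u} [LinearOrder X] {f : X → Ordinal.{u}}
    (hf : Function.Injective f) [IsWellFounded X (Anc f)] (x : X) :
    ∀ o < IsWellFounded.rank (Anc f) x, ∃ y, Anc f y x ∧ IsWellFounded.rank (Anc f) y = o := by
  induction x using IsWellFounded.induction (Anc f) with
  | ind x ih =>
    intro o ho
    rw [IsWellFounded.rank_eq, Ordinal.lt_iSup_iff] at ho
    obtain ⟨⟨y, hy⟩, ho⟩ := ho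
    rcases (Order.lt_succ_iff.1 ho).eq_or_lt with h | h
    · exact ⟨y, hy, h.symm⟩
    · obtain ⟨z, hz, hzo⟩ := ih y hy o h
      exact ⟨z, Anc.trans hf hz hy, hzo⟩

/-- If all disjoint families of intervals in a dense order have size less than `μ`, then there is
a dense set of size at most `μ`. -/
theorem exists_small_dense {X : Type u} [LinearOrder X] [DenselyOrdered X] {μ : Cardinal.{u}}
    (hμ : ℵ₀ ≤ μ) (hc : ∀ ι : Type u, Cells X ι → #ι < μ) :
    ∃ D : Set X, #D ≤ μ ∧ ∀ a b : X, (Set.Ioo a b).Nonempty → ∃ d ∈ D, d ∈ Set.Ioo a b := by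
  let f : X → Ordinal.{u} := Ordinal.typein WellOrderingRel
  have hf : Function.Injective f := Ordinal.typein_injective _
  have : IsWellFounded X (Anc f) := ⟨Subrelation.wf (fun h => Anc.lt hf h)
    (InvImage.wf f Ordinal.lt_wf)⟩
  -- `x ∈ D` when some interval consists of points having `x` as an ancestor or equal to `x`.
  let D : Set X := {x | ∃ a b, a < b ∧ ∀ z ∈ Set.Ioo a b, ∀ w ∈ Set.uIcc x z, f x ≤ f w}
  have hrank : ∀ x, IsWellFounded.rank (Anc f) x < μ.ord := by
    intro x
    by_contra hle
    rw [not_lt] at hle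
    have hx : ∀ i : μ.ord.ToType, ∃ y, Anc f y x ∧
        IsWellFounded.rank (Anc f) y = (Ordinal.ToType.mk.symm i).1 := fun i =>
      exists_anc_rank hf x _ ((Ordinal.ToType.mk.symm i).2.trans_le hle)
    choose y hy hyi using hx
    have hyinj : Function.Injective fun i => (⟨y i, hy i⟩ : {y // Anc f y x}) := by
      intro i j hij
      have : y i = y j := congrArg Subtype.val hij
      refine Ordinal.ToType.mk.symm.injective (Subtype.ext ?_)
      rw [← hyi, ← hyi, this]
    have h1 : μ ≤ #{y // Anc f y x} := by
      simpa using Cardinal.mk_le_of_injective hyinj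
    have h2 : #{y // Anc f y x} ≤
        #{y : X // y < x ∧ Anc f y x} + #{y : X // x < y ∧ Anc f y x} := by
      refine le_trans (Cardinal.mk_le_mk_of_subset
        (s := {y | Anc f y x}) (t := {y | y < x ∧ Anc f y x} ∪ {y | x < y ∧ Anc f y x}) ?_)
        (Cardinal.mk_union_le _ _)
      intro y hy
      rcases lt_or_gt_of_ne hy.1 with h | h
      · exact Or.inl ⟨h, hy⟩
      · exact Or.inr ⟨h, hy⟩
    exact absurd (h1.trans h2) (not_le.2 (Cardinal.add_lt_of_lt hμ (hc _ (cells_left f hf x))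
      (hc _ (cells_right f hf x))))
  have hlevel : ∀ o, #{x : X // x ∈ D ∧ IsWellFounded.rank (Anc f) x = o} ≤ μ := by
    intro o
    refine (hc _ ?_).le
    have hD : ∀ x : {x : X // x ∈ D ∧ IsWellFounded.rank (Anc f) x = o}, ∃ a b, a < b ∧
      ∀ z ∈ Set.Ioo a b, ∀ w ∈ Set.uIcc x.1 z, f x.1 ≤ f w := fun x => x.2.1
    choose s t hst hI using hD
    -- If two of the intervals overlapped, then one of `i`, `j` would be an ancestor of the other,
    -- contradicting that they have the same rank.
    have hlt : ∀ i j, s j < t i → s i < t j → ¬ f i.1 < f j.1 := by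
      intro i j h1 h2 hij
      obtain ⟨z, hz, hz'⟩ := exists_between (max_lt (lt_min (hst i) h2) (lt_min h1 (hst j)))
      rw [max_lt_iff] at hz
      rw [lt_min_iff] at hz'
      have hanc : Anc f i.1 j.1 := by
        refine ⟨fun e => hij.ne (congrArg f e), fun w hw => ?_⟩
        rcases Set.uIcc_subset_uIcc_union_uIcc (b := z) hw with hw | hw
        · exact hI i z ⟨hz.1, hz'.1⟩ w hw
        · exact hij.le.trans (hI j z ⟨hz.2, hz'.2⟩ w (by rwa [Set.uIcc_comm]))
      have := IsWellFounded.rank_lt_of_rel hanc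
      rw [i.2.2, j.2.2] at this
      exact lt_irrefl _ this
    refine ⟨s, t, hst, fun i j hij => ?_⟩
    by_contra hcon
    rw [not_or, not_le, not_le] at hcon
    rcases lt_or_gt_of_ne (hf.ne (fun e => hij (Subtype.ext e)) : f i.1 ≠ f j.1) with h | h
    · exact hlt i j hcon.1 hcon.2 h
    · exact hlt j i hcon.2 hcon.1 h
  refine ⟨D, ?_, fun a b hab => ?_⟩
  -- `D` is the union of its `μ` levels, each of size at most `μ`.
  · have hsub : D ⊆ ⋃ i : μ.ord.ToType, {x : X | x ∈ D ∧
        IsWellFounded.rank (Anc f) x = (Ordinal.ToType.mk.symm i).1} := by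
      intro x hx
      exact Set.mem_iUnion.2 ⟨Ordinal.ToType.mk ⟨_, hrank x⟩, hx, by simp⟩
    calc #D ≤ _ := Cardinal.mk_le_mk_of_subset hsub
      _ ≤ _ := Cardinal.mk_iUnion_le_sum_mk
      _ ≤ Cardinal.sum fun _ : μ.ord.ToType => μ := Cardinal.sum_le_sum _ _ fun i => hlevel _
      _ = μ := by simp [Cardinal.mul_eq_self hμ]
  -- The `f`-minimal point of `Ioo a b` is in `D`, as witnessed by `Ioo a b` itself.
  · obtain ⟨m, hm, hmin⟩ := (InvImage.wf f Ordinal.lt_wf).has_min _ hab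
    refine ⟨m, ⟨a, b, hm.1.trans hm.2, fun z hz w hw => not_lt.1 (hmin w ?_)⟩, hm⟩
    exact Set.ordConnected_Ioo.uIcc_subset hm hz hw

/-! ### Families of `κ` disjoint subintervals -/

theorem wt_le_of_dense {Y : Type u} [LinearOrder Y] [TopologicalSpace Y] [OrderTopology Y]
    [NoMinOrder Y] [NoMaxOrder Y] {D : Set Y}
    (hD : ∀ a b : Y, (Set.Ioo a b).Nonempty → ∃ d ∈ D, d ∈ Set.Ioo a b) [DenselyOrdered Y] :
    wt Y ≤ #D * #D := by
  let B : Set (Set Y) := Set.range fun p : D × D => Set.Ioo p.1.1 p.2.1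
  have hB : TopologicalSpace.IsTopologicalBasis B := by
    refine TopologicalSpace.isTopologicalBasis_of_isOpen_of_nhds ?_ ?_
    · rintro _ ⟨p, rfl⟩
      exact isOpen_Ioo
    · intro x U hx hU
      obtain ⟨a, b, hab, hsub⟩ := mem_nhds_iff_exists_Ioo_subset.1 (hU.mem_nhds hx)
      obtain ⟨d, hd, hd'⟩ := hD a x (Set.nonempty_Ioo.2 hab.1)
      obtain ⟨e, he, he'⟩ := hD x b (Set.nonempty_Ioo.2 hab.2)
      exact ⟨_, ⟨(⟨d, hd⟩, ⟨e, he⟩), rfl⟩, ⟨hd'.2, he'.1⟩,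
        (Set.Ioo_subset_Ioo hd'.1.le he'.2.le).trans hsub⟩
  calc wt Y ≤ #B := csInf_le' ⟨B, hB, rfl⟩
    _ ≤ #(D × D) := Cardinal.mk_range_le
    _ = #D * #D := by simp

/-- If all nonempty open subspaces have weight at least `κ`, then every open interval contains
disjoint families of intervals of every size less than `κ`. -/
theorem cells_of_lt {X : Type u} [LinearOrder X] [TopologicalSpace X] [OrderTopology X]
    [DenselyOrdered X] {κ : Cardinal.{u}} (hκ : ℵ₀ < κ)
    (hw : ∀ U : Set X, IsOpen U → U.Nonempty → κ ≤ wt U) {a b : X} (hab : a < b)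
    (ι : Type u) (hι : #ι < κ) : Cells (Set.Ioo a b) ι := by
  by_contra hno
  have hμ : ℵ₀ ≤ max #ι ℵ₀ := le_max_right _ _
  obtain ⟨D, hD, hdense⟩ := exists_small_dense (X := Set.Ioo a b) hμ (fun ι' h' => by
    by_contra hle
    rw [not_lt] at hle
    obtain ⟨g⟩ := (le_max_left _ _).trans hle
    exact hno (h'.comap g g.injective))
  have h1 := (hw (Set.Ioo a b) isOpen_Ioo (Set.nonempty_Ioo.2 hab)).trans (wt_le_of_dense hdense)
  have h2 : #D * #D ≤ max #ι ℵ₀ := (mul_le_mul' hD hD).trans (Cardinal.mul_eq_self hμ).le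
  exact absurd (h1.trans h2) (not_le.2 (max_lt hι hκ))

/-- For singular `κ` the supremum `κ` of the sizes in `cells_of_lt` is attained. The intervals are
moreover shrunk so that the corresponding closed intervals are disjoint and lie in `Ioo a b`. -/
theorem exists_children {X : Type u} [LinearOrder X] [TopologicalSpace X] [OrderTopology X]
    [DenselyOrdered X] {κ : Cardinal.{u}} (hκ : ℵ₀ ≤ κ) (hsing : κ.ord.cof < κ)
    (hw : ∀ U : Set X, IsOpen U → U.Nonempty → κ ≤ wt U) (a b : X) (hab : a < b) :
    ∃ s t : κ.ord.ToType → X, (∀ i, a < s i ∧ s i < t i ∧ t i < b) ∧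
      ∀ i j, i ≠ j → t i < s j ∨ t j < s i := by
  have hκ' : ℵ₀ < κ := by
    refine lt_of_le_of_ne hκ ?_
    rintro rfl
    exact hsing.ne Cardinal.isRegular_aleph0.cof_ord
  -- `cells_of_lt` for subsets of `κ.ord.ToType`, with families extended to all of that type by the
  -- junk value `a`, to avoid dependent types below.
  have cells : ∀ (A : Set κ.ord.ToType), #A < κ → ∀ a b : X, a < b →
      ∃ s t : κ.ord.ToType → X, (∀ x ∈ A, a < s x ∧ s x < t x ∧ t x < b) ∧
        ∀ x ∈ A, ∀ y ∈ A, x ≠ y → t x ≤ s y ∨ t y ≤ s x := by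
    classical
    intro A hA a b hab
    obtain ⟨s, t, hst, hd⟩ := cells_of_lt hκ' hw hab A hA
    refine ⟨fun x => if h : x ∈ A then s ⟨x, h⟩ else a, fun x => if h : x ∈ A then t ⟨x, h⟩ else a,
      fun x hx => ?_, fun x hx y hy hxy => ?_⟩
    · simp only [hx, dif_pos]
      exact ⟨(s _).2.1, hst _, (t _).2.2⟩
    · simp only [hx, hy, dif_pos]
      exact hd _ _ (fun e => hxy (congrArg Subtype.val e))
  -- Take disjoint intervals indexed by a cofinal set `S` of size `cof κ`, and subdivide the `i`-th one
  -- into a family indexed by `Iic i`. The index `x` is realized in the interval of some `g x ∈ S`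
  -- with `x ≤ g x`.
  obtain ⟨S, hS, hScard⟩ := Order.exists_cof_eq κ.ord.ToType
  rw [Ordinal.cof_toType] at hScard
  choose g hgS hg using hS
  obtain ⟨s, t, hst, hd⟩ := cells S (hScard ▸ hsing) a b hab
  have hIic : ∀ i : κ.ord.ToType, #(Set.Iic i) < κ := by
    intro i
    rw [← Set.Iio_insert]
    have h1 : #(Set.Iio i) < κ := by simpa using Cardinal.mk_Iio_lt i (by simp)
    exact (Cardinal.mk_insert_le).trans_lt (Cardinal.add_lt_of_lt hκ h1
      (Cardinal.one_lt_aleph0.trans hκ'))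
  have sub : ∀ i : κ.ord.ToType, ∃ s' t' : κ.ord.ToType → X, i ∈ S →
      (∀ x ∈ Set.Iic i, s i < s' x ∧ s' x < t' x ∧ t' x < t i) ∧
        ∀ x ∈ Set.Iic i, ∀ y ∈ Set.Iic i, x ≠ y → t' x ≤ s' y ∨ t' y ≤ s' x := by
    intro i
    by_cases hi : i ∈ S
    · obtain ⟨s', t', h⟩ := cells (Set.Iic i) (hIic i) (s i) (t i) (hst i hi).2.1
      exact ⟨s', t', fun _ => h⟩
    · exact ⟨s, s, fun h => absurd h hi⟩
  choose s' t' hsub using sub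
  have hlt : ∀ x, s' (g x) x < t' (g x) x := fun x => ((hsub _ (hgS x)).1 x (hg x)).2.1
  choose p hp hp' using fun x => exists_between (hlt x)
  choose q hq hq' using fun x => exists_between (hp' x)
  refine ⟨p, q, fun x => ⟨?_, hq x, ?_⟩, fun x y hxy => ?_⟩
  · exact (hst _ (hgS x)).1.trans (((hsub _ (hgS x)).1 x (hg x)).1.trans (hp x))
  · exact (hq' x).trans (((hsub _ (hgS x)).1 x (hg x)).2.2.trans (hst _ (hgS x)).2.2)
  · have hle : t' (g x) x ≤ s' (g y) y ∨ t' (g y) y ≤ s' (g x) x := by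
      by_cases hxy' : g x = g y
      · have := (hsub _ (hgS x)).2 x (hg x) y (by rw [hxy']; exact hg y) hxy
        rwa [← hxy']
      · rcases hd _ (hgS x) _ (hgS y) hxy' with h | h
        · exact Or.inl ((((hsub _ (hgS x)).1 x (hg x)).2.2.le.trans h).trans
            ((hsub _ (hgS y)).1 y (hg y)).1.le)
        · exact Or.inr ((((hsub _ (hgS y)).1 y (hg y)).2.2.le.trans h).trans
            ((hsub _ (hgS x)).1 x (hg x)).1.le)
    exact hle.imp (fun h => (hq' x).trans (h.trans_lt (hp y)))
      (fun h => (hq' y).trans (h.trans_lt (hp x)))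

/-! ### The tree of intervals -/

/-- Let `N j` and `C j`, for `j < i`, be the endpoints of the nodes along a branch and of the chosen
child of each node. If fewer than `l` stages precede `i`, then the intersection of the earlier
intervals has more than one point: at a limit stage a single point of intersection would have
these intervals as a neighborhood basis. -/
theorem nontrivial_inter {X : Type u} [LinearOrder X] [TopologicalSpace X] [OrderTopology X]
    [CompactSpace X] [Nontrivial X] {W : Type u} [LinearOrder W] {l : Cardinal.{u}}
    (hχ : ∀ x : X, ∀ B : Set (Set X),
      (∀ V ∈ B, V ∈ nhds x) → (∀ V ∈ nhds x, ∃ W ∈ B, W ⊆ V) → l ≤ #B)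
    (N C : W → X × X) (i : W) (hi : #(Set.Iio i) < l)
    (hC : ∀ j < i, (N j).1 < (C j).1 ∧ (C j).1 < (C j).2 ∧ (C j).2 < (N j).2)
    (hNC : ∀ j k, j < k → k < i → Set.Icc (N k).1 (N k).2 ⊆ Set.Icc (C j).1 (C j).2) :
    (⋂ j : Set.Iio i, Set.Icc (C j).1 (C j).2).Nontrivial := by
  have hCN : ∀ j < i, Set.Icc (C j).1 (C j).2 ⊆ Set.Ioo (N j).1 (N j).2 := fun j hj =>
    Set.Icc_subset_Ioo (hC j hj).1 (hC j hj).2.2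
  have hanti : ∀ j k, j ≤ k → k < i → Set.Icc (C k).1 (C k).2 ⊆ Set.Icc (C j).1 (C j).2 := by
    intro j k hjk hk
    rcases hjk.eq_or_lt with rfl | hjk
    · exact subset_rfl
    · exact ((hCN k hk).trans Set.Ioo_subset_Icc_self).trans (hNC j k hjk hk)
  by_cases hmax : ∃ k < i, ∀ j < i, j ≤ k
  · obtain ⟨k, hk, hmax⟩ := hmax
    refine ⟨(C k).1, ?_, (C k).2, ?_, (hC k hk).2.1.ne⟩
    · exact Set.mem_iInter.2 fun j =>
        hanti _ _ (hmax j.1 j.2) hk (Set.left_mem_Icc.2 (hC k hk).2.1.le)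
    · exact Set.mem_iInter.2 fun j =>
        hanti _ _ (hmax j.1 j.2) hk (Set.right_mem_Icc.2 (hC k hk).2.1.le)
  -- From here on `i` is zero or a limit.
  push Not at hmax
  by_cases hne : Nonempty (Set.Iio i)
  swap
  · rw [not_nonempty_iff] at hne
    rw [Set.iInter_of_empty]
    exact Set.nontrivial_univ
  have hdir : Directed (· ⊇ ·) fun j : Set.Iio i => Set.Icc (C j).1 (C j).2 := by
    intro j k
    rcases le_total j k with h | h
    · exact ⟨k, hanti _ _ h k.2, subset_rfl⟩
    · exact ⟨j, subset_rfl, hanti _ _ h j.2⟩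
  obtain ⟨x, hx⟩ := IsCompact.nonempty_iInter_of_directed_nonempty_isCompact_isClosed _ hdir
    (fun j => Set.nonempty_Icc.2 (hC j.1 j.2).2.1.le) (fun j => isClosed_Icc.isCompact)
    (fun j => isClosed_Icc)
  by_contra hnt
  rw [Set.not_nontrivial_iff] at hnt
  refine absurd (hχ x (Set.range fun j : Set.Iio i => Set.Icc (C j).1 (C j).2) ?_ ?_)
    (not_le.2 (Cardinal.mk_range_le.trans_lt hi))
  · rintro _ ⟨j, rfl⟩
    obtain ⟨k, hk, hjk⟩ := hmax j.1 j.2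
    have hxk := hCN k hk (Set.mem_iInter.1 hx ⟨k, hk⟩)
    exact Filter.mem_of_superset (isOpen_Ioo.mem_nhds hxk)
      (Set.Ioo_subset_Icc_self.trans (hNC _ _ hjk hk))
  · intro V hV
    obtain ⟨j, hj⟩ := exists_subset_nhds_of_isCompact hdir
      (fun j => isClosed_Icc.isCompact) (U := V) (fun y hy => hnt hx hy ▸ hV)
    exact ⟨_, ⟨j, rfl⟩, hj⟩

/-- If every point has character at least `l` and every interval has `κ` disjoint closed
subintervals, then the branches of a tree of height `l` give `κ ^ l` points. -/
theorem power_le_mk {X : Type u} [LinearOrder X] [TopologicalSpace X] [OrderTopology X]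
    [CompactSpace X] [Nontrivial X] {κ l : Cardinal.{u}} (hl : ℵ₀ ≤ l)
    (hχ : ∀ x : X, ∀ B : Set (Set X),
      (∀ V ∈ B, V ∈ nhds x) → (∀ V ∈ nhds x, ∃ W ∈ B, W ⊆ V) → l ≤ #B)
    (hch : ∀ a b : X, a < b → ∃ s t : κ.ord.ToType → X,
      (∀ i, a < s i ∧ s i < t i ∧ t i < b) ∧ ∀ i j, i ≠ j → t i < s j ∨ t j < s i) :
    κ ^ l ≤ #X := by
  choose! s t hst hd using hch
  have hpick : ∀ E : Set X, ∃ p : X × X, E.Nontrivial → p.1 ∈ E ∧ p.2 ∈ E ∧ p.1 < p.2 := by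
    intro E
    by_cases hE : E.Nontrivial
    · obtain ⟨x, hx, y, hy, hxy⟩ := hE.exists_lt
      exact ⟨(x, y), fun _ => ⟨hx, hy, hxy⟩⟩
    · obtain ⟨x⟩ : Nonempty X := inferInstance
      exact ⟨(x, x), fun h => absurd h hE⟩
  choose pick hpick using hpick
  -- `ch n k` is the `k`-th child of the node `n`, and `N f i` is the node at level `i` on branch `f`.
  let ch : X × X → κ.ord.ToType → X × X := fun n k => (s n.1 n.2 k, t n.1 n.2 k)
  let N : (l.ord.ToType → κ.ord.ToType) → l.ord.ToType → X × X := fun f =>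
    (wellFounded_lt (α := l.ord.ToType)).fix fun i rec =>
      pick (⋂ j : Set.Iio i, Set.Icc (ch (rec j.1 j.2) (f j)).1 (ch (rec j.1 j.2) (f j)).2)
  have hN : ∀ f i, N f i =
      pick (⋂ j : Set.Iio i, Set.Icc (ch (N f j) (f j)).1 (ch (N f j) (f j)).2) :=
    fun f i => WellFounded.fix_eq _ _ _
  have hIio : ∀ i : l.ord.ToType, #(Set.Iio i) < l := fun i => by
    simpa using Cardinal.mk_Iio_lt i (by simp)
  have hP : ∀ f i, (N f i).1 < (N f i).2 ∧ ∀ j < i, Set.Icc (N f i).1 (N f i).2 ⊆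
      Set.Icc (ch (N f j) (f j)).1 (ch (N f j) (f j)).2 := by
    intro f i
    induction i using WellFoundedLT.induction with
    | ind i ih =>
      have hE := nontrivial_inter hχ (N f) (fun j => ch (N f j) (f j)) i (hIio i)
        (fun j hj => hst _ _ (ih j hj).1 _) (fun j k hjk hk => (ih k hk).2 j hjk)
      have := hpick _ hE
      rw [← hN] at this
      refine ⟨this.2.2, fun j hj => ?_⟩
      exact Set.ordConnected_Icc.out (Set.mem_iInter.1 this.1 ⟨j, hj⟩)
        (Set.mem_iInter.1 this.2.1 ⟨j, hj⟩)
  have hne : Nonempty l.ord.ToType := by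
    rw [← Cardinal.mk_ne_zero_iff, Cardinal.mk_ord_toType]
    exact (Cardinal.aleph0_pos.trans_le hl).ne'
  have hanti : ∀ f j k, j ≤ k → Set.Icc (ch (N f k) (f k)).1 (ch (N f k) (f k)).2 ⊆
      Set.Icc (ch (N f j) (f j)).1 (ch (N f j) (f j)).2 := by
    intro f j k hjk
    rcases hjk.eq_or_lt with rfl | hjk
    · exact subset_rfl
    · have h := hst _ _ (hP f k).1 (f k)
      exact (Set.Icc_subset_Icc h.1.le h.2.2.le).trans ((hP f k).2 j hjk)
  have hpt : ∀ f, ∃ x, ∀ j, x ∈ Set.Icc (ch (N f j) (f j)).1 (ch (N f j) (f j)).2 := by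
    intro f
    obtain ⟨x, hx⟩ := IsCompact.nonempty_iInter_of_directed_nonempty_isCompact_isClosed
      (fun j => Set.Icc (ch (N f j) (f j)).1 (ch (N f j) (f j)).2)
      (fun j k => (le_total j k).elim (fun h => ⟨k, hanti f _ _ h, subset_rfl⟩)
        (fun h => ⟨j, subset_rfl, hanti f _ _ h⟩))
      (fun j => Set.nonempty_Icc.2 (hst _ _ (hP f j).1 (f j)).2.1.le)
      (fun j => isClosed_Icc.isCompact) (fun j => isClosed_Icc)
    exact ⟨x, Set.mem_iInter.1 hx⟩
  choose pt hpt using hpt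
  have hcongr : ∀ f g i, (∀ j < i, f j = g j) → N f i = N g i := by
    intro f g i
    induction i using WellFoundedLT.induction with
    | ind i ih =>
      intro h
      rw [hN, hN]
      congr 1
      refine Set.iInter_congr fun j => ?_
      rw [ih j.1 j.2 (fun k hk => h k (hk.trans j.2)), h j.1 j.2]
  have hinj : Function.Injective pt := by
    intro f g hfg
    by_contra hne
    -- At the first place `i` where the branches differ they share the node, and choose disjoint
    -- children of it.
    obtain ⟨i, hi, hmin⟩ := (wellFounded_lt (α := l.ord.ToType)).has_min {i | f i ≠ g i}
      (Function.ne_iff.1 hne)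
    have hNi : N f i = N g i := hcongr f g i fun j hj => by
      by_contra h
      exact hmin j h hj
    have h1 := hpt f i
    have h2 := hpt g i
    rw [← hNi, ← hfg] at h2
    rcases hd _ _ (hP f i).1 _ _ hi with h | h
    · exact absurd (h1.2.trans_lt (h.trans_le h2.1)) (lt_irrefl _)
    · exact absurd (h2.2.trans_lt (h.trans_le h1.1)) (lt_irrefl _)
  simpa using Cardinal.mk_le_of_injective hinj

/-- If `κ` is singular, `λ ≤ κ`, and `K` is a linearly ordered continuum with `ŵ(K) = κ`
such that no point of `K` has a neighborhood basis of cardinality smaller than `λ`, then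
`|K| ≥ κ ^ λ`. -/
theorem size_of_ordered_continuum_with_large_character
    (κ l : Cardinal.{u}) (hκ : ℵ₀ ≤ κ) (hsing : κ.ord.cof < κ)
    (hl : ℵ₀ ≤ l) (hlκ : l ≤ κ)
    (K : TopCat.{u}) (hKc : IsContinuum ↥K) (hKo : IsLOTS ↥K)
    (hhw : hatWt ↥K = κ)
    (hχ : ∀ x : ↥K, ∀ B : Set (Set ↥K),
      (∀ V ∈ B, V ∈ nhds x) → (∀ V ∈ nhds x, ∃ W ∈ B, W ⊆ V) → l ≤ #B) :
    κ ^ l ≤ #↥K := by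
  obtain ⟨_, _, _, _⟩ := hKc
  obtain ⟨_, _⟩ := hKo
  have : DenselyOrdered K := denselyOrdered_of_preconnectedSpace
  have hw : ∀ U : Set K, IsOpen U → U.Nonempty → κ ≤ wt U := fun U hU hne =>
    hhw ▸ csInf_le' ⟨U, hU, hne, rfl⟩
  exact power_le_mk hl hχ (exists_children hκ hsing hw)
end

section
/- Let κ be a strong limit cardinal with κ^{ℵ₀} > κ. If X is a locally compact, hereditarily normal Hausdorff space with |X| = κ, then there exists a nonempty open subset U of X with |U| < κ. -/
universe u

open Cardinal Topology

/-!
Since `κ` is a strong limit with `κ < κ ^ ℵ₀`, its cofinality is countable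
(`cof_ord_le_aleph0`), so `X` is a countable union of sets `A` with `#A < κ`.
In a Hausdorff space `#(closure A) ≤ 2 ^ 2 ^ #A` (`mk_closure_le`), so each of these sets still
has a closure of size `< κ`. By the Baire category theorem for locally compact Hausdorff spaces,
one of the closures has nonempty interior, and that interior is the desired open set.
-/

/-- A point of `closure A` is determined by the traces on `A` of its neighbourhoods, because
distinct points have disjoint neighbourhoods and traces of neighbourhoods are nonempty. -/
lemma mk_closure_le {X : Type u} [TopologicalSpace X] [T2Space X] (A : Set X) :
    #(closure A) ≤ 2 ^ (2 ^ #A : Cardinal.{u}) := by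
  rw [← mk_set, ← mk_set]
  refine mk_le_of_injective
    (f := fun x : closure A => {t : Set A | ∃ U ∈ 𝓝 (x : X), t = Subtype.val ⁻¹' U}) ?_
  rintro ⟨x, hx⟩ ⟨y, hy⟩ hxy
  by_contra hne
  have hne' : x ≠ y := fun h => hne (Subtype.ext h)
  obtain ⟨U, V, hU, hV, hxU, hyV, hUV⟩ := t2_separation hne'
  have hmem : (Subtype.val ⁻¹' U : Set A) ∈
      {t : Set A | ∃ W ∈ 𝓝 y, t = Subtype.val ⁻¹' W} := by
    have h : (Subtype.val ⁻¹' U : Set A) ∈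
        {t : Set A | ∃ W ∈ 𝓝 x, t = Subtype.val ⁻¹' W} := ⟨U, hU.mem_nhds hxU, rfl⟩
    exact Set.ext_iff.mp hxy _ |>.mp h
  obtain ⟨W, hW, hUW⟩ := hmem
  obtain ⟨a, ⟨haW, haV⟩, haA⟩ :=
    mem_closure_iff_nhds.mp hy (W ∩ V) (Filter.inter_mem hW (hV.mem_nhds hyV))
  have haU : (⟨a, haA⟩ : A) ∈ (Subtype.val ⁻¹' U : Set A) := by
    rw [hUW]; exact haW
  exact Set.disjoint_left.mp hUV haU haV

/-- If the cofinality of a strong limit `κ` were uncountable, then `κ` would have only `κ` many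
countable subsets; identifying functions `ℕ → κ` with their graphs in `ℕ × κ` would give
`κ ^ ℵ₀ ≤ κ`. -/
lemma cof_ord_le_aleph0 {κ : Cardinal.{u}} (hκ : ℵ₀ ≤ κ)
    (hsl : ∀ θ : Cardinal.{u}, θ < κ → 2 ^ θ < κ) (hpow : κ < κ ^ (ℵ₀ : Cardinal.{u})) :
    κ.ord.cof ≤ ℵ₀ := by
  by_contra! hcof
  induction κ using Cardinal.inductionOn with | _ X
  have hprod : #(ℕ × X) = #X := by
    rw [mk_prod, mk_nat, lift_aleph0, lift_uzero, aleph0_mul_eq hκ]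
  have hsub := mk_subset_mk_lt_cof (α := ℕ × X) (by rw [hprod]; exact fun {θ} h => hsl θ h)
  rw [hprod] at hsub
  refine hpow.not_ge ?_
  have hfun : #X ^ (ℵ₀ : Cardinal.{u}) = #(ℕ → X) := by simp
  rw [hfun]
  refine le_trans ?_ hsub.le
  refine mk_le_of_injective
    (f := fun f : ℕ → X => ⟨Set.range fun n => (n, f n), ?_⟩) ?_
  · exact (Set.countable_range _).le_aleph0.trans_lt hcof
  · intro f g hfg
    funext n
    have h : (Set.range fun n => (n, f n)) = Set.range fun n => (n, g n) :=
      congrArg Subtype.val hfg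
    obtain ⟨m, hm⟩ : (n, f n) ∈ Set.range fun n => (n, g n) := h ▸ ⟨n, rfl⟩
    simp only [Prod.mk.injEq] at hm
    obtain ⟨rfl, hm⟩ := hm
    exact hm.symm

/-- If `κ` is a strong limit cardinal with `κ ^ ℵ₀ > κ` and `X` is a locally compact,
hereditarily normal Hausdorff space of size `κ`, then some nonempty open subset of `X` has
size smaller than `κ`. -/
theorem small_open_set_exists (κ : Cardinal.{u}) (hκ : ℵ₀ ≤ κ)
    (hsl : ∀ θ : Cardinal.{u}, θ < κ → 2 ^ θ < κ) (hpow : κ < κ ^ (ℵ₀ : Cardinal.{u}))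
    (X : Type u) [TopologicalSpace X] [T2Space X] [LocallyCompactSpace X] [T5Space X]
    (hX : #X = κ) :
    ∃ U : Set X, IsOpen U ∧ U.Nonempty ∧ #U < κ := by
  have : Nonempty X := mk_ne_zero_iff.mp (hX ▸ (aleph0_pos.trans_le hκ).ne')
  obtain ⟨e⟩ : Nonempty (X ≃ κ.ord.ToType) := by
    rw [← Cardinal.eq, hX, mk_toType, card_ord]
  obtain ⟨s, hs, hscard⟩ := Order.exists_cof_eq κ.ord.ToType
  have : Countable s := by
    rw [← mk_le_aleph0_iff, hscard, Ordinal.cof_toType]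
    exact cof_ord_le_aleph0 hκ hsl hpow
  have hsmall (t : κ.ord.ToType) : #(e ⁻¹' Set.Iic t) < κ := by
    rw [mk_preimage_equiv, ← Set.Iio_insert]
    exact (mk_insert_le).trans_lt
      (add_lt_of_lt hκ (mk_Iio_toType_ord_lt t) (one_lt_aleph0.trans_le hκ))
  obtain ⟨t, ht⟩ := nonempty_interior_of_iUnion_of_closed
    (f := fun t : s => closure (e ⁻¹' Set.Iic (t : κ.ord.ToType)))
    (fun _ => isClosed_closure) (by
      refine Set.eq_univ_of_forall fun x => ?_
      obtain ⟨t, hts, hxt⟩ := hs (e x)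
      exact Set.mem_iUnion.mpr ⟨⟨t, hts⟩, subset_closure hxt⟩)
  exact ⟨_, isOpen_interior, ht, (mk_le_mk_of_subset interior_subset).trans_lt
    ((mk_closure_le _).trans_lt (hsl _ (hsl _ (hsmall t))))⟩
end
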